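/- For every N ≥ 1 and every n ∈ ℕ, the following are equivalent: (1) there exists an ℝ-linear map B : ℝⁿ → M(N,ℍ) with B(v)ᴴ B(v) = ‖v‖² I_N for all v ∈ ℝⁿ; (2) there exists an ℝ-linear map B : ℝⁿ → M(N,ℍ) with B(v) invertible for every nonzero v; (3) n ≤ ρ(N/2) + 4. (Entry 𝔤 = 𝔰𝔭(N,N) of the Hurwitz–Radon value theorem, via the 𝔭-part consisting of quaternionic block matrices [[0,B],[Bᴴ,0]]; it recovers the Adams–Lax–Phillips number ℍ(N).) -/

import Mathlib

open Matrix

/-- Extended Hurwitz–Radon number: writing the 2-adic valuation of `t` as `4a + b`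
with `a ∈ ℤ` and `b ∈ {0,1,2,3}`, `ρ(t) := 8a + 2^b`. -/
noncomputable def hrRho (t : ℚ) : ℤ :=
  8 * (padicValRat 2 t / 4) + 2 ^ (padicValRat 2 t % 4).toNat

/-!
Upper bound on `n`. An invertible pencil `B` gives real symmetric matrices
`t_i = [[0, B_iᴴ], [B_i, 0]]` which are odd for the grading `ε = diag(1, -1)` and commute with the
quaternion units `I`, `J`, and every nontrivial real combination of which is invertible. On a
product of fuzzy spheres of spin `s` one forms the Dirac–Schrödinger operator `T` with symbol `t`.
The parity `P` has trace `8N` on the whole space, and the same trace on any low-energy spectral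
subspace: since `P` anticommutes with `T`, its trace over the other eigenvectors vanishes. The
invertibility of the symbol bounds the dimension of these subspaces uniformly in `s`, so a
pigeonhole argument on the spectrum finds a gap of fixed size, and the compressions of the
symmetries of the model almost satisfy their relations. Letting `s → ∞`, compactness yields a
finite-dimensional representation in which the relations hold exactly and `P` still has trace `8N`.
The eigenspaces of `P` are then Clifford modules, and the eightfold periodicity of Clifford algebras
forces a power of two to divide `N`.

Lower bound on `n`. If `B` and `C` are pencils of scaled isometries, then so is
`[[B, -Cᴴ], [C, Bᴴ]]`. Starting from left multiplication on `ℍ` and taking for `C` the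
multiplication of a real normed division algebra, one obtains pencils of every admissible dimension.
-/

namespace HurwitzRadon

section CliffordFamilies

variable {R S ι : Type*} [Ring R] [Ring S]

/-- A family of pairwise anticommuting elements of a ring, each with square `c`; for `c = ±1` this
is a representation of a definite Clifford algebra. -/
structure IsClifford (c : ℤ) (f : ι → R) : Prop where
  mul_self (i : ι) : f i * f i = c
  anticomm (i j : ι) (h : i ≠ j) : f i * f j = -(f j * f i)

/-- A Clifford family commuting with a pair `I`, `J` that generates a copy of the quaternions. -/
structure IsQuaternionicClifford (c : ℤ) (I J : R) (f : ι → R) : Prop extends IsClifford c f where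
  mul_self_I : I * I = -1
  mul_self_J : J * J = -1
  anticomm_IJ : I * J = -(J * I)
  commute_I (i : ι) : Commute I (f i)
  commute_J (i : ι) : Commute J (f i)

lemma mem_centralizer_of_commute {σ x : R} (h : Commute σ x) : x ∈ Subring.centralizer {σ} := by
  rw [Subring.mem_centralizer_iff]
  rintro _ rfl
  exact h

lemma isUnit_of_mul_self_eq_neg_one {t : R} (h : t * t = -1) : IsUnit t :=
  ⟨⟨t, -t, by simp [h], by simp [h]⟩, rfl⟩

namespace IsClifford

lemma map (φ : R →+* S) {c : ℤ} {f : ι → R} (hf : IsClifford c f) :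
    IsClifford c (fun i => φ (f i)) where
  mul_self i := by rw [← map_mul, hf.mul_self, map_intCast]
  anticomm i j h := by rw [← map_mul, hf.anticomm i j h, map_neg, map_mul]

lemma codRestrict {σ : R} {c : ℤ} {f : ι → R} (hf : IsClifford c f) (h : ∀ i, Commute σ (f i)) :
    IsClifford c
      (fun i => (⟨f i, mem_centralizer_of_commute (h i)⟩ : Subring.centralizer {σ})) where
  mul_self i := Subtype.ext (by simpa using hf.mul_self i)
  anticomm i j hij := Subtype.ext (hf.anticomm i j hij)

lemma mul_left_of_neg_one {m : ℕ} {f : Fin (m + 1) → R} (hf : IsClifford (-1) f) :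
    IsClifford (-1) (fun i : Fin m => f 0 * f i.succ) := by
  have h0 : f 0 * f 0 = -1 := by simpa using hf.mul_self 0
  have pair_mul (i j : Fin m) : f 0 * f i.succ * (f 0 * f j.succ) = f i.succ * f j.succ := by
    calc f 0 * f i.succ * (f 0 * f j.succ)
        = f 0 * (f i.succ * f 0) * f j.succ := by noncomm_ring
      _ = -(f 0 * f 0) * f i.succ * f j.succ := by
          rw [hf.anticomm _ _ (Fin.succ_ne_zero i)]; noncomm_ring
      _ = f i.succ * f j.succ := by rw [h0, neg_neg, one_mul]
  exact ⟨fun i => by rw [pair_mul, hf.mul_self],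
    fun i j h => by rw [pair_mul, pair_mul, hf.anticomm _ _ (by simpa using h)]⟩

section Triple

variable {c : ℤ} {m : ℕ} {f : Fin (m + 2) → R}

lemma commute_zero_triple (hf : IsClifford c f) (i : Fin m) :
    Commute (f 0) (f 0 * f 1 * f i.succ.succ) := by
  have h1 := hf.anticomm 1 0 (by simp)
  have hi := hf.anticomm i.succ.succ 0 (Fin.succ_ne_zero _)
  calc f 0 * (f 0 * f 1 * f i.succ.succ)
      = -(f 0 * -(f 0 * f 1) * f i.succ.succ) := by noncomm_ring
    _ = -(f 0 * f 1 * (f 0 * f i.succ.succ)) := by rw [← h1]; noncomm_ring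
    _ = f 0 * f 1 * f i.succ.succ * f 0 := by rw [mul_assoc _ _ (f 0), hi]; noncomm_ring

lemma commute_one_triple (hf : IsClifford c f) (i : Fin m) :
    Commute (f 1) (f 0 * f 1 * f i.succ.succ) := by
  have h0 := hf.anticomm 1 0 (by simp)
  have hi := hf.anticomm i.succ.succ 1 (by simp [Fin.ext_iff])
  calc f 1 * (f 0 * f 1 * f i.succ.succ)
      = f 1 * f 0 * f 1 * f i.succ.succ := by noncomm_ring
    _ = f 0 * f 1 * -(f 1 * f i.succ.succ) := by rw [h0]; noncomm_ring
    _ = f 0 * f 1 * f i.succ.succ * f 1 := by rw [← hi]; noncomm_ring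

lemma triple_mul_triple (hf : IsClifford c f) (hc : c * c = 1) (i j : Fin m) :
    f 0 * f 1 * f i.succ.succ * (f 0 * f 1 * f j.succ.succ) =
      -(f i.succ.succ * f j.succ.succ) := by
  have hcc : (c : R) * c = 1 := by exact_mod_cast congrArg (Int.cast : ℤ → R) hc
  calc f 0 * f 1 * f i.succ.succ * (f 0 * f 1 * f j.succ.succ)
      = f 0 * f 1 * f i.succ.succ * f 0 * f 1 * f j.succ.succ := by noncomm_ring
    _ = f 0 * (f 0 * f 1 * f i.succ.succ) * f 1 * f j.succ.succ := by
        rw [(hf.commute_zero_triple i).eq]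
    _ = f 0 * (f 0 * f 1 * f i.succ.succ * f 1) * f j.succ.succ := by noncomm_ring
    _ = f 0 * (f 1 * f 0) * f 1 * f i.succ.succ * f j.succ.succ := by
        rw [← (hf.commute_one_triple i).eq]; noncomm_ring
    _ = -(f 0 * f 0 * (f 1 * f 1)) * f i.succ.succ * f j.succ.succ := by
        rw [hf.anticomm 1 0 (by simp)]; noncomm_ring
    _ = -(f i.succ.succ * f j.succ.succ) := by
        rw [hf.mul_self, hf.mul_self, hcc]; noncomm_ring

lemma triple (hf : IsClifford c f) (hc : c * c = 1) :
    IsClifford (-c) (fun i : Fin m => f 0 * f 1 * f i.succ.succ) where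
  mul_self i := by rw [hf.triple_mul_triple hc, hf.mul_self, Int.cast_neg]
  anticomm i j h := by
    rw [hf.triple_mul_triple hc, hf.triple_mul_triple hc,
      hf.anticomm i.succ.succ j.succ.succ (by simpa using h)]

end Triple

end IsClifford

namespace IsQuaternionicClifford

variable {c : ℤ} {I J : R} {f : ι → R}

lemma map (φ : R →+* S) (hf : IsQuaternionicClifford c I J f) :
    IsQuaternionicClifford c (φ I) (φ J) (fun i => φ (f i)) where
  toIsClifford := hf.toIsClifford.map φ
  mul_self_I := by rw [← map_mul, hf.mul_self_I, map_neg, map_one]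
  mul_self_J := by rw [← map_mul, hf.mul_self_J, map_neg, map_one]
  anticomm_IJ := by rw [← map_mul, hf.anticomm_IJ, map_neg, map_mul]
  commute_I i := (hf.commute_I i).map φ
  commute_J i := (hf.commute_J i).map φ

lemma codRestrict {σ : R} (hf : IsQuaternionicClifford c I J f) (hI : Commute σ I)
    (hJ : Commute σ J) (h : ∀ i, Commute σ (f i)) :
    IsQuaternionicClifford c (⟨I, mem_centralizer_of_commute hI⟩ : Subring.centralizer {σ})
      ⟨J, mem_centralizer_of_commute hJ⟩ (fun i => ⟨f i, mem_centralizer_of_commute (h i)⟩) where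
  toIsClifford := hf.toIsClifford.codRestrict h
  mul_self_I := Subtype.ext hf.mul_self_I
  mul_self_J := Subtype.ext hf.mul_self_J
  anticomm_IJ := Subtype.ext hf.anticomm_IJ
  commute_I i := Subtype.ext (hf.commute_I i)
  commute_J i := Subtype.ext (hf.commute_J i)

lemma triple {m : ℕ} {f : Fin (m + 2) → R} (hf : IsQuaternionicClifford c I J f)
    (hc : c * c = 1) :
    IsQuaternionicClifford (-c) I J (fun i : Fin m => f 0 * f 1 * f i.succ.succ) where
  toIsClifford := hf.toIsClifford.triple hc
  mul_self_I := hf.mul_self_I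
  mul_self_J := hf.mul_self_J
  anticomm_IJ := hf.anticomm_IJ
  commute_I _ := ((hf.commute_I 0).mul_right (hf.commute_I 1)).mul_right (hf.commute_I _)
  commute_J _ := ((hf.commute_J 0).mul_right (hf.commute_J 1)).mul_right (hf.commute_J _)

end IsQuaternionicClifford

end CliffordFamilies

section FixedSpaces

variable {K V : Type*} [Field K] [AddCommGroup V] [Module K V]

/-- Operators commuting with `σ`, restricted to the fixed space of `σ`. -/
def restrictFixed (σ : Module.End K V) :
    Subring.centralizer {σ} →+* Module.End K (LinearMap.eqLocus σ 1) where
  toFun x := x.1.restrict fun v (hv : σ v = v) => by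
    have hx : σ (x.1 v) = x.1 (σ v) :=
      LinearMap.congr_fun (Subring.mem_centralizer_iff.1 x.2 σ rfl) v
    change σ (x.1 v) = x.1 v
    rw [hx, hv]
  map_one' := rfl
  map_mul' _ _ := rfl
  map_zero' := rfl
  map_add' _ _ := rfl

variable [CharZero K] [Module.Finite K V]

lemma two_mul_finrank_eqLocus_one {σ : Module.End K V} (hσ : σ * σ = 1) :
    2 * (Module.finrank K (LinearMap.eqLocus σ 1) : K) =
      Module.finrank K V + LinearMap.trace K V σ := by
  have hσσ (v : V) : σ (σ v) = v := LinearMap.congr_fun hσ v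
  have isProj : LinearMap.IsProj (LinearMap.eqLocus σ 1) ((2⁻¹ : K) • (1 + σ)) := by
    refine ⟨fun v => ?_, fun v hv => ?_⟩
    · simp [hσσ, add_comm]
    · rw [LinearMap.mem_eqLocus, Module.End.one_apply] at hv
      simp only [LinearMap.smul_apply, LinearMap.add_apply, Module.End.one_apply, hv]
      rw [← two_smul K v, inv_smul_smul₀ two_ne_zero]
  rw [← isProj.trace, map_smul, map_add, LinearMap.trace_one, smul_eq_mul,
    mul_inv_cancel_left₀ two_ne_zero]

lemma finrank_eq_two_mul_finrank_eqLocus_one {σ τ : Module.End K V} (hσ : σ * σ = 1)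
    (hτ : IsUnit τ) (h : σ * τ = -(τ * σ)) :
    Module.finrank K V = 2 * Module.finrank K (LinearMap.eqLocus σ 1) := by
  have trace_eq_zero : LinearMap.trace K V σ = 0 := by
    obtain ⟨τ, rfl⟩ := hτ
    have neg_conj : (τ : Module.End K V) * σ * ↑τ⁻¹ = -σ := by
      rw [← neg_eq_iff_eq_neg.2 h, neg_mul, τ.mul_inv_cancel_right]
    have := congrArg (LinearMap.trace K V) neg_conj
    rw [LinearMap.trace_mul_cycle, τ.inv_mul, one_mul, map_neg] at this
    exact self_eq_neg.1 this
  have := two_mul_finrank_eqLocus_one hσ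
  rw [trace_eq_zero, add_zero] at this
  exact_mod_cast this.symm

end FixedSpaces

section CliffordDivisibility

universe u

/-- Every finite-dimensional real vector space carrying `m` anticommuting operators of square `c`
has dimension divisible by `q`. -/
def CliffordDimDvd (c : ℤ) (m q : ℕ) : Prop :=
  ∀ (V : Type u) [AddCommGroup V] [Module ℝ V] [Module.Finite ℝ V] (f : Fin m → Module.End ℝ V),
    IsClifford c f → q ∣ Module.finrank ℝ V

/-- The analogue of `CliffordDimDvd` for quaternionic Clifford families; the dimension is still the
real one. -/
def QuaternionicCliffordDimDvd (c : ℤ) (m q : ℕ) : Prop :=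
  ∀ (V : Type u) [AddCommGroup V] [Module ℝ V] [Module.Finite ℝ V] (I J : Module.End ℝ V)
    (f : Fin m → Module.End ℝ V), IsQuaternionicClifford c I J f → q ∣ Module.finrank ℝ V

lemma cliffordDimDvd_zero_one (c : ℤ) : CliffordDimDvd.{u} c 0 1 :=
  fun _ _ _ _ _ _ => one_dvd _

lemma cliffordDimDvd_neg_one_one_two : CliffordDimDvd.{u} (-1) 1 2 := by
  intro V _ _ _ f hf
  have det_sq : LinearMap.det (f 0) * LinearMap.det (f 0) = (-1) ^ Module.finrank ℝ V := by
    rw [← map_mul, hf.mul_self, Int.cast_neg, Int.cast_one, ← neg_one_smul ℝ (1 : Module.End ℝ V),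
      LinearMap.det_smul, map_one, mul_one]
  by_contra hodd
  rw [← even_iff_two_dvd, Nat.not_even_iff_odd] at hodd
  rw [hodd.neg_one_pow] at det_sq
  linarith [mul_self_nonneg (LinearMap.det (f 0))]

lemma quaternionicCliffordDimDvd_zero_four (c : ℤ) : QuaternionicCliffordDimDvd.{u} c 0 4 := by
  intro V _ _ _ I J f hf
  let quaternionBasis : QuaternionAlgebra.Basis (Module.End ℝ V) (-1 : ℝ) 0 (-1) :=
    { i := I, j := J, k := I * J,
      i_mul_i := by simp [hf.mul_self_I], j_mul_j := by simp [hf.mul_self_J],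
      i_mul_j := rfl, j_mul_i := by simp [hf.anticomm_IJ] }
  let φ : Quaternion ℝ →ₐ[ℝ] Module.End ℝ V := QuaternionAlgebra.lift quaternionBasis
  let _ : Module (Quaternion ℝ) V := Module.compHom V φ.toRingHom
  have _ : IsScalarTower ℝ (Quaternion ℝ) V :=
    ⟨fun r q v => LinearMap.congr_fun (map_smul φ r q) v⟩
  rw [← Module.finrank_mul_finrank ℝ (Quaternion ℝ) V, Quaternion.finrank_eq_four]
  exact dvd_mul_right _ _

variable {m q : ℕ}

section Halving

variable {V : Type u} [AddCommGroup V] [Module ℝ V] [Module.Finite ℝ V] {c : ℤ}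
  {σ τ I J : Module.End ℝ V} {f : Fin m → Module.End ℝ V}

lemma CliffordDimDvd.two_mul_dvd_finrank (h : CliffordDimDvd.{u} c m q) (hσ : σ * σ = 1)
    (hτ : IsUnit τ) (hστ : σ * τ = -(τ * σ)) (hf : IsClifford c f) (hσf : ∀ i, Commute σ (f i)) :
    2 * q ∣ Module.finrank ℝ V := by
  rw [finrank_eq_two_mul_finrank_eqLocus_one hσ hτ hστ]
  exact mul_dvd_mul_left 2 (h _ _ ((hf.codRestrict hσf).map (restrictFixed σ)))

lemma QuaternionicCliffordDimDvd.two_mul_dvd_finrank (h : QuaternionicCliffordDimDvd.{u} c m q)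
    (hσ : σ * σ = 1) (hτ : IsUnit τ) (hστ : σ * τ = -(τ * σ))
    (hf : IsQuaternionicClifford c I J f) (hσI : Commute σ I) (hσJ : Commute σ J)
    (hσf : ∀ i, Commute σ (f i)) : 2 * q ∣ Module.finrank ℝ V := by
  rw [finrank_eq_two_mul_finrank_eqLocus_one hσ hτ hστ]
  exact mul_dvd_mul_left 2 (h _ _ _ _ ((hf.codRestrict hσI hσJ hσf).map (restrictFixed σ)))

lemma CliffordDimDvd.two_mul_two_mul_dvd_finrank {α β : Module.End ℝ V}
    (h : CliffordDimDvd.{u} c m q) (hσ : σ * σ = 1) (hτ : τ * τ = 1) (hστ : Commute σ τ)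
    (hα : IsUnit α) (hσα : σ * α = -(α * σ)) (hβ : β * β = -1) (hσβ : Commute σ β)
    (hτβ : τ * β = -(β * τ)) (hf : IsClifford c f) (hσf : ∀ i, Commute σ (f i))
    (hτf : ∀ i, Commute τ (f i)) : 2 * (2 * q) ∣ Module.finrank ℝ V := by
  let ψ := restrictFixed σ
  let τ' : Subring.centralizer {σ} := ⟨τ, mem_centralizer_of_commute hστ⟩
  let β' : Subring.centralizer {σ} := ⟨β, mem_centralizer_of_commute hσβ⟩
  have hτ' : ψ τ' * ψ τ' = 1 := by
    rw [← map_mul, show τ' * τ' = 1 from Subtype.ext hτ, map_one]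
  have hβ' : ψ β' * ψ β' = -1 := by
    rw [← map_mul, show β' * β' = -1 from Subtype.ext hβ, map_neg, map_one]
  have hτβ' : ψ τ' * ψ β' = -(ψ β' * ψ τ') := by
    rw [← map_mul, show τ' * β' = -(β' * τ') from Subtype.ext hτβ, map_neg, map_mul]
  rw [finrank_eq_two_mul_finrank_eqLocus_one hσ hα hσα]
  exact mul_dvd_mul_left 2 (h.two_mul_dvd_finrank hτ' (isUnit_of_mul_self_eq_neg_one hβ') hτβ'
    ((hf.codRestrict hσf).map ψ)
    fun i => Commute.map (show Commute τ' ⟨f i, _⟩ from Subtype.ext (hτf i)) ψ)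

end Halving

lemma CliffordDimDvd.one_add_two (h : CliffordDimDvd.{u} (-1) m q) :
    CliffordDimDvd.{u} 1 (m + 2) (2 * q) := by
  intro V _ _ _ f hf
  have hsq (i : Fin (m + 2)) : f i * f i = 1 := by simpa using hf.mul_self i
  exact h.two_mul_dvd_finrank (hsq 0) (.of_mul_eq_one _ (hsq 1)) (hf.anticomm 0 1 (by simp))
    (hf.triple rfl) hf.commute_zero_triple

lemma QuaternionicCliffordDimDvd.one_add_two (h : QuaternionicCliffordDimDvd.{u} (-1) m q) :
    QuaternionicCliffordDimDvd.{u} 1 (m + 2) (2 * q) := by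
  intro V _ _ _ I J f hf
  have hsq (i : Fin (m + 2)) : f i * f i = 1 := by simpa using hf.mul_self i
  exact h.two_mul_dvd_finrank (hsq 0) (.of_mul_eq_one _ (hsq 1)) (hf.anticomm 0 1 (by simp))
    (hf.triple rfl) (hf.commute_I 0).symm (hf.commute_J 0).symm hf.commute_zero_triple

lemma QuaternionicCliffordDimDvd.cliffordDimDvd_neg_one_add_two
    (h : QuaternionicCliffordDimDvd.{u} 1 m q) : CliffordDimDvd.{u} (-1) (m + 2) q := by
  intro V _ _ _ f hf
  exact h V (f 0) (f 1) _
    { toIsClifford := hf.triple rfl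
      mul_self_I := by simpa using hf.mul_self 0
      mul_self_J := by simpa using hf.mul_self 1
      anticomm_IJ := hf.anticomm 0 1 (by simp)
      commute_I := hf.commute_zero_triple
      commute_J := hf.commute_one_triple }

-- `I * f 0` and `J * f 1` are commuting involutions; `J` anticommutes with the first, `I` with the
-- second, so their common fixed space has a quarter of the dimension.
lemma CliffordDimDvd.quaternionicCliffordDimDvd_neg_one_add_two (h : CliffordDimDvd.{u} 1 m q) :
    QuaternionicCliffordDimDvd.{u} (-1) (m + 2) (2 * (2 * q)) := by
  intro V _ _ _ I J f hf
  have f_sq (i : Fin (m + 2)) : f i * f i = -1 := by simpa using hf.mul_self i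
  have σ_sq : I * f 0 * (I * f 0) = 1 := by
    rw [(hf.commute_I 0).symm.mul_mul_mul_comm, hf.mul_self_I, f_sq, neg_mul_neg, one_mul]
  have τ_sq : J * f 1 * (J * f 1) = 1 := by
    rw [(hf.commute_J 1).symm.mul_mul_mul_comm, hf.mul_self_J, f_sq, neg_mul_neg, one_mul]
  have σ_anticomm : I * f 0 * J = -(J * (I * f 0)) := by
    rw [mul_assoc, ← (hf.commute_J 0).eq, ← mul_assoc, hf.anticomm_IJ, neg_mul, mul_assoc]
  have τ_anticomm : J * f 1 * I = -(I * (J * f 1)) := by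
    rw [mul_assoc, ← (hf.commute_I 1).eq, ← mul_assoc, ← mul_assoc, hf.anticomm_IJ, neg_mul,
      neg_neg]
  have σ_commute_τ : Commute (I * f 0) (J * f 1) := by
    unfold Commute SemiconjBy
    rw [(hf.commute_J 0).symm.mul_mul_mul_comm, (hf.commute_I 1).symm.mul_mul_mul_comm,
      hf.anticomm_IJ, hf.anticomm 0 1 (by simp), neg_mul_neg]
  have σ_commute_I : Commute (I * f 0) I := (Commute.refl I).mul_left (hf.commute_I 0).symm
  exact h.two_mul_two_mul_dvd_finrank σ_sq τ_sq σ_commute_τ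
    (isUnit_of_mul_self_eq_neg_one hf.mul_self_J) σ_anticomm hf.mul_self_I σ_commute_I τ_anticomm
    (hf.triple rfl).toIsClifford
    (fun i => ((hf.triple rfl).commute_I i).mul_left (hf.commute_zero_triple i))
    (fun i => ((hf.triple rfl).commute_J i).mul_left (hf.commute_one_triple i))

lemma CliffordDimDvd.one_add_eight (h : CliffordDimDvd.{u} 1 m q) :
    CliffordDimDvd.{u} 1 (m + 8) (16 * q) := by
  have := (h.quaternionicCliffordDimDvd_neg_one_add_two.one_add_two
    |>.cliffordDimDvd_neg_one_add_two).one_add_two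
  rwa [show 2 * (2 * (2 * (2 * q))) = 16 * q by ring] at this

/-- The number of anticommuting involutions, up to 8-fold periodicity, which forces the dimension to
be divisible by `2 ^ (b + 1)` (for `b < 4`). -/
def cliffordLength : ℕ → ℕ
  | 0 => 2
  | 1 => 3
  | 2 => 4
  | _ => 6

lemma cliffordDimDvd_cliffordLength (a : ℕ) {b : ℕ} (hb : b < 4) :
    CliffordDimDvd.{u} 1 (cliffordLength b + 8 * a) (2 ^ (4 * a + b + 1)) := by
  induction a with
  | zero =>
    interval_cases b
    · exact (cliffordDimDvd_zero_one _).one_add_two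
    · exact cliffordDimDvd_neg_one_one_two.one_add_two
    · exact (quaternionicCliffordDimDvd_zero_four _).cliffordDimDvd_neg_one_add_two.one_add_two
    · exact (quaternionicCliffordDimDvd_zero_four _).one_add_two
        |>.cliffordDimDvd_neg_one_add_two.one_add_two
  | succ a ih =>
    have := ih.one_add_eight
    rwa [show 16 * 2 ^ (4 * a + b + 1) = 2 ^ (4 * (a + 1) + b + 1) by ring] at this

end CliffordDivisibility

section SignedSystems

universe u

/-- A family of elements that commute up to the signs `σ` and whose squares are the scalars `ν`. -/
structure IsSignedSystem {A κ : Type*} [Ring A] [Algebra ℝ A] (σ : κ → κ → ℝ) (ν : κ → ℝ)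
    (x : κ → A) : Prop where
  mul_comm (k l : κ) : x k * x l = σ k l • (x l * x k)
  mul_self (k : κ) : x k * x k = ν k • 1

namespace IsSignedSystem

variable {A A' κ : Type*} [Ring A] [Algebra ℝ A] [Ring A'] [Algebra ℝ A'] {σ : κ → κ → ℝ}
  {ν : κ → ℝ} {x : κ → A}

lemma map (φ : A →ₐ[ℝ] A') (hx : IsSignedSystem σ ν x) : IsSignedSystem σ ν (fun k => φ (x k)) where
  mul_comm k l := by rw [← map_mul, hx.mul_comm k l, map_smul, map_mul]
  mul_self k := by rw [← map_mul, hx.mul_self, map_smul, map_one]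

lemma commute (hx : IsSignedSystem σ ν x) {k l : κ} (h : σ k l = 1) : Commute (x k) (x l) := by
  rw [commute_iff_eq, hx.mul_comm, h, one_smul]

lemma anticomm (hx : IsSignedSystem σ ν x) {k l : κ} (h : σ k l = -1) :
    x k * x l = -(x l * x k) := by
  rw [hx.mul_comm, h, neg_one_smul]

lemma restrictFixed {V : Type*} [AddCommGroup V] [Module ℝ V] {x : κ → Module.End ℝ V}
    (hx : IsSignedSystem σ ν x) {e : Module.End ℝ V} (he : ∀ k, Commute e (x k)) :
    IsSignedSystem σ ν
      (fun k => restrictFixed e ⟨x k, mem_centralizer_of_commute (he k)⟩) where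
  mul_comm k l := LinearMap.ext fun v => Subtype.ext (LinearMap.congr_fun (hx.mul_comm k l) v)
  mul_self k := LinearMap.ext fun v => Subtype.ext (LinearMap.congr_fun (hx.mul_self k) v)

end IsSignedSystem

/-- Labels for the symmetries of the Dirac–Schrödinger operator: the parity of the model, the
`ℤ/2`-grading, the two quaternionic units, and `n` Clifford generators. -/
inductive Symmetry (n : ℕ)
  | parity
  | grading
  | unitI
  | unitJ
  | clifford (i : Fin n)

namespace Symmetry

variable {n : ℕ}

/-- The sign with which two symmetries commute. -/
def commSign : Symmetry n → Symmetry n → ℝ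
  | grading, clifford _ => -1
  | clifford _, grading => -1
  | unitI, unitJ => -1
  | unitJ, unitI => -1
  | clifford i, clifford j => if i = j then 1 else -1
  | _, _ => 1

/-- The square of a symmetry, which is also the sign of its transpose. -/
def squareSign : Symmetry n → ℝ
  | parity => 1
  | grading => 1
  | _ => -1

lemma commSign_parity (k : Symmetry n) : commSign parity k = 1 := by
  cases k <;> rfl

/-- A family of operators with the commutation signs and squares of the symmetries. -/
abbrev IsRepresentation {A : Type*} [Ring A] [Algebra ℝ A] (x : Symmetry n → A) : Prop :=
  IsSignedSystem commSign squareSign x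

lemma IsRepresentation.isQuaternionicClifford {A : Type*} [Ring A] [Algebra ℝ A] {m : ℕ}
    {x : Symmetry (m + 1) → A} (hx : IsRepresentation x) :
    IsQuaternionicClifford (-1) (x unitI) (x unitJ)
      (fun i : Fin m => x (clifford 0) * x (clifford i.succ)) where
  toIsClifford := IsClifford.mul_left_of_neg_one (f := fun i => x (clifford i))
    ⟨fun i => by simpa [squareSign] using hx.mul_self (clifford i),
      fun i j h => hx.anticomm (if_neg h)⟩
  mul_self_I := by simpa [squareSign] using hx.mul_self unitI
  mul_self_J := by simpa [squareSign] using hx.mul_self unitJ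
  anticomm_IJ := hx.anticomm rfl
  commute_I _ := (hx.commute rfl).mul_right (hx.commute rfl)
  commute_J _ := (hx.commute rfl).mul_right (hx.commute rfl)

variable {V : Type u} [AddCommGroup V] [Module ℝ V] [Module.Finite ℝ V] {m q : ℕ}
  {x : Symmetry (m + 3) → Module.End ℝ V}

lemma IsRepresentation.dvd_finrank (h : CliffordDimDvd.{u} 1 m q) (hx : IsRepresentation x) :
    2 * (2 * (2 * q)) ∣ Module.finrank ℝ V := by
  have grading_clifford (i) : x grading * x (clifford i) = -(x (clifford i) * x grading) :=
    hx.anticomm rfl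
  have clifford_sq : x (clifford 0) * x (clifford 0) = -1 := by
    simpa [squareSign] using hx.mul_self (clifford 0)
  refine h.quaternionicCliffordDimDvd_neg_one_add_two.two_mul_dvd_finrank (σ := x grading)
    (by simpa [squareSign] using hx.mul_self grading) (isUnit_of_mul_self_eq_neg_one clifford_sq)
    (grading_clifford 0) hx.isQuaternionicClifford
    (hx.commute rfl)
    (hx.commute rfl) fun i => ?_
  calc x grading * (x (clifford 0) * x (clifford i.succ))
      = -(x (clifford 0) * (x grading * x (clifford i.succ))) := by
        rw [← mul_assoc, grading_clifford, neg_mul, mul_assoc]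
    _ = x (clifford 0) * x (clifford i.succ) * x grading := by
        rw [grading_clifford, mul_neg, neg_neg, mul_assoc]

lemma IsRepresentation.dvd_of_trace_parity (h : CliffordDimDvd.{u} 1 m q) (hx : IsRepresentation x)
    {N : ℕ} (ht : LinearMap.trace ℝ V (x parity) = 8 * N) : q ∣ N := by
  have commute_parity (k) : Commute (x parity) (x k) :=
    hx.commute (commSign_parity k)
  have parity_sq : x parity * x parity = 1 := by
    simpa [squareSign] using hx.mul_self parity
  obtain ⟨dimPos, hPos⟩ := IsRepresentation.dvd_finrank h (hx.restrictFixed commute_parity)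
  obtain ⟨dimNeg, hNeg⟩ := IsRepresentation.dvd_finrank h
    (hx.restrictFixed fun k => (commute_parity k).neg_left)
  have tracePos := two_mul_finrank_eqLocus_one parity_sq
  have traceNeg := two_mul_finrank_eqLocus_one (σ := -x parity) (by rw [neg_mul_neg, parity_sq])
  rw [hPos, ht] at tracePos
  rw [hNeg, map_neg, ht] at traceNeg
  push_cast at tracePos traceNeg
  have real_eq : (N : ℝ) = q * (dimPos - dimNeg) := by linarith
  have int_eq : (N : ℤ) = q * (dimPos - dimNeg) := by exact_mod_cast real_eq
  exact Int.natCast_dvd_natCast.1 ⟨_, int_eq⟩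

lemma IsRepresentation.two_pow_dvd {d a b N : ℕ} (hb : b < 4)
    {x : Symmetry (cliffordLength b + 8 * a + 3) → Matrix (Fin d) (Fin d) ℝ}
    (hx : IsRepresentation x) (ht : (x parity).trace = 8 * N) : 2 ^ (4 * a + b + 1) ∣ N :=
  IsRepresentation.dvd_of_trace_parity (cliffordDimDvd_cliffordLength a hb)
    (hx.map (Matrix.toLinAlgEquiv' (R := ℝ) (n := Fin d)).toAlgHom)
    ((Matrix.trace_toLin'_eq _).trans ht)

end Symmetry

end SignedSystems

section Compactness

variable {κ ι : Type*} [Fintype ι] [DecidableEq ι] {σ : κ → κ → ℝ} {ν : κ → ℝ}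

/-- Matrices with entries in `[-1, 1]` that satisfy the relations of `IsSignedSystem` up to an error
of `ε` in every entry. -/
structure IsApproxSignedSystem (σ : κ → κ → ℝ) (ν : κ → ℝ) (ε : ℝ) (x : κ → Matrix ι ι ℝ) :
    Prop where
  abs_apply_le (k : κ) (a b : ι) : |x k a b| ≤ 1
  mul_comm (k l : κ) (a b : ι) : |(x k * x l - σ k l • (x l * x k)) a b| ≤ ε
  mul_self (k : κ) (a b : ι) : |(x k * x k - ν k • (1 : Matrix ι ι ℝ)) a b| ≤ ε

lemma IsApproxSignedSystem.mono {ε ε' : ℝ} (h : ε ≤ ε') {x : κ → Matrix ι ι ℝ}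
    (hx : IsApproxSignedSystem σ ν ε x) : IsApproxSignedSystem σ ν ε' x :=
  ⟨hx.abs_apply_le, fun k l a b => (hx.mul_comm k l a b).trans h,
    fun k a b => (hx.mul_self k a b).trans h⟩

lemma isClosed_setOf_isApproxSignedSystem (ε : ℝ) :
    IsClosed {x : κ → Matrix ι ι ℝ | IsApproxSignedSystem σ ν ε x} := by
  have : {x : κ → Matrix ι ι ℝ | IsApproxSignedSystem σ ν ε x} =
      {x | ∀ k a b, |x k a b| ≤ 1} ∩
      {x | ∀ k l a b, |(x k * x l - σ k l • (x l * x k)) a b| ≤ ε} ∩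
      {x | ∀ k a b, |(x k * x k - ν k • (1 : Matrix ι ι ℝ)) a b| ≤ ε} :=
    Set.ext fun x => ⟨fun h => ⟨⟨h.1, h.2⟩, h.3⟩, fun h => ⟨h.1.1, h.1.2, h.2⟩⟩
  rw [this]
  simp only [Set.ofPred_forall]
  refine ((isClosed_iInter fun k => isClosed_iInter fun a => isClosed_iInter fun b => ?_).inter
    (isClosed_iInter fun k => isClosed_iInter fun l => isClosed_iInter fun a =>
      isClosed_iInter fun b => ?_)).inter
    (isClosed_iInter fun k => isClosed_iInter fun a => isClosed_iInter fun b => ?_)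
  all_goals
    refine isClosed_le (continuous_abs.comp (Continuous.matrix_elem ?_ a b)) continuous_const
    fun_prop

lemma isCompact_setOf_isApproxSignedSystem (ε : ℝ) :
    IsCompact {x : κ → Matrix ι ι ℝ | IsApproxSignedSystem σ ν ε x} := by
  have isCompact_cube :
      IsCompact {x : κ → Matrix ι ι ℝ | ∀ k a b, x k a b ∈ Set.Icc (-1 : ℝ) 1} := by
    have := isCompact_univ_pi fun _ : κ => isCompact_univ_pi fun _ : ι =>
      isCompact_univ_pi fun _ : ι => isCompact_Icc (a := (-1 : ℝ)) (b := 1)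
    simp only [Set.pi, Set.mem_univ, true_implies, Set.mem_ofPred_eq] at this
    exact this
  exact isCompact_cube.of_isClosed_subset (isClosed_setOf_isApproxSignedSystem ε)
    fun x hx k a b => abs_le.1 (hx.abs_apply_le k a b)

lemma exists_isSignedSystem_of_forall_isApprox {p : κ} {t : ℝ}
    (h : ∀ ε > 0, ∃ x : κ → Matrix ι ι ℝ, IsApproxSignedSystem σ ν ε x ∧ (x p).trace = t) :
    ∃ x : κ → Matrix ι ι ℝ, IsSignedSystem σ ν x ∧ (x p).trace = t := by
  let ε (n : ℕ) : ℝ := 1 / (n + 1)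
  have isClosed_trace : IsClosed {x : κ → Matrix ι ι ℝ | (x p).trace = t} :=
    isClosed_eq (Continuous.matrix_trace (continuous_apply p)) continuous_const
  obtain ⟨x, hx⟩ := IsCompact.nonempty_iInter_of_sequence_nonempty_isCompact_isClosed
    (fun n => {x : κ → Matrix ι ι ℝ | IsApproxSignedSystem σ ν (ε n) x} ∩ {x | (x p).trace = t})
    (fun n x hx => ⟨hx.1.mono (Nat.one_div_le_one_div n.le_succ), hx.2⟩)
    (fun n => h _ Nat.one_div_pos_of_nat)
    ((isCompact_setOf_isApproxSignedSystem _).inter_right isClosed_trace)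
    (fun n => (isClosed_setOf_isApproxSignedSystem _).inter isClosed_trace)
  rw [Set.mem_iInter] at hx
  have eq_zero {r : ℝ} (hr : ∀ n, |r| ≤ ε n) : r = 0 :=
    abs_nonpos_iff.1 (ge_of_tendsto' tendsto_one_div_add_atTop_nhds_zero_nat hr)
  refine ⟨x, ⟨fun k l => ?_, fun k => ?_⟩, (hx 0).2⟩
  · exact sub_eq_zero.1 (Matrix.ext fun a b => eq_zero fun n => (hx n).1.mul_comm k l a b)
  · exact sub_eq_zero.1 (Matrix.ext fun a b => eq_zero fun n => (hx n).1.mul_self k a b)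

lemma exists_isSignedSystem_of_forall_isApprox_of_dim_le {p : κ} {t : ℝ} {L : ℕ}
    (h : ∀ ε > 0, ∃ d ≤ L, ∃ x : κ → Matrix (Fin d) (Fin d) ℝ,
      IsApproxSignedSystem σ ν ε x ∧ (x p).trace = t) :
    ∃ (d : ℕ) (x : κ → Matrix (Fin d) (Fin d) ℝ), IsSignedSystem σ ν x ∧ (x p).trace = t := by
  suffices ∃ d, ∀ ε > 0, ∃ x : κ → Matrix (Fin d) (Fin d) ℝ,
      IsApproxSignedSystem σ ν ε x ∧ (x p).trace = t from
    this.imp fun d hd => exists_isSignedSystem_of_forall_isApprox hd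
  by_contra! hfail
  choose ε hε hεfail using hfail
  obtain ⟨d₀, -, hd₀⟩ := (Finset.range (L + 1)).exists_min_image ε ⟨0, by simp⟩
  obtain ⟨d, hdL, x, hx, ht⟩ := h (ε d₀) (hε d₀)
  exact hεfail d x (hx.mono (hd₀ d (by simp; omega))) ht

end Compactness

section LowEnergyTruncation

open scoped MatrixOrder
open Finset

variable {γ κ : Type*}

lemma exists_gap [Fintype γ] (r : γ → ℝ) {L : ℕ} (hL : #{a | r a ≤ 1} ≤ L) :
    ∃ δ : ℝ, 0 ≤ δ ∧ δ ≤ 1 ∧ ∀ a, δ < r a → δ + 1 / (L + 1) ≤ r a := by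
  have hpos : (0 : ℝ) < L + 1 := by positivity
  obtain ⟨k, hk, hkr⟩ : ∃ k ∈ range (L + 1),
      k ∉ ({a | r a ≤ 1} : Finset γ).image (fun a => ⌈r a * (L + 1)⌉₊ - 1) := by
    by_contra! h
    have := (card_le_card h).trans card_image_le
    rw [card_range] at this
    omega
  have hkL : (k : ℝ) + 1 ≤ L + 1 := by exact_mod_cast mem_range.1 hk
  refine ⟨k / (L + 1), by positivity, (div_le_one hpos).2 (by linarith), fun a ha => ?_⟩
  by_contra! hlt
  rw [← add_div, lt_div_iff₀ hpos] at hlt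
  rw [div_lt_iff₀ hpos] at ha
  have hceil : ⌈r a * (L + 1)⌉₊ = k + 1 := by
    rw [Nat.ceil_eq_iff (by omega)]
    exact ⟨by simpa using ha, by exact_mod_cast hlt.le⟩
  exact hkr (mem_image.2 ⟨a, mem_filter.2 ⟨mem_univ a, by nlinarith⟩, by rw [hceil]; rfl⟩)

lemma diag_le_of_le {M M' : Matrix γ γ ℝ} (h : M ≤ M') (a : γ) : M a a ≤ M' a a :=
  sub_nonneg.1 (Matrix.le_iff.1 h).diag_nonneg

lemma abs_sum_mul_le {F : Finset γ} {f g : γ → ℝ} {r : ℝ} (hf : ∑ c ∈ F, f c ^ 2 ≤ r)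
    (hg : ∑ c ∈ F, g c ^ 2 ≤ r) : |∑ c ∈ F, f c * g c| ≤ r := by
  have hr : 0 ≤ r := (sum_nonneg fun c _ => sq_nonneg (f c)).trans hf
  refine abs_le_of_sq_le_sq ?_ hr
  calc (∑ c ∈ F, f c * g c) ^ 2 ≤ (∑ c ∈ F, f c ^ 2) * ∑ c ∈ F, g c ^ 2 :=
        sum_mul_sq_le_sq_mul_sq F f g
    _ ≤ r * r := by gcongr
    _ = r ^ 2 := (sq r).symm

variable [Fintype γ]

lemma exists_mulVec_eq_zero_of_card_lt (U : Matrix γ γ ℝ) {p q : γ → Prop} [DecidablePred p]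
    [DecidablePred q] (h : #{a | q a} < #{a | p a}) :
    ∃ w : γ → ℝ, w ≠ 0 ∧ (∀ a, ¬ p a → w a = 0) ∧ ∀ a, q a → (U *ᵥ w) a = 0 := by
  let f : (γ → ℝ) →ₗ[ℝ] ({a // ¬ p a} → ℝ) × ({a // q a} → ℝ) :=
    (LinearMap.funLeft ℝ ℝ (↑)).prod (LinearMap.funLeft ℝ ℝ (↑) ∘ₗ U.mulVecLin)
  have hlt : Module.finrank ℝ (({a // ¬ p a} → ℝ) × ({a // q a} → ℝ)) <
      Module.finrank ℝ (γ → ℝ) := by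
    rw [← Fintype.card_subtype, ← Fintype.card_subtype] at h
    have := Fintype.card_subtype_compl p
    have := Fintype.card_subtype_le p
    simp only [Module.finrank_prod, Module.finrank_fintype_fun_eq_card]
    omega
  obtain ⟨w, hw, hw0⟩ := (Submodule.ne_bot_iff _).1
    (LinearMap.ker_ne_bot_of_finrank_lt (f := f) hlt)
  obtain ⟨hp, hq⟩ := Prod.ext_iff.1 (LinearMap.mem_ker.1 hw)
  exact ⟨w, hw0, fun a ha => congrFun hp ⟨a, ha⟩, fun a ha => congrFun hq ⟨a, ha⟩⟩

lemma abs_apply_le_of_posSemidef {ι : Type*} [Finite ι] {M : Matrix ι ι ℝ} (hM : M.PosSemidef)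
    {r : ℝ} {a b : ι} (ha : M a a ≤ r) (hb : M b b ≤ r) : |M a b| ≤ r := by
  classical
  have := Fintype.ofFinite ι
  have hsymm : M b a = M a b := hM.isHermitian.apply a b
  have quadratic_nonneg (u : ℝ) : 0 ≤ M a a + 2 * u * M a b + u * u * M b b := by
    have := hM.dotProduct_mulVec_nonneg (Pi.single a 1 + u • Pi.single b 1)
    simp only [star_trivial, mulVec_add, mulVec_smul, dotProduct_add, add_dotProduct,
      smul_dotProduct, dotProduct_smul, mulVec_single_one, single_one_dotProduct, col_apply,
      smul_eq_mul, hsymm] at this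
    linarith
  rw [abs_le]
  constructor <;> linarith [quadratic_nonneg 1, quadratic_nonneg (-1)]

variable [DecidableEq γ]

lemma dotProduct_diagonal_mulVec (h v : γ → ℝ) : v ⬝ᵥ diagonal h *ᵥ v = ∑ a, h a * v a ^ 2 := by
  simp only [dotProduct, mulVec_diagonal]
  exact sum_congr rfl fun a _ => by ring

lemma card_filter_le_of_diagonal_le {U : unitaryGroup γ ℝ} {h μ : γ → ℝ} {k K : ℝ} (hk : k < K)
    (hle : diagonal h ≤ Unitary.conjStarAlgAut ℝ _ U (diagonal μ)) :
    #{a | μ a ≤ k} ≤ #{a | h a < K} := by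
  by_contra! hcard
  obtain ⟨w, hw0, hwμ, hwh⟩ := exists_mulVec_eq_zero_of_card_lt (U : Matrix γ γ ℝ) hcard
  set v := (U : Matrix γ γ ℝ) *ᵥ w with hv
  have hUv : v ᵥ* (U : Matrix γ γ ℝ) = w := by
    rw [hv, ← mulVec_transpose, mulVec_mulVec, ← conjTranspose_eq_transpose_of_trivial,
      ← star_eq_conjTranspose, Unitary.coe_star_mul_self, one_mulVec]
  have hnorm : v ⬝ᵥ v = w ⬝ᵥ w := by
    conv_lhs => enter [2]; rw [hv]
    rw [dotProduct_mulVec, hUv]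
  have hpos : 0 < w ⬝ᵥ w := (dotProduct_self_star_pos_iff).2 hw0
  have hform : v ⬝ᵥ diagonal h *ᵥ v ≤ w ⬝ᵥ diagonal μ *ᵥ w := by
    have := (Matrix.le_iff.1 hle).dotProduct_mulVec_nonneg v
    rw [star_trivial, sub_mulVec, dotProduct_sub, sub_nonneg] at this
    refine this.trans_eq ?_
    rw [Unitary.conjStarAlgAut_apply, ← mulVec_mulVec, ← mulVec_mulVec, dotProduct_mulVec, hUv,
      star_eq_conjTranspose, conjTranspose_eq_transpose_of_trivial, mulVec_transpose, hUv]
  rw [dotProduct_diagonal_mulVec, dotProduct_diagonal_mulVec] at hform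
  have hlower : K * (v ⬝ᵥ v) ≤ ∑ a, h a * v a ^ 2 := by
    rw [dotProduct, mul_sum]
    refine sum_le_sum fun a _ => ?_
    by_cases ha : h a < K
    · simp [hwh a ha]
    · nlinarith [sq_nonneg (v a)]
  have hupper : ∑ a, μ a * w a ^ 2 ≤ k * (w ⬝ᵥ w) := by
    rw [dotProduct, mul_sum]
    refine sum_le_sum fun a _ => ?_
    by_cases ha : μ a ≤ k
    · nlinarith [sq_nonneg (w a)]
    · simp [hwμ a ha]
  rw [hnorm] at hlower
  exact (mul_lt_mul_of_pos_right hk hpos).not_ge (hlower.trans (hform.trans hupper))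

/-- An operator `x` with `xᴴ = ν x` that at large `s` is nearly unitary and nearly commutes, up to a
sign `θ`, with the energy operator `T`: both defects are small relative to `T * T + 1`. -/
structure IsAlmostSymmetry {A : Type*} [Ring A] [StarRing A] [Algebra ℝ A] [LE A] (C s ν : ℝ)
    (T x : A) : Prop where
  star_eq : star x = ν • x
  star_mul_self_le_one : star x * x ≤ 1
  defect_le : s • (1 - star x * x) ≤ C • (T * T + 1)
  exists_commutator_le : ∃ θ : ℝ, |θ| = 1 ∧
    s ^ 2 • (star (x * T - θ • (T * x)) * (x * T - θ • (T * x))) ≤ C • (T * T + 1)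

namespace IsAlmostSymmetry

variable {C s ν δ g : ℝ}

lemma map {A B : Type*} [Ring A] [StarRing A] [Algebra ℝ A] [PartialOrder A] [StarOrderedRing A]
    [Ring B] [StarRing B] [Algebra ℝ B] [PartialOrder B] [StarOrderedRing B] (φ : A ≃⋆ₐ[ℝ] B)
    {T x : A} (hx : IsAlmostSymmetry C s ν T x) : IsAlmostSymmetry C s ν (φ T) (φ x) where
  star_eq := by rw [← map_star, hx.star_eq, map_smul]
  star_mul_self_le_one := by
    simpa only [map_mul, map_star, map_one] using OrderHomClass.mono φ hx.star_mul_self_le_one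
  defect_le := by
    simpa only [map_smul, map_sub, map_add, map_mul, map_star, map_one] using
      OrderHomClass.mono φ hx.defect_le
  exists_commutator_le := by
    obtain ⟨θ, hθ, hle⟩ := hx.exists_commutator_le
    exact ⟨θ, hθ, by
      simpa only [map_smul, map_sub, map_add, map_mul, map_star, map_one] using
        OrderHomClass.mono φ hle⟩

lemma abs_apply_le_one {T x : Matrix γ γ ℝ} (hx : IsAlmostSymmetry C s ν T x) (a b : γ) :
    |x a b| ≤ 1 := by
  rw [abs_le_one_iff_mul_self_le_one]
  calc x a b * x a b ≤ ∑ c, x c b * x c b :=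
        single_le_sum (f := fun c => x c b * x c b) (fun c _ => mul_self_nonneg _) (mem_univ a)
    _ = (star x * x) b b := by simp [mul_apply, Matrix.star_apply]
    _ ≤ 1 := by simpa using diag_le_of_le hx.star_mul_self_le_one b

lemma abs_apply_comm {T x : Matrix γ γ ℝ} (hν : |ν| = 1) (hx : IsAlmostSymmetry C s ν T x)
    (a b : γ) : |x a b| = |x b a| := by
  have : x a b = ν * x b a := by simpa using congrFun₂ hx.star_eq b a
  rw [this, abs_mul, hν, one_mul]

variable {l : γ → ℝ} {x : Matrix γ γ ℝ}

lemma smul_diagonal_mul_self_add_one_apply_le (hC : 0 ≤ C) {a : γ} (ha : |l a| ≤ 1) :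
    (C • (diagonal l * diagonal l + 1)) a a ≤ 2 * C := by
  have : l a * l a ≤ 1 := abs_le_one_iff_mul_self_le_one.1 ha
  simp only [diagonal_mul_diagonal, Matrix.smul_apply, Matrix.add_apply, diagonal_apply_eq,
    one_apply_eq, smul_eq_mul]
  nlinarith

lemma abs_mul_self_sub_apply_le (hC : 0 ≤ C) (hs : 0 < s) (hν : |ν| = 1)
    (hx : IsAlmostSymmetry C s ν (diagonal l) x) {a b : γ} (ha : |l a| ≤ 1) (hb : |l b| ≤ 1) :
    |(x * x - ν • (1 : Matrix γ γ ℝ)) a b| ≤ 2 * C / s := by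
  have hdiag {c : γ} (hc : |l c| ≤ 1) : (1 - star x * x) c c ≤ 2 * C / s := by
    rw [le_div_iff₀' hs]
    exact (diag_le_of_le hx.defect_le c).trans (smul_diagonal_mul_self_add_one_apply_le hC hc)
  have hνν : ν * ν = 1 := by rw [← abs_mul_abs_self, hν, one_mul]
  have hdefect : x * x - ν • (1 : Matrix γ γ ℝ) = -ν • (1 - star x * x) := by
    rw [hx.star_eq, smul_mul_assoc, smul_sub, smul_smul, neg_mul, hνν]
    module
  rw [hdefect, Matrix.smul_apply, smul_eq_mul, abs_mul, abs_neg, hν, one_mul]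
  exact abs_apply_le_of_posSemidef (Matrix.le_iff.1 hx.star_mul_self_le_one) (hdiag ha) (hdiag hb)

lemma sum_sq_apply_le (hC : 0 ≤ C) (hs : 0 < s) (hδ : δ ≤ 1) (hg : 0 < g)
    (hx : IsAlmostSymmetry C s ν (diagonal l) x) {a : γ} (ha : |l a| ≤ δ) {F : Finset γ}
    (hF : ∀ c ∈ F, δ + g ≤ |l c|) : ∑ c ∈ F, x c a ^ 2 ≤ 2 * C / (s * g) ^ 2 := by
  obtain ⟨θ, hθ, hle⟩ := hx.exists_commutator_le
  have hcomm (c : γ) : (x * diagonal l - θ • (diagonal l * x)) c a = (l a - θ * l c) * x c a := by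
    simp only [Matrix.sub_apply, mul_diagonal, Matrix.smul_apply, diagonal_mul, smul_eq_mul]
    ring
  have hgap {c : γ} (hc : c ∈ F) : g ^ 2 ≤ (l a - θ * l c) ^ 2 := by
    have := abs_sub_abs_le_abs_sub (θ * l c) (l a)
    rw [abs_mul, hθ, one_mul, abs_sub_comm] at this
    rw [← sq_abs (l a - θ * l c)]
    exact pow_le_pow_left₀ hg.le (by linarith [hF c hc]) 2
  rw [le_div_iff₀' (by positivity)]
  calc (s * g) ^ 2 * ∑ c ∈ F, x c a ^ 2
      = s ^ 2 * ∑ c ∈ F, g ^ 2 * x c a ^ 2 := by rw [← mul_sum]; ring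
    _ ≤ s ^ 2 * ∑ c ∈ F, ((l a - θ * l c) * x c a) ^ 2 := by
        gcongr with c hc
        rw [mul_pow]
        exact mul_le_mul_of_nonneg_right (hgap hc) (sq_nonneg _)
    _ ≤ s ^ 2 * ∑ c, ((l a - θ * l c) * x c a) ^ 2 := by
        gcongr
        exact subset_univ F
    _ = (s ^ 2 • (star (x * diagonal l - θ • (diagonal l * x)) *
          (x * diagonal l - θ • (diagonal l * x)))) a a := by
        simp only [Matrix.smul_apply, mul_apply (M := star _), Matrix.star_apply, hcomm,
          star_trivial, smul_eq_mul, sq]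
    _ ≤ 2 * C := (diag_le_of_le hle a).trans
        (smul_diagonal_mul_self_add_one_apply_le hC (ha.trans hδ))

lemma abs_sum_apply_mul_apply_le (hC : 0 ≤ C) (hs : 0 < s) (hν : |ν| = 1) (hδ : δ ≤ 1) (hg : 0 < g)
    {ν' : ℝ} {y : Matrix γ γ ℝ} (hx : IsAlmostSymmetry C s ν (diagonal l) x)
    (hy : IsAlmostSymmetry C s ν' (diagonal l) y) {a b : γ} (ha : |l a| ≤ δ) (hb : |l b| ≤ δ)
    {F : Finset γ} (hF : ∀ c ∈ F, δ + g ≤ |l c|) :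
    |∑ c ∈ F, x a c * y c b| ≤ 2 * C / (s * g) ^ 2 := by
  refine abs_sum_mul_le ?_ (hy.sum_sq_apply_le hC hs hδ hg hb hF)
  calc ∑ c ∈ F, x a c ^ 2 = ∑ c ∈ F, x c a ^ 2 :=
        sum_congr rfl fun c _ => by rw [← sq_abs, hx.abs_apply_comm hν, sq_abs]
    _ ≤ 2 * C / (s * g) ^ 2 := hx.sum_sq_apply_le hC hs hδ hg ha hF

end IsAlmostSymmetry

section Compression

variable {ι : Type*} [Fintype ι] (e : ι ↪ γ)

lemma submatrix_mul_submatrix_apply (x y : Matrix γ γ ℝ) (a b : ι) :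
    (x.submatrix e e * y.submatrix e e) a b =
      (x * y) (e a) (e b) - ∑ c ∈ (univ.map e)ᶜ, x (e a) c * y c (e b) := by
  rw [eq_sub_iff_add_eq]
  simp only [mul_apply, submatrix_apply]
  rw [← sum_map univ e fun c => x (e a) c * y c (e b), sum_add_sum_compl]

end Compression

/-- Almost symmetries `x k` of a self-adjoint energy operator `T` that commute with one another up
to the signs `σ`, one of which, `x p`, anticommutes with `T`. -/
structure IsLowEnergyModel {A : Type*} [Ring A] [StarRing A] [Algebra ℝ A] [LE A] (σ : κ → κ → ℝ)
    (ν : κ → ℝ) (p : κ) (C s : ℝ) (T : A) (x : κ → A) : Prop where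
  isSelfAdjoint : IsSelfAdjoint T
  mul_comm (k l : κ) : x k * x l = σ k l • (x l * x k)
  isAlmostSymmetry (k : κ) : IsAlmostSymmetry C s (ν k) T (x k)
  anticomm : x p * T = -(T * x p)

namespace IsLowEnergyModel

variable {σ : κ → κ → ℝ} {ν : κ → ℝ} {p : κ} {C s : ℝ}

lemma map {A B : Type*} [Ring A] [StarRing A] [Algebra ℝ A] [PartialOrder A] [StarOrderedRing A]
    [Ring B] [StarRing B] [Algebra ℝ B] [PartialOrder B] [StarOrderedRing B] (φ : A ≃⋆ₐ[ℝ] B)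
    {T : A} {x : κ → A} (hx : IsLowEnergyModel σ ν p C s T x) :
    IsLowEnergyModel σ ν p C s (φ T) (fun k => φ (x k)) where
  isSelfAdjoint := hx.isSelfAdjoint.map φ
  mul_comm k l := by rw [← map_mul, hx.mul_comm, map_smul, map_mul]
  isAlmostSymmetry k := (hx.isAlmostSymmetry k).map φ
  anticomm := by rw [← map_mul, hx.anticomm, map_neg, map_mul]

section Diagonal

variable {ι : Type*} [Fintype ι] {e : ι ↪ γ} {l : γ → ℝ} {x : κ → Matrix γ γ ℝ}

lemma isApproxSignedSystem_submatrix [DecidableEq ι] (hσ : ∀ k l, |σ k l| = 1)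
    (hν : ∀ k, |ν k| = 1) (hC : 0 ≤ C) (hs : 1 ≤ s) {δ g : ℝ} (hδ : δ ≤ 1) (hg : 0 < g)
    (hg1 : g ≤ 1) (hx : IsLowEnergyModel σ ν p C s (diagonal l) x) (he : ∀ a, |l (e a)| ≤ δ)
    (hgap : ∀ c ∉ univ.map e, δ + g ≤ |l c|) :
    IsApproxSignedSystem σ ν (4 * C / (s * g ^ 2)) (fun k => (x k).submatrix e e) := by
  have hs0 : 0 < s := by linarith
  have hr_le : 2 * C / (s * g) ^ 2 ≤ 2 * C / (s * g ^ 2) := by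
    rw [mul_pow]
    gcongr
    exact le_self_pow₀ hs two_ne_zero
  have hC_le : 2 * C / s ≤ 2 * C / (s * g ^ 2) := by
    gcongr
    exact mul_le_of_le_one_right hs0.le (pow_le_one₀ hg.le hg1)
  have hε : 4 * C / (s * g ^ 2) = 2 * C / (s * g ^ 2) + 2 * C / (s * g ^ 2) := by ring
  have htail (k l : κ) (a b : ι) :
      |∑ c ∈ (univ.map e)ᶜ, x k (e a) c * x l c (e b)| ≤ 2 * C / (s * g ^ 2) :=
    ((hx.isAlmostSymmetry k).abs_sum_apply_mul_apply_le hC hs0 (hν k) hδ hg (hx.isAlmostSymmetry l)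
      (he a) (he b) fun c hc => hgap c (mem_compl.1 hc)).trans hr_le
  refine ⟨fun k a b => (hx.isAlmostSymmetry k).abs_apply_le_one _ _, fun k l a b => ?_,
    fun k a b => ?_⟩
  · have hcomm := congrFun₂ (hx.mul_comm k l) (e a) (e b)
    rw [Matrix.smul_apply, smul_eq_mul] at hcomm
    rw [Matrix.sub_apply, Matrix.smul_apply, smul_eq_mul, submatrix_mul_submatrix_apply,
      submatrix_mul_submatrix_apply, hcomm, mul_sub, sub_sub_sub_cancel_left, hε]
    refine (abs_sub _ _).trans (add_le_add ?_ (htail k l a b))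
    rw [abs_mul, hσ, one_mul]
    exact htail l k a b
  · have hone : (1 : Matrix ι ι ℝ) a b = (1 : Matrix γ γ ℝ) (e a) (e b) := by
      simp [one_apply]
    rw [Matrix.sub_apply, Matrix.smul_apply, hone, ← Matrix.smul_apply,
      submatrix_mul_submatrix_apply, sub_right_comm, ← Matrix.sub_apply, hε]
    exact (abs_sub _ _).trans (add_le_add
      (((hx.isAlmostSymmetry k).abs_mul_self_sub_apply_le hC hs0 (hν k) ((he a).trans hδ)
        ((he b).trans hδ)).trans hC_le) (htail k k a b))

lemma trace_submatrix (hx : IsLowEnergyModel σ ν p C s (diagonal l) x)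
    (he : ∀ c ∉ univ.map e, l c ≠ 0) : ((x p).submatrix e e).trace = (x p).trace := by
  have hdiag (c : γ) : l c * x p c c = 0 := by
    have := congrFun₂ hx.anticomm c c
    rw [mul_diagonal, Matrix.neg_apply, diagonal_mul] at this
    linarith
  calc ((x p).submatrix e e).trace = ∑ c ∈ univ.map e, x p c c := by
        simp only [trace, diag_apply, submatrix_apply, sum_map]
    _ = (x p).trace := sum_subset (subset_univ _) fun c _ hc =>
        (mul_eq_zero.1 (hdiag c)).resolve_left (he c hc)

lemma exists_isApproxSignedSystem_of_diagonal (hσ : ∀ k l, |σ k l| = 1) (hν : ∀ k, |ν k| = 1)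
    (hC : 0 ≤ C) (hs : 1 ≤ s) (hx : IsLowEnergyModel σ ν p C s (diagonal l) x) {L : ℕ}
    (hL : #{a | |l a| ≤ 1} ≤ L) :
    ∃ d ≤ L, ∃ y : κ → Matrix (Fin d) (Fin d) ℝ,
      IsApproxSignedSystem σ ν (4 * C * (L + 1) ^ 2 / s) y ∧ (y p).trace = (x p).trace := by
  obtain ⟨δ, hδ0, hδ1, hgap⟩ := exists_gap (fun a => |l a|) hL
  let E : Finset γ := {a | |l a| ≤ δ}
  let e : Fin #E ↪ γ := E.equivFin.symm.toEmbedding.trans (.subtype _)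
  have hE {a : γ} : a ∈ E ↔ |l a| ≤ δ := by simp [E]
  have hlt (c : γ) (hc : c ∉ univ.map e) : δ < |l c| := by
    by_contra! hle
    exact hc (mem_map.2 ⟨E.equivFin ⟨c, hE.2 hle⟩, mem_univ _, by simp [e]⟩)
  have hε : 4 * C * (L + 1) ^ 2 / s = 4 * C / (s * (1 / ((L : ℝ) + 1)) ^ 2) := by
    field_simp
  refine ⟨#E, (card_le_card fun a ha => ?_).trans hL, fun k => (x k).submatrix e e, ?_, ?_⟩
  · simpa using (hE.1 ha).trans hδ1
  · rw [hε]
    exact hx.isApproxSignedSystem_submatrix hσ hν hC hs hδ1 (by positivity)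
      ((div_le_one (by positivity)).2 (by simp)) (fun a => hE.1 (E.equivFin.symm a).2)
      fun c hc => hgap c (hlt c hc)
  · exact hx.trace_submatrix fun c hc => abs_pos.1 (hδ0.trans_lt (hlt c hc))

end Diagonal

lemma exists_isApproxSignedSystem (hσ : ∀ k l, |σ k l| = 1) (hν : ∀ k, |ν k| = 1) (hC : 0 ≤ C)
    (hs : 1 ≤ s) {T : Matrix γ γ ℝ} {x : κ → Matrix γ γ ℝ} (hx : IsLowEnergyModel σ ν p C s T x)
    {h : γ → ℝ} (hh : diagonal h ≤ C • (T * T + 1)) {K : ℝ} (hK : 2 * C < K) {L : ℕ}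
    (hL : #{a | h a < K} ≤ L) :
    ∃ d ≤ L, ∃ y : κ → Matrix (Fin d) (Fin d) ℝ,
      IsApproxSignedSystem σ ν (4 * C * (L + 1) ^ 2 / s) y ∧ (y p).trace = (x p).trace := by
  have hT : T.IsHermitian := hx.isSelfAdjoint
  let φ := Unitary.conjStarAlgAut ℝ (Matrix γ γ ℝ) hT.eigenvectorUnitary
  let l := hT.eigenvalues
  have hφ : T = φ (diagonal l) := hT.spectral_theorem
  have hφT : φ.symm T = diagonal l := φ.symm_apply_eq.2 hφ
  have hφtrace (y : Matrix γ γ ℝ) : (φ y).trace = y.trace := by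
    rw [Unitary.conjStarAlgAut_apply, trace_mul_cycle, Unitary.coe_star_mul_self, one_mul]
  have hcard : #{a | |l a| ≤ 1} ≤ L := by
    have hweight : C • (T * T + 1) = φ (diagonal fun a => C * (l a * l a + 1)) := by
      calc C • (T * T + 1) = C • (φ (diagonal l) * φ (diagonal l) + 1) := by rw [← hφ]
        _ = φ (C • (diagonal l * diagonal l + 1)) := by
            rw [map_smul, map_add, map_mul, map_one]
        _ = _ := by
            rw [diagonal_mul_diagonal, ← diagonal_one, diagonal_add, ← diagonal_smul]
            rfl
    refine le_trans (card_le_card fun a ha => ?_)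
      ((card_filter_le_of_diagonal_le hK (hh.trans_eq hweight)).trans hL)
    have : l a * l a ≤ 1 := abs_le_one_iff_mul_self_le_one.1 (mem_filter.1 ha).2
    exact mem_filter.2 ⟨mem_univ a, by nlinarith⟩
  rw [← φ.apply_symm_apply (x p), hφtrace]
  exact (hφT ▸ hx.map φ.symm).exists_isApproxSignedSystem_of_diagonal hσ hν hC hs hcard

end IsLowEnergyModel

theorem exists_isSignedSystem_of_forall_isLowEnergyModel {σ : κ → κ → ℝ} {ν : κ → ℝ}
    (hσ : ∀ k l, |σ k l| = 1) (hν : ∀ k, |ν k| = 1) {p : κ} {C K t : ℝ} (hC : 0 ≤ C)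
    (hK : 2 * C < K) {L : ℕ}
    (hmodel : ∀ s : ℕ, 1 ≤ s → ∃ (γ : Type) (_ : Fintype γ) (_ : DecidableEq γ)
      (T : Matrix γ γ ℝ) (x : κ → Matrix γ γ ℝ) (h : γ → ℝ), IsLowEnergyModel σ ν p C s T x ∧
        diagonal h ≤ C • (T * T + 1) ∧ #{a | h a < K} ≤ L ∧ (x p).trace = t) :
    ∃ (d : ℕ) (x : κ → Matrix (Fin d) (Fin d) ℝ), IsSignedSystem σ ν x ∧ (x p).trace = t := by
  refine exists_isSignedSystem_of_forall_isApprox_of_dim_le (L := L) fun ε hε => ?_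
  obtain ⟨s, hs⟩ := exists_nat_ge (max 1 (4 * C * (L + 1) ^ 2 / ε))
  obtain ⟨hs1, hsε⟩ := max_le_iff.1 hs
  obtain ⟨γ, _, _, T, x, h, hx, hh, hL, rfl⟩ := hmodel s (by exact_mod_cast hs1)
  obtain ⟨d, hd, y, hy, htrace⟩ := hx.exists_isApproxSignedSystem hσ hν hC hs1 hh hK hL
  exact ⟨d, hd, y, hy.mono ((div_le_comm₀ hε (by linarith)).1 hsε), htrace⟩

end LowEnergyTruncation

section SpinModel

open Finset

/-- The operators of a fuzzy sphere of spin `s`, scaled so that `X` and `δ` behave like position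
and derivative of a harmonic oscillator near each of the two poles: `A` is the height, `χ` exchanges
the poles, `p` is the parity, and the oscillator Hamiltonian `X² - δ²` is diagonal with
eigenvalues `η`. -/
structure IsSpinModel {ι : Type*} [Fintype ι] [DecidableEq ι] (s : ℝ) (A X δ χ p : Matrix ι ι ℝ)
    (η : ι → ℝ) : Prop where
  star_height : star A = A
  star_position : star X = X
  star_momentum : star δ = -δ
  star_swap : star χ = χ
  star_parity : star p = p
  swap_mul_self : χ * χ = 1
  parity_mul_self : p * p = 1
  trace_parity : p.trace = 1
  momentum_position : δ * X - X * δ = A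
  height_position : s • (A * X - X * A) = δ
  height_momentum : s • (A * δ - δ * A) = X
  swap_position : χ * X = X * χ
  swap_momentum : χ * δ = -(δ * χ)
  swap_height : χ * A = -(A * χ)
  parity_position : p * X = -(X * p)
  parity_momentum : p * δ = -(δ * p)
  parity_height : p * A = A * p
  parity_swap : p * χ = χ * p
  energy_eq : X * X - δ * δ = diagonal η
  height_defect : s • (1 - A * A) = diagonal η - 1
  one_le_energy (i : ι) : 1 ≤ η i
  card_energy_lt (K : ℕ) : #{i | η i < K} ≤ 2 * K

variable (s : ℕ)

/-- The raising operator of the spin-`s` representation of `su(2)`. -/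
noncomputable def spinRaising : Matrix (Fin (2 * s + 1)) (Fin (2 * s + 1)) ℝ :=
  of fun i j => if (i : ℕ) + 1 = j then √((i + 1 : ℝ) * (2 * s - i)) else 0

/-- The height function on the fuzzy sphere, with values in `[-1, 1]`. -/
noncomputable def spinHeight : Matrix (Fin (2 * s + 1)) (Fin (2 * s + 1)) ℝ :=
  diagonal fun i => ((s : ℝ) - i) / s

/-- The permutation matrix exchanging the two poles of the fuzzy sphere. -/
def spinSwap : Matrix (Fin (2 * s + 1)) (Fin (2 * s + 1)) ℝ :=
  of fun i j => if i.rev = j then 1 else 0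

/-- The parity operator of the fuzzy sphere. -/
def spinParity : Matrix (Fin (2 * s + 1)) (Fin (2 * s + 1)) ℝ :=
  diagonal fun i => (-1) ^ (i : ℕ)

/-- The eigenvalues of the oscillator Hamiltonian of the fuzzy sphere. -/
noncomputable def spinEnergy (i : Fin (2 * s + 1)) : ℝ := 1 + 2 * i - (i : ℝ) ^ 2 / s

variable {s}

lemma spinRaising_apply_of_ne {i j : Fin (2 * s + 1)} (h : (i : ℕ) + 1 ≠ j) :
    spinRaising s i j = 0 := if_neg h

lemma cast_fin_le_two_mul (i : Fin (2 * s + 1)) : (i : ℝ) ≤ 2 * s := by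
  exact_mod_cast Nat.lt_succ_iff.1 i.isLt

lemma cast_rev (i : Fin (2 * s + 1)) : (i.rev : ℝ) = 2 * s - i := by
  rw [Fin.val_rev, Nat.cast_sub i.isLt]
  push_cast
  ring

lemma spinRaising_mul_self_apply {i j : Fin (2 * s + 1)} (h : (i : ℕ) + 1 = j) :
    spinRaising s i j * spinRaising s i j = (i + 1) * (2 * s - i) := by
  rw [spinRaising, of_apply, if_pos h, Real.mul_self_sqrt]
  exact mul_nonneg (by positivity) (sub_nonneg.2 (cast_fin_le_two_mul i))

lemma spinRaising_mul_star :
    spinRaising s * star (spinRaising s) =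
      diagonal fun i : Fin (2 * s + 1) => ((i : ℝ) + 1) * (2 * s - i) := by
  ext i j
  simp only [mul_apply, Matrix.star_apply, star_trivial]
  rcases eq_or_ne i j with rfl | hij
  · rw [diagonal_apply_eq]
    rcases (Nat.lt_succ_iff.1 i.isLt).lt_or_eq with hlt | htop
    · rw [sum_eq_single (⟨i + 1, by omega⟩ : Fin (2 * s + 1)), spinRaising_mul_self_apply rfl]
      · intro k _ hk
        rw [spinRaising_apply_of_ne fun h => hk (Fin.ext h.symm), zero_mul]
      · simp
    · rw [sum_eq_zero fun k _ => by rw [spinRaising_apply_of_ne (by omega), zero_mul], htop]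
      push_cast
      ring
  · rw [diagonal_apply_ne _ hij]
    refine sum_eq_zero fun k _ => mul_eq_zero.2 ?_
    by_cases h : (i : ℕ) + 1 = k
    · exact .inr (spinRaising_apply_of_ne fun h' => hij (Fin.ext (by omega)))
    · exact .inl (spinRaising_apply_of_ne h)

lemma star_spinRaising_mul :
    star (spinRaising s) * spinRaising s =
      diagonal fun i : Fin (2 * s + 1) => (i : ℝ) * (2 * s + 1 - i) := by
  ext i j
  simp only [mul_apply, Matrix.star_apply, star_trivial]
  rcases eq_or_ne i j with rfl | hij
  · rw [diagonal_apply_eq]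
    rcases Nat.eq_zero_or_pos i with hbot | hpos
    · rw [sum_eq_zero fun k _ => by rw [spinRaising_apply_of_ne (by omega), zero_mul], hbot]
      simp
    · rw [sum_eq_single (⟨i - 1, by omega⟩ : Fin (2 * s + 1)),
        spinRaising_mul_self_apply (Nat.sub_add_cancel hpos), Nat.cast_pred hpos]
      · ring
      · intro k _ hk
        rw [spinRaising_apply_of_ne fun h => hk (Fin.ext (by simp only; omega)), zero_mul]
      · simp
  · rw [diagonal_apply_ne _ hij]
    refine sum_eq_zero fun k _ => mul_eq_zero.2 ?_
    by_cases h : (k : ℕ) + 1 = i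
    · exact .inr (spinRaising_apply_of_ne fun h' => hij (Fin.ext (by omega)))
    · exact .inl (spinRaising_apply_of_ne h)

lemma spinHeight_commutator_spinRaising (hs : 1 ≤ s) :
    (s : ℝ) • (spinHeight s * spinRaising s - spinRaising s * spinHeight s) = spinRaising s := by
  have hs' : (s : ℝ) ≠ 0 := by positivity
  ext i j
  simp only [spinHeight, Matrix.smul_apply, Matrix.sub_apply, diagonal_mul, mul_diagonal,
    smul_eq_mul]
  by_cases h : (i : ℕ) + 1 = j
  · rw [← h]
    push_cast
    field_simp
    ring
  · simp [spinRaising_apply_of_ne h]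

lemma spinSwap_mul_apply (M : Matrix (Fin (2 * s + 1)) (Fin (2 * s + 1)) ℝ) (i j) :
    (spinSwap s * M) i j = M i.rev j := by
  simp [mul_apply, spinSwap]

lemma mul_spinSwap_apply (M : Matrix (Fin (2 * s + 1)) (Fin (2 * s + 1)) ℝ) (i j) :
    (M * spinSwap s) i j = M i j.rev := by
  simp [mul_apply, spinSwap, Fin.rev_eq_iff]

lemma spinSwap_mul_diagonal (v : Fin (2 * s + 1) → ℝ) :
    spinSwap s * diagonal v = diagonal (fun i => v i.rev) * spinSwap s := by
  ext i j
  rw [spinSwap_mul_apply, mul_spinSwap_apply]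
  simp only [diagonal_apply, ← Fin.rev_eq_iff]

lemma spinSwap_mul_spinRaising :
    spinSwap s * spinRaising s = star (spinRaising s) * spinSwap s := by
  ext i j
  rw [spinSwap_mul_apply, mul_spinSwap_apply, Matrix.star_apply, star_trivial]
  by_cases h : (i.rev : ℕ) + 1 = j
  · have h' : (j.rev : ℕ) + 1 = i := by rw [Fin.val_rev] at h ⊢; omega
    have hj : (i.rev : ℝ) + 1 = j := by exact_mod_cast h
    rw [cast_rev] at hj
    simp only [spinRaising, of_apply, if_pos h, if_pos h', cast_rev, ← hj]
    congr 1
    ring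
  · rw [spinRaising_apply_of_ne h, spinRaising_apply_of_ne fun h' => h ?_]
    rw [Fin.val_rev] at h' ⊢
    omega

lemma spinParity_mul_spinRaising :
    spinParity s * spinRaising s = -(spinRaising s * spinParity s) := by
  ext i j
  simp only [spinParity, Matrix.neg_apply, diagonal_mul, mul_diagonal]
  by_cases h : (i : ℕ) + 1 = j
  · rw [← h, pow_succ]
    ring
  · simp [spinRaising_apply_of_ne h]

lemma one_add_le_spinEnergy (hs : 1 ≤ s) {i : Fin (2 * s + 1)} {k : ℕ} (hk : k ≤ i)
    (hk' : k ≤ i.rev) : (1 + k : ℝ) ≤ spinEnergy s i := by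
  have hs' : (0 : ℝ) < s := by positivity
  have h1 : (k : ℝ) ≤ i := by exact_mod_cast hk
  have h2 : (k : ℝ) + i ≤ 2 * s := by
    rw [Fin.val_rev] at hk'
    exact_mod_cast (by omega : k + i ≤ 2 * s)
  have : (i : ℝ) ^ 2 / s ≤ 2 * i - k := by
    rw [div_le_iff₀ hs']
    nlinarith [mul_nonneg (sub_nonneg.2 h1) (sub_nonneg.2 h2), Nat.cast_nonneg (α := ℝ) k]
  rw [spinEnergy]
  linarith

lemma card_spinEnergy_lt_le (hs : 1 ≤ s) (K : ℕ) : #{i | spinEnergy s i < K} ≤ 2 * K := by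
  let low : Finset (Fin (2 * s + 1)) := {i | (i : ℕ) < K}
  have hlow : #low ≤ K := by
    rw [← card_range K]
    exact card_le_card_of_injOn Fin.val (by simp [low, Set.MapsTo]) Fin.val_injective.injOn
  have hsub : ({i | spinEnergy s i < K} : Finset (Fin (2 * s + 1))) ⊆ low ∪ low.image Fin.rev := by
    intro i hi
    rw [mem_filter] at hi
    by_contra hnot
    simp only [low, mem_union, mem_image, mem_filter, mem_univ, true_and, not_or, not_lt] at hnot
    have hrev : K ≤ i.rev := by
      by_contra! h
      exact hnot.2 ⟨i.rev, h, Fin.rev_rev i⟩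
    linarith [one_add_le_spinEnergy hs hnot.1 hrev]
  calc _ ≤ #(low ∪ low.image Fin.rev) := card_le_card hsub
    _ ≤ #low + #(low.image Fin.rev) := card_union_le _ _
    _ ≤ 2 * K := by linarith [(card_image_le (s := low) (f := Fin.rev))]

variable (s)

/-- The position operator of the fuzzy sphere. -/
noncomputable def spinPosition : Matrix (Fin (2 * s + 1)) (Fin (2 * s + 1)) ℝ :=
  (2 * √s)⁻¹ • (spinRaising s + star (spinRaising s))

/-- The skew-symmetric momentum operator of the fuzzy sphere. -/
noncomputable def spinMomentum : Matrix (Fin (2 * s + 1)) (Fin (2 * s + 1)) ℝ :=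
  (2 * √s)⁻¹ • (spinRaising s - star (spinRaising s))

variable {s}

lemma star_spinHeight : star (spinHeight s) = spinHeight s := by
  simp [spinHeight, star_eq_conjTranspose]

lemma star_spinSwap : star (spinSwap s) = spinSwap s := by
  ext i j
  simp [spinSwap, Fin.rev_eq_iff, eq_comm (a := j)]

lemma star_spinParity : star (spinParity s) = spinParity s := by
  simp [spinParity, star_eq_conjTranspose]

lemma spinSwap_mul_self : spinSwap s * spinSwap s = 1 := by
  ext i j
  rw [spinSwap_mul_apply]
  simp [spinSwap, one_apply]

lemma spinSwap_mul_spinHeight : spinSwap s * spinHeight s = -(spinHeight s * spinSwap s) := by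
  rw [spinHeight, spinSwap_mul_diagonal, ← neg_mul, diagonal_neg]
  congr 2
  ext i
  rw [cast_rev]
  ring

lemma spinParity_mul_spinSwap : spinParity s * spinSwap s = spinSwap s * spinParity s := by
  rw [spinParity, spinSwap_mul_diagonal]
  congr 2
  ext i
  have hi : (i.rev : ℕ) + i = 2 * s := by rw [Fin.val_rev]; omega
  have hpar : Even (i : ℕ) ↔ Even (i.rev : ℕ) := by
    rw [iff_comm, ← Nat.even_add, hi]
    exact even_two_mul s
  exact neg_one_pow_congr hpar

lemma trace_spinParity : (spinParity s).trace = 1 := by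
  rw [spinParity, trace_diagonal, Fin.sum_univ_eq_sum_range (fun i => (-1 : ℝ) ^ i),
    neg_one_geom_sum, if_neg (by simp)]

lemma inv_two_mul_sqrt_mul_self : (2 * √(s : ℝ))⁻¹ * (2 * √(s : ℝ))⁻¹ = (4 * s : ℝ)⁻¹ := by
  rw [← mul_inv, mul_mul_mul_comm, Real.mul_self_sqrt s.cast_nonneg]
  norm_num

lemma spinMomentum_commutator_spinPosition (hs : 1 ≤ s) :
    spinMomentum s * spinPosition s - spinPosition s * spinMomentum s = spinHeight s := by
  have hs' : (s : ℝ) ≠ 0 := by positivity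
  set E := spinRaising s with hE
  have hcomm : (E - star E) * (E + star E) - (E + star E) * (E - star E) =
      (2 : ℝ) • (E * star E - star E * E) := by rw [two_smul]; noncomm_ring
  rw [spinMomentum, spinPosition, smul_mul_smul_comm, smul_mul_smul_comm, ← smul_sub, hcomm,
    inv_two_mul_sqrt_mul_self, hE, spinRaising_mul_star, star_spinRaising_mul, diagonal_sub,
    ← diagonal_smul, ← diagonal_smul, spinHeight]
  congr 1
  ext i
  simp only [Pi.smul_apply, smul_eq_mul]
  field_simp
  ring

lemma spinPosition_sq_sub_spinMomentum_sq (hs : 1 ≤ s) :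
    spinPosition s * spinPosition s - spinMomentum s * spinMomentum s =
      diagonal (spinEnergy s) := by
  have hs' : (s : ℝ) ≠ 0 := by positivity
  set E := spinRaising s with hE
  have hdiff : (E + star E) * (E + star E) - (E - star E) * (E - star E) =
      (2 : ℝ) • (E * star E + star E * E) := by rw [two_smul]; noncomm_ring
  rw [spinMomentum, spinPosition, smul_mul_smul_comm, smul_mul_smul_comm, ← smul_sub, hdiff,
    inv_two_mul_sqrt_mul_self, hE, spinRaising_mul_star, star_spinRaising_mul, diagonal_add,
    ← diagonal_smul, ← diagonal_smul]
  congr 1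
  ext i
  simp only [Pi.smul_apply, smul_eq_mul, spinEnergy]
  field_simp
  ring

lemma spinHeight_commutator_star_spinRaising (hs : 1 ≤ s) :
    (s : ℝ) • (spinHeight s * star (spinRaising s) - star (spinRaising s) * spinHeight s) =
      -star (spinRaising s) := by
  conv_rhs => rw [← spinHeight_commutator_spinRaising hs]
  rw [star_smul, star_sub, star_mul, star_mul, star_spinHeight,
    star_trivial (s : ℝ), ← smul_neg, neg_sub]

lemma spinHeight_commutator_spinPosition (hs : 1 ≤ s) :
    (s : ℝ) • (spinHeight s * spinPosition s - spinPosition s * spinHeight s) =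
      spinMomentum s := by
  rw [spinMomentum, sub_eq_add_neg (spinRaising s), ← spinHeight_commutator_star_spinRaising hs,
    spinPosition, mul_smul_comm, smul_mul_assoc, mul_add, add_mul]
  nth_rewrite 5 [← spinHeight_commutator_spinRaising hs]
  module

lemma spinHeight_commutator_spinMomentum (hs : 1 ≤ s) :
    (s : ℝ) • (spinHeight s * spinMomentum s - spinMomentum s * spinHeight s) =
      spinPosition s := by
  rw [spinPosition, ← sub_neg_eq_add (spinRaising s), ← spinHeight_commutator_star_spinRaising hs,
    spinMomentum, mul_smul_comm, smul_mul_assoc, mul_sub, sub_mul]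
  nth_rewrite 5 [← spinHeight_commutator_spinRaising hs]
  module

lemma spinSwap_mul_star_spinRaising :
    spinSwap s * star (spinRaising s) = spinRaising s * spinSwap s := by
  have := congrArg (spinSwap s * · * spinSwap s) (spinSwap_mul_spinRaising (s := s))
  simpa only [← mul_assoc, spinSwap_mul_self, one_mul, mul_assoc _ (spinSwap s) (spinSwap s),
    mul_one] using this.symm

lemma spinParity_mul_star_spinRaising :
    spinParity s * star (spinRaising s) = -(star (spinRaising s) * spinParity s) := by
  have := congrArg star (spinParity_mul_spinRaising (s := s))
  rw [star_neg, star_mul, star_mul, star_spinParity] at this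
  rw [this, neg_neg]

lemma spinHeight_defect (hs : 1 ≤ s) :
    (s : ℝ) • (1 - spinHeight s * spinHeight s) = diagonal (spinEnergy s) - 1 := by
  have hs' : (s : ℝ) ≠ 0 := by positivity
  rw [spinHeight, diagonal_mul_diagonal, ← diagonal_one, diagonal_sub, diagonal_sub,
    ← diagonal_smul]
  congr 1
  ext i
  simp only [Pi.smul_apply, smul_eq_mul, spinEnergy]
  field_simp
  ring

theorem isSpinModel (hs : 1 ≤ s) :
    IsSpinModel s (spinHeight s) (spinPosition s) (spinMomentum s) (spinSwap s) (spinParity s)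
      (spinEnergy s) where
  star_height := star_spinHeight
  star_position := by
    rw [spinPosition, star_smul, star_add, star_star, star_trivial (2 * √(s : ℝ))⁻¹,
      add_comm (star _)]
  star_momentum := by
    rw [spinMomentum, star_smul, star_sub, star_star, star_trivial (2 * √(s : ℝ))⁻¹, ← smul_neg,
      neg_sub]
  star_swap := star_spinSwap
  star_parity := star_spinParity
  swap_mul_self := spinSwap_mul_self
  parity_mul_self := by simp [spinParity, ← mul_pow]
  trace_parity := trace_spinParity
  momentum_position := spinMomentum_commutator_spinPosition hs
  height_position := spinHeight_commutator_spinPosition hs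
  height_momentum := spinHeight_commutator_spinMomentum hs
  swap_position := by
    rw [spinPosition, mul_smul_comm, smul_mul_assoc, mul_add, add_mul, spinSwap_mul_spinRaising,
      spinSwap_mul_star_spinRaising, add_comm (star _ * _)]
  swap_momentum := by
    rw [spinMomentum, mul_smul_comm, smul_mul_assoc, mul_sub, sub_mul, spinSwap_mul_spinRaising,
      spinSwap_mul_star_spinRaising, ← smul_neg, neg_sub]
  swap_height := spinSwap_mul_spinHeight
  parity_position := by
    rw [spinPosition, mul_smul_comm, smul_mul_assoc, mul_add, add_mul, spinParity_mul_spinRaising,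
      spinParity_mul_star_spinRaising, ← smul_neg, neg_add]
  parity_momentum := by
    rw [spinMomentum, mul_smul_comm, smul_mul_assoc, mul_sub, sub_mul, spinParity_mul_spinRaising,
      spinParity_mul_star_spinRaising, ← smul_neg, neg_sub']
  parity_height := by simp [spinParity, spinHeight, mul_comm]
  parity_swap := spinParity_mul_spinSwap
  energy_eq := spinPosition_sq_sub_spinMomentum_sq hs
  height_defect := spinHeight_defect hs
  one_le_energy i := by simpa using one_add_le_spinEnergy hs (Nat.zero_le i) (Nat.zero_le _)
  card_energy_lt := card_spinEnergy_lt_le hs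

end SpinModel

section Kronecker

open scoped Kronecker

variable {l m n p κ R : Type*} [CommRing R]

lemma kronecker_mul_kronecker [Fintype m] [Fintype p] (A C : Matrix m m R) (B D : Matrix p p R) :
    (A ⊗ₖ B) * (C ⊗ₖ D) = (A * C) ⊗ₖ (B * D) := (mul_kronecker_mul A C B D).symm

lemma star_kronecker [StarRing R] (A : Matrix m m R) (B : Matrix p p R) :
    star (A ⊗ₖ B) = star A ⊗ₖ star B := conjTranspose_kronecker A B

lemma neg_kronecker (A : Matrix l m R) (B : Matrix n p R) : (-A) ⊗ₖ B = -(A ⊗ₖ B) := by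
  ext; simp

lemma kronecker_neg (A : Matrix l m R) (B : Matrix n p R) : A ⊗ₖ (-B) = -(A ⊗ₖ B) := by
  ext; simp

lemma sub_kronecker (A C : Matrix l m R) (B : Matrix n p R) :
    (A - C) ⊗ₖ B = A ⊗ₖ B - C ⊗ₖ B := by
  ext; simp [sub_mul]

lemma kronecker_sub (A : Matrix l m R) (B C : Matrix n p R) :
    A ⊗ₖ (B - C) = A ⊗ₖ B - A ⊗ₖ C := by
  ext; simp [mul_sub]

lemma kronecker_sum (A : Matrix l m R) (B : κ → Matrix n p R) (S : Finset κ) :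
    A ⊗ₖ (∑ i ∈ S, B i) = ∑ i ∈ S, A ⊗ₖ B i := by
  ext; simp [Matrix.sum_apply, Finset.mul_sum]

end Kronecker

section SpinLattice

open scoped Kronecker MatrixOrder
open Finset

lemma card_energy_add_lt {α ι : Type*} [Fintype α] [Fintype ι] {η₀ : ι → ℝ} {η : α → ℝ}
    {K a b : ℕ} (hη₀ : ∀ i, 0 ≤ η₀ i) (hη : ∀ a, 0 ≤ η a)
    (ha : #{i | η₀ i < K} ≤ a) (hb : #{i | η i < K} ≤ b) :
    #{i : ι × α | η₀ i.1 + η i.2 < K} ≤ a * b := by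
  have hsub : ({i : ι × α | η₀ i.1 + η i.2 < K} : Finset _) ⊆
      ({i | η₀ i < K} : Finset ι) ×ˢ ({i | η i < K} : Finset α) := fun i hi => by
    simp only [mem_filter, mem_univ, true_and, mem_product] at hi ⊢
    exact ⟨by linarith [hη i.2], by linarith [hη₀ i.1]⟩
  calc #{i : ι × α | η₀ i.1 + η i.2 < K}
      ≤ #{i | η₀ i < K} * #{i | η i < K} := (card_le_card hsub).trans_eq (card_product _ _)
    _ ≤ a * b := Nat.mul_le_mul ha hb

variable {n : ℕ} {α ι : Type*} [Fintype α] [DecidableEq α] [Fintype ι] [DecidableEq ι]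

/-- The relations between momenta `D`, positions `X` and heights `R` at different sites of a product
of `n` fuzzy spheres: momenta and heights are twisted by signs so as to anticommute among
themselves, and all other pairs commute. -/
structure HasSiteRelations (D X R : Fin n → Matrix α α ℝ) : Prop where
  momentum_momentum : Pairwise fun i j => D i * D j = -(D j * D i)
  height_height : Pairwise fun i j => R i * R j = -(R j * R i)
  momentum_position : Pairwise fun i j => D i * X j = X j * D i
  height_momentum : Pairwise fun i j => R i * D j = D j * R i
  height_position : Pairwise fun i j => R i * X j = X j * R i

/-- The relations of momenta `D`, positions `X` and heights `R` with the simultaneous exchange `Θ`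
of the poles of all spheres and with the parity `P`. -/
structure HasReflectionRelations (D X R : Fin n → Matrix α α ℝ) (Θ P : Matrix α α ℝ) : Prop where
  swap_momentum (i : Fin n) : Θ * D i = -(D i * Θ)
  swap_position (i : Fin n) : Θ * X i = X i * Θ
  swap_height (i : Fin n) : Θ * R i = -(R i * Θ)
  parity_momentum (i : Fin n) : P * D i = -(D i * P)
  parity_position (i : Fin n) : P * X i = -(X i * P)
  parity_height (i : Fin n) : P * R i = R i * P
  parity_swap : P * Θ = Θ * P

/-- The relations between the operators of `n` fuzzy spheres that hold for every spin. -/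
structure IsSignedLattice (D X R : Fin n → Matrix α α ℝ) (Θ P : Matrix α α ℝ) : Prop
    extends HasSiteRelations D X R, HasReflectionRelations D X R Θ P where
  star_momentum (i : Fin n) : star (D i) = D i
  star_position (i : Fin n) : star (X i) = X i
  star_height (i : Fin n) : star (R i) = -R i
  star_swap : star Θ = Θ
  star_parity : star P = P
  swap_mul_self : Θ * Θ = 1
  parity_mul_self : P * P = 1

/-- The relations between momentum, position and height of each single sphere of spin `s`. -/
structure HasOscillatorRelations (s : ℝ) (D X R : Fin n → Matrix α α ℝ) : Prop where
  commutator_sq (i : Fin n) :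
    (D i * X i - X i * D i) * (D i * X i - X i * D i) = R i * R i
  height_momentum_sq (i : Fin n) :
    (s • (R i * D i - D i * R i)) * (s • (R i * D i - D i * R i)) = X i * X i
  height_position_sq (i : Fin n) :
    (s • (R i * X i - X i * R i)) * (s • (R i * X i - X i * R i)) = D i * D i
  height_defect (i : Fin n) : s • (R i * R i + 1) = X i * X i + D i * D i - 1
  one_le_oscillator (i : Fin n) : 1 ≤ X i * X i + D i * D i

/-- A signed lattice whose sites are fuzzy spheres of spin `s`; `η` is the diagonal of the total
oscillator Hamiltonian. -/
structure IsSpinLattice (s : ℝ) (D X R : Fin n → Matrix α α ℝ) (Θ P : Matrix α α ℝ)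
    (η : α → ℝ) : Prop extends IsSignedLattice D X R Θ P, HasOscillatorRelations s D X R where
  trace_parity : P.trace = 1
  exists_diagonalization : ∃ U ∈ unitary (Matrix α α ℝ), ∃ ξ : Fin n → α → ℝ,
    ∀ i, X i = star U * diagonal (ξ i) * U
  energy_eq : ∑ i, (X i * X i + D i * D i) = diagonal η
  energy_nonneg (a : α) : 0 ≤ η a
  card_energy_lt (K : ℕ) : #{a | η a < K} ≤ (2 * K) ^ n

lemma pairwise_fin_succ {Q : Fin (n + 1) → Fin (n + 1) → Prop} (hzero : ∀ j, Q 0 (Fin.succ j))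
    (hzero' : ∀ i, Q (Fin.succ i) 0) (hsucc : Pairwise fun i j => Q (Fin.succ i) (Fin.succ j)) :
    Pairwise Q :=
  Fin.cases (Fin.cases (fun h => absurd rfl h) fun j _ => hzero j) fun i =>
    Fin.cases (fun _ => hzero' i) fun _ hij => hsucc fun h => hij (congrArg _ h)

lemma IsSpinModel.swap_momentum_swap {s : ℝ} {A x δ χ p : Matrix ι ι ℝ} {η : ι → ℝ}
    (h : IsSpinModel s A x δ χ p η) : χ * δ * χ = -δ := by
  rw [h.swap_momentum, neg_mul, mul_assoc, h.swap_mul_self, mul_one]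

lemma IsSpinModel.swap_height_swap {s : ℝ} {A x δ χ p : Matrix ι ι ℝ} {η : ι → ℝ}
    (h : IsSpinModel s A x δ χ p η) : χ * A * χ = -A := by
  rw [h.swap_height, neg_mul, mul_assoc, h.swap_mul_self, mul_one]

lemma IsSpinModel.swap_mul_momentum_mul_self {s : ℝ} {A x δ χ p : Matrix ι ι ℝ} {η : ι → ℝ}
    (h : IsSpinModel s A x δ χ p η) : χ * δ * (χ * δ) = -(δ * δ) := by
  rw [← mul_assoc, h.swap_momentum_swap, neg_mul]

lemma IsSpinModel.height_mul_swap_mul_self {s : ℝ} {A x δ χ p : Matrix ι ι ℝ} {η : ι → ℝ}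
    (h : IsSpinModel s A x δ χ p η) : A * χ * (A * χ) = -(A * A) := by
  rw [mul_assoc, ← mul_assoc χ, h.swap_height_swap, mul_neg]

section Succ

variable {s : ℝ} {A x δ χ p : Matrix ι ι ℝ} {η₀ : ι → ℝ} {D X R : Fin n → Matrix α α ℝ}
  {Θ P : Matrix α α ℝ} {η : α → ℝ}

theorem IsSignedLattice.hasSiteRelations_succ (hA : IsSpinModel s A x δ χ p η₀)
    (h : IsSignedLattice D X R Θ P) :
    HasSiteRelations (n := n + 1) (Fin.cons ((χ * δ) ⊗ₖ Θ) fun i => 1 ⊗ₖ D i)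
      (Fin.cons (x ⊗ₖ 1) fun i => 1 ⊗ₖ X i) (Fin.cons ((A * χ) ⊗ₖ 1) fun i => χ ⊗ₖ R i) where
  momentum_momentum := by
    refine pairwise_fin_succ (fun j => ?_) (fun i => ?_) fun i j hij => ?_ <;>
      simp only [Fin.cons_zero, Fin.cons_succ, kronecker_mul_kronecker, one_mul, mul_one]
    · rw [h.swap_momentum, kronecker_neg]
    · rw [h.swap_momentum, kronecker_neg, neg_neg]
    · rw [h.momentum_momentum hij, kronecker_neg]
  height_height := by
    refine pairwise_fin_succ (fun j => ?_) (fun i => ?_) fun i j hij => ?_ <;>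
      simp only [Fin.cons_zero, Fin.cons_succ, kronecker_mul_kronecker, one_mul, mul_one]
    · rw [← mul_assoc, hA.swap_height_swap, mul_assoc, hA.swap_mul_self, neg_kronecker, neg_neg,
        mul_one]
    · rw [← mul_assoc, hA.swap_height_swap, mul_assoc, hA.swap_mul_self, neg_kronecker, mul_one]
    · rw [h.height_height hij, kronecker_neg]
  momentum_position := by
    refine pairwise_fin_succ (fun j => ?_) (fun i => ?_) fun i j hij => ?_ <;>
      simp only [Fin.cons_zero, Fin.cons_succ, kronecker_mul_kronecker, one_mul, mul_one]
    · rw [h.swap_position]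
    · rw [h.momentum_position hij]
  height_momentum := by
    refine pairwise_fin_succ (fun j => ?_) (fun i => ?_) fun i j hij => ?_ <;>
      simp only [Fin.cons_zero, Fin.cons_succ, kronecker_mul_kronecker, one_mul, mul_one]
    · rw [← mul_assoc, hA.swap_momentum_swap, hA.swap_mul_self, one_mul, h.swap_height,
        neg_kronecker, kronecker_neg, neg_neg]
    · rw [h.height_momentum hij]
  height_position := by
    refine pairwise_fin_succ (fun j => ?_) (fun i => ?_) fun i j hij => ?_ <;>
      simp only [Fin.cons_zero, Fin.cons_succ, kronecker_mul_kronecker, one_mul, mul_one]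
    · rw [hA.swap_position]
    · rw [h.height_position hij]

theorem IsSignedLattice.hasReflectionRelations_succ (hA : IsSpinModel s A x δ χ p η₀)
    (h : IsSignedLattice D X R Θ P) :
    HasReflectionRelations (n := n + 1) (Fin.cons ((χ * δ) ⊗ₖ Θ) fun i => 1 ⊗ₖ D i)
      (Fin.cons (x ⊗ₖ 1) fun i => 1 ⊗ₖ X i) (Fin.cons ((A * χ) ⊗ₖ 1) fun i => χ ⊗ₖ R i)
      (χ ⊗ₖ Θ) (p ⊗ₖ P) where
  swap_momentum := by
    refine Fin.cases ?_ fun i => ?_ <;>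
      simp only [Fin.cons_zero, Fin.cons_succ, kronecker_mul_kronecker, one_mul, mul_one]
    · rw [hA.swap_momentum_swap, ← mul_assoc, hA.swap_mul_self, one_mul, neg_kronecker, neg_neg]
    · rw [h.swap_momentum, kronecker_neg]
  swap_position := by
    refine Fin.cases ?_ fun i => ?_ <;>
      simp only [Fin.cons_zero, Fin.cons_succ, kronecker_mul_kronecker, one_mul, mul_one]
    · rw [hA.swap_position]
    · rw [h.swap_position]
  swap_height := by
    refine Fin.cases ?_ fun i => ?_ <;>
      simp only [Fin.cons_zero, Fin.cons_succ, kronecker_mul_kronecker, one_mul, mul_one]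
    · rw [← mul_assoc, hA.swap_height_swap, mul_assoc, hA.swap_mul_self, mul_one, neg_kronecker]
    · rw [h.swap_height, kronecker_neg]
  parity_momentum := by
    refine Fin.cases ?_ fun i => ?_ <;>
      simp only [Fin.cons_zero, Fin.cons_succ, kronecker_mul_kronecker, one_mul, mul_one]
    · rw [← mul_assoc, hA.parity_swap, mul_assoc, hA.parity_momentum, mul_neg, neg_kronecker,
        h.parity_swap, mul_assoc]
    · rw [h.parity_momentum, kronecker_neg]
  parity_position := by
    refine Fin.cases ?_ fun i => ?_ <;>
      simp only [Fin.cons_zero, Fin.cons_succ, kronecker_mul_kronecker, one_mul, mul_one]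
    · rw [hA.parity_position, neg_kronecker]
    · rw [h.parity_position, kronecker_neg]
  parity_height := by
    refine Fin.cases ?_ fun i => ?_ <;>
      simp only [Fin.cons_zero, Fin.cons_succ, kronecker_mul_kronecker, one_mul, mul_one]
    · rw [← mul_assoc, hA.parity_height, mul_assoc, hA.parity_swap, mul_assoc]
    · rw [h.parity_height, hA.parity_swap]
  parity_swap := by
    rw [kronecker_mul_kronecker, kronecker_mul_kronecker, hA.parity_swap, h.parity_swap]

theorem IsSignedLattice.succ (hA : IsSpinModel s A x δ χ p η₀) (h : IsSignedLattice D X R Θ P) :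
    IsSignedLattice (n := n + 1) (Fin.cons ((χ * δ) ⊗ₖ Θ) fun i => 1 ⊗ₖ D i)
      (Fin.cons (x ⊗ₖ 1) fun i => 1 ⊗ₖ X i) (Fin.cons ((A * χ) ⊗ₖ 1) fun i => χ ⊗ₖ R i)
      (χ ⊗ₖ Θ) (p ⊗ₖ P) where
  toHasSiteRelations := h.hasSiteRelations_succ hA
  toHasReflectionRelations := h.hasReflectionRelations_succ hA
  star_momentum := by
    refine Fin.cases ?_ fun i => ?_ <;> simp only [Fin.cons_zero, Fin.cons_succ, star_kronecker]
    · rw [star_mul, hA.star_swap, hA.star_momentum, h.star_swap, neg_mul, ← hA.swap_momentum]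
    · rw [h.star_momentum, star_one]
  star_position := by
    refine Fin.cases ?_ fun i => ?_ <;> simp only [Fin.cons_zero, Fin.cons_succ, star_kronecker]
    · rw [hA.star_position, star_one]
    · rw [h.star_position, star_one]
  star_height := by
    refine Fin.cases ?_ fun i => ?_ <;> simp only [Fin.cons_zero, Fin.cons_succ, star_kronecker]
    · rw [star_mul, hA.star_swap, hA.star_height, hA.swap_height, neg_kronecker, star_one]
    · rw [hA.star_swap, h.star_height, kronecker_neg]
  star_swap := by rw [star_kronecker, hA.star_swap, h.star_swap]
  star_parity := by rw [star_kronecker, hA.star_parity, h.star_parity]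
  swap_mul_self := by
    rw [kronecker_mul_kronecker, hA.swap_mul_self, h.swap_mul_self, one_kronecker_one]
  parity_mul_self := by
    rw [kronecker_mul_kronecker, hA.parity_mul_self, h.parity_mul_self, one_kronecker_one]

theorem exists_diagonalization_succ (hx : star x = x)
    (hX : ∃ U ∈ unitary (Matrix α α ℝ), ∃ ξ : Fin n → α → ℝ,
      ∀ i, X i = star U * diagonal (ξ i) * U) :
    ∃ U ∈ unitary (Matrix (ι × α) (ι × α) ℝ), ∃ ξ : Fin (n + 1) → ι × α → ℝ,
      ∀ i, (Fin.cons (x ⊗ₖ 1) fun i => 1 ⊗ₖ X i : Fin (n + 1) → Matrix (ι × α) (ι × α) ℝ) i =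
        star U * diagonal (ξ i) * U := by
  obtain ⟨U, hU, ξ, hξ⟩ := hX
  obtain ⟨V, hV, ζ, hζ⟩ : ∃ V ∈ unitary (Matrix ι ι ℝ), ∃ ζ : ι → ℝ,
      x = star V * diagonal ζ * V := by
    have hxH : x.IsHermitian := hx
    refine ⟨star hxH.eigenvectorUnitary, (star hxH.eigenvectorUnitary).2, hxH.eigenvalues, ?_⟩
    simpa [Unitary.conjStarAlgAut_apply] using hxH.spectral_theorem
  refine ⟨V ⊗ₖ U, kronecker_mem_unitary hV hU, Fin.cons (fun a => ζ a.1) fun i a => ξ i a.2,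
    Fin.cases ?_ fun i => ?_⟩ <;> simp only [Fin.cons_zero, Fin.cons_succ]
  · have hdiag : diagonal (fun a : ι × α => ζ a.1) = diagonal ζ ⊗ₖ 1 := by
      simp [← diagonal_one, diagonal_kronecker_diagonal]
    rw [hdiag, star_kronecker, kronecker_mul_kronecker, kronecker_mul_kronecker, ← hζ, mul_one,
      Unitary.star_mul_self_of_mem hU]
  · have hdiag : diagonal (fun a : ι × α => ξ i a.2) = 1 ⊗ₖ diagonal (ξ i) := by
      simp [← diagonal_one, diagonal_kronecker_diagonal]
    rw [hdiag, star_kronecker, kronecker_mul_kronecker, kronecker_mul_kronecker, ← hξ, mul_one,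
      Unitary.star_mul_self_of_mem hV]

lemma IsSpinModel.swap_momentum_commutator (hA : IsSpinModel s A x δ χ p η₀) :
    χ * δ * x - x * (χ * δ) = χ * A := by
  rw [← mul_assoc x, ← hA.swap_position, ← hA.momentum_position]
  noncomm_ring

lemma IsSpinModel.height_swap_momentum_commutator (hA : IsSpinModel s A x δ χ p η₀) :
    s • (A * χ * (χ * δ) - χ * δ * (A * χ)) = x := by
  have hcancel : A * χ * (χ * δ) - χ * δ * (A * χ) = A * δ - δ * A := by
    rw [← mul_assoc, mul_assoc A, hA.swap_mul_self, mul_one, hA.swap_momentum, neg_mul, mul_assoc,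
      ← mul_assoc χ, hA.swap_height_swap, mul_neg, neg_neg]
  rw [hcancel, hA.height_momentum]

lemma IsSpinModel.height_swap_position_commutator (hA : IsSpinModel s A x δ χ p η₀) :
    s • (A * χ * x - x * (A * χ)) = -(χ * δ) := by
  have hfactor : A * χ * x - x * (A * χ) = (A * x - x * A) * χ := by
    rw [mul_assoc, hA.swap_position]
    noncomm_ring
  rw [hfactor, ← smul_mul_assoc, hA.height_position, hA.swap_momentum, neg_neg]

lemma IsSpinModel.oscillator_kronecker_one {β : Type*} [DecidableEq β]
    (hA : IsSpinModel s A x δ χ p η₀) :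
    (x * x) ⊗ₖ (1 : Matrix β β ℝ) + (χ * δ * (χ * δ)) ⊗ₖ 1 =
      diagonal fun a : ι × β => η₀ a.1 := by
  rw [hA.swap_mul_momentum_mul_self, ← add_kronecker, ← sub_eq_add_neg, hA.energy_eq]
  simp [← diagonal_one, diagonal_kronecker_diagonal]

theorem IsSpinLattice.hasOscillatorRelations_succ (hA : IsSpinModel s A x δ χ p η₀)
    (h : IsSpinLattice s D X R Θ P η) :
    HasOscillatorRelations (n := n + 1) s (Fin.cons ((χ * δ) ⊗ₖ Θ) fun i => 1 ⊗ₖ D i)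
      (Fin.cons (x ⊗ₖ 1) fun i => 1 ⊗ₖ X i) (Fin.cons ((A * χ) ⊗ₖ 1) fun i => χ ⊗ₖ R i) where
  commutator_sq := by
    refine Fin.cases ?_ fun i => ?_ <;>
      simp only [Fin.cons_zero, Fin.cons_succ, kronecker_mul_kronecker, one_mul, mul_one,
        ← sub_kronecker, ← kronecker_sub]
    · rw [hA.swap_momentum_commutator, h.swap_mul_self, hA.swap_height, neg_mul_neg]
    · rw [h.commutator_sq, hA.swap_mul_self]
  height_momentum_sq := by
    refine Fin.cases ?_ fun i => ?_ <;>
      simp only [Fin.cons_zero, Fin.cons_succ, kronecker_mul_kronecker, one_mul, mul_one,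
        ← sub_kronecker, ← kronecker_sub]
    · rw [← smul_kronecker, kronecker_mul_kronecker, hA.height_swap_momentum_commutator,
        h.swap_mul_self]
    · rw [← kronecker_smul, kronecker_mul_kronecker, h.height_momentum_sq, hA.swap_mul_self]
  height_position_sq := by
    refine Fin.cases ?_ fun i => ?_ <;>
      simp only [Fin.cons_zero, Fin.cons_succ, kronecker_mul_kronecker, one_mul, mul_one,
        ← sub_kronecker, ← kronecker_sub]
    · rw [← smul_kronecker, kronecker_mul_kronecker, hA.height_swap_position_commutator,
        h.swap_mul_self, neg_mul_neg, mul_one]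
    · rw [← kronecker_smul, kronecker_mul_kronecker, h.height_position_sq, hA.swap_mul_self]
  height_defect := by
    refine Fin.cases ?_ fun i => ?_ <;>
      simp only [Fin.cons_zero, Fin.cons_succ, kronecker_mul_kronecker, mul_one,
        ← one_kronecker_one (m := ι) (n := α), h.swap_mul_self, hA.swap_mul_self]
    · rw [hA.height_mul_swap_mul_self, hA.swap_mul_momentum_mul_self, ← add_kronecker,
        ← smul_kronecker, ← add_kronecker, ← sub_kronecker, ← sub_eq_add_neg, hA.energy_eq,
        ← hA.height_defect, neg_add_eq_sub]
    · rw [← kronecker_add, ← kronecker_smul, ← kronecker_add, ← kronecker_sub, h.height_defect]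
  one_le_oscillator := by
    refine Fin.cases ?_ fun i => ?_ <;>
      simp only [Fin.cons_zero, Fin.cons_succ, kronecker_mul_kronecker, mul_one,
        h.swap_mul_self]
    · rw [hA.oscillator_kronecker_one, Matrix.le_iff, ← diagonal_one, diagonal_sub]
      exact .diagonal fun a => sub_nonneg.2 (hA.one_le_energy a.1)
    · rw [← kronecker_add, Matrix.le_iff, ← one_kronecker_one, ← kronecker_sub]
      exact PosSemidef.one.kronecker (Matrix.le_iff.1 (h.one_le_oscillator i))

theorem IsSpinLattice.succ (hA : IsSpinModel s A x δ χ p η₀) (h : IsSpinLattice s D X R Θ P η) :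
    IsSpinLattice (n := n + 1) s (Fin.cons ((χ * δ) ⊗ₖ Θ) fun i => 1 ⊗ₖ D i)
      (Fin.cons (x ⊗ₖ 1) fun i => 1 ⊗ₖ X i) (Fin.cons ((A * χ) ⊗ₖ 1) fun i => χ ⊗ₖ R i)
      (χ ⊗ₖ Θ) (p ⊗ₖ P) fun a => η₀ a.1 + η a.2 where
  toIsSignedLattice := h.toIsSignedLattice.succ hA
  toHasOscillatorRelations := h.hasOscillatorRelations_succ hA
  trace_parity := by rw [trace_kronecker, hA.trace_parity, h.trace_parity, mul_one]
  exists_diagonalization := exists_diagonalization_succ hA.star_position h.exists_diagonalization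
  energy_eq := by
    rw [Fin.sum_univ_succ]
    simp only [Fin.cons_zero, Fin.cons_succ, kronecker_mul_kronecker, mul_one, h.swap_mul_self]
    rw [hA.oscillator_kronecker_one]
    simp only [← kronecker_add, ← kronecker_sum, h.energy_eq, ← diagonal_one,
      diagonal_kronecker_diagonal, diagonal_add, one_mul]
  energy_nonneg a := add_nonneg (zero_le_one.trans (hA.one_le_energy a.1)) (h.energy_nonneg a.2)
  card_energy_lt K := by
    rw [pow_succ']
    exact card_energy_add_lt (fun i => zero_le_one.trans (hA.one_le_energy i)) h.energy_nonneg
      (hA.card_energy_lt K) (h.card_energy_lt K)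

end Succ

theorem isSpinLattice_zero (s : ℝ) :
    IsSpinLattice (n := 0) (α := Unit) s Fin.elim0 Fin.elim0 Fin.elim0 1 1 0 where
  star_momentum i := i.elim0
  star_position i := i.elim0
  star_height i := i.elim0
  star_swap := star_one _
  star_parity := star_one _
  swap_mul_self := mul_one 1
  parity_mul_self := mul_one 1
  momentum_momentum i := i.elim0
  height_height i := i.elim0
  momentum_position i := i.elim0
  height_momentum i := i.elim0
  height_position i := i.elim0
  swap_momentum i := i.elim0
  swap_position i := i.elim0
  swap_height i := i.elim0
  parity_momentum i := i.elim0
  parity_position i := i.elim0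
  parity_height i := i.elim0
  parity_swap := rfl
  trace_parity := by simp
  exists_diagonalization := ⟨1, one_mem _, Fin.elim0, fun i => i.elim0⟩
  commutator_sq i := i.elim0
  height_momentum_sq i := i.elim0
  height_position_sq i := i.elim0
  height_defect i := i.elim0
  one_le_oscillator i := i.elim0
  energy_eq := by simp
  energy_nonneg _ := le_rfl
  card_energy_lt K := (card_filter_le _ _).trans (by simp)

theorem exists_isSpinLattice {s : ℕ} (hs : 1 ≤ s) (n : ℕ) :
    ∃ (α : Type) (_ : Fintype α) (_ : DecidableEq α) (D X R : Fin n → Matrix α α ℝ)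
      (Θ P : Matrix α α ℝ) (η : α → ℝ), IsSpinLattice s D X R Θ P η := by
  induction n with
  | zero => exact ⟨_, _, _, _, _, _, _, _, _, isSpinLattice_zero s⟩
  | succ n ih =>
    obtain ⟨α, _, _, D, X, R, Θ, P, η, h⟩ := ih
    exact ⟨_, _, _, _, _, _, _, _, _, h.succ (isSpinModel hs)⟩

end SpinLattice

section LoewnerOrder

open scoped Kronecker MatrixOrder

variable {W α κ : Type*}

section Finite

variable [Finite W] [Finite α]

lemma kronecker_nonneg {A : Matrix W W ℝ} {B : Matrix α α ℝ} (hA : 0 ≤ A) (hB : 0 ≤ B) :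
    0 ≤ A ⊗ₖ B := by
  rw [nonneg_iff_posSemidef] at hA hB ⊢
  exact hA.kronecker hB

lemma kronecker_le_kronecker_left {A : Matrix W W ℝ} (hA : 0 ≤ A) {B B' : Matrix α α ℝ}
    (h : B ≤ B') : A ⊗ₖ B ≤ A ⊗ₖ B' := by
  rw [← sub_nonneg, ← kronecker_sub]
  exact kronecker_nonneg hA (sub_nonneg.2 h)

lemma kronecker_le_kronecker_right {A A' : Matrix W W ℝ} (h : A ≤ A') {B : Matrix α α ℝ}
    (hB : 0 ≤ B) : A ⊗ₖ B ≤ A' ⊗ₖ B := by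
  rw [← sub_nonneg, ← sub_kronecker]
  exact kronecker_nonneg (sub_nonneg.2 h) hB

lemma blockDiagonal_le_blockDiagonal [DecidableEq α] {M M' : α → Matrix W W ℝ} (h : M ≤ M') :
    blockDiagonal M ≤ blockDiagonal M' := by
  classical
  have := Fintype.ofFinite W
  have := Fintype.ofFinite α
  choose S hS using fun a => CStarAlgebra.nonneg_iff_eq_star_mul_self.1 (sub_nonneg.2 (h a))
  rw [← sub_nonneg, ← blockDiagonal_sub]
  convert star_mul_self_nonneg (blockDiagonal S)
  rw [star_eq_conjTranspose, blockDiagonal_conjTranspose, ← blockDiagonal_mul]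
  exact congrArg _ (funext hS)

end Finite

variable [Fintype W] [DecidableEq W] [Fintype α] [DecidableEq α]

/-- Simultaneously diagonalizing the `X i` reduces an estimate for `∑ i, t i ⊗ X i` to the pencil
`∑ i, x i • t i` at the joint eigenvalues `x`. -/
theorem smul_one_kronecker_le_sq_sum [Fintype κ] {t : κ → Matrix W W ℝ} {c : ℝ}
    (ht : ∀ x : κ → ℝ, (c * ∑ i, x i ^ 2) • 1 ≤ (∑ i, x i • t i) * ∑ i, x i • t i)
    {X : κ → Matrix α α ℝ} (hX : ∃ U ∈ unitary (Matrix α α ℝ), ∃ ξ : κ → α → ℝ,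
      ∀ i, X i = star U * diagonal (ξ i) * U) :
    c • (1 ⊗ₖ ∑ i, X i * X i) ≤ (∑ i, t i ⊗ₖ X i) * ∑ i, t i ⊗ₖ X i := by
  obtain ⟨U, hU, ξ, hξ⟩ := hX
  let φ := Unitary.conjStarAlgAut ℝ (Matrix (W × α) (W × α) ℝ)
    ⟨1 ⊗ₖ star U, kronecker_mem_unitary (one_mem _) (Unitary.star_mem hU)⟩
  have hφ (A : Matrix W W ℝ) (B : Matrix α α ℝ) : φ (A ⊗ₖ B) = A ⊗ₖ (star U * B * U) := by
    simp [φ, Unitary.conjStarAlgAut_apply, star_kronecker, kronecker_mul_kronecker]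
  have hpencil : ∑ i, t i ⊗ₖ X i = φ (blockDiagonal fun a => ∑ i, ξ i a • t i) := by
    have hsum : (blockDiagonal fun a => ∑ i, ξ i a • t i) = ∑ i, t i ⊗ₖ diagonal (ξ i) := by
      ext ⟨v, a⟩ ⟨w, b⟩
      simp [Matrix.sum_apply, blockDiagonal_apply, diagonal_apply, mul_comm]
    simp only [hsum, map_sum, hφ, hξ]
  have hsq : c • ((1 : Matrix W W ℝ) ⊗ₖ ∑ i, X i * X i) =
      φ (blockDiagonal fun a => (c * ∑ i, ξ i a ^ 2) • 1) := by
    have hsum : (blockDiagonal fun a => (c * ∑ i, ξ i a ^ 2) • (1 : Matrix W W ℝ)) =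
        c • (1 ⊗ₖ ∑ i, diagonal (ξ i) * diagonal (ξ i)) := by
      ext ⟨v, a⟩ ⟨w, b⟩
      by_cases hab : a = b <;>
        simp [hab, Matrix.sum_apply, blockDiagonal_apply, sq, mul_left_comm, mul_comm]
    have hXX (i : κ) : X i * X i = star U * (diagonal (ξ i) * diagonal (ξ i)) * U := by
      rw [hξ i]
      simp only [mul_assoc]
      rw [← mul_assoc U, Unitary.mul_star_self_of_mem hU, one_mul]
    rw [hsum, map_smul, hφ, Finset.mul_sum, Finset.sum_mul]
    simp only [hXX]
  rw [hpencil, hsq, ← map_mul, ← blockDiagonal_mul]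
  exact OrderHomClass.mono φ (blockDiagonal_le_blockDiagonal fun a => ht fun i => ξ i a)

lemma star_add_mul_add_le {A : Type*} [Ring A] [StarRing A] [PartialOrder A] [StarOrderedRing A]
    (a b : A) : star (a + b) * (a + b) ≤ 2 • (star a * a + star b * b) := by
  have hpar : 2 • (star a * a + star b * b) - star (a + b) * (a + b) =
      star (a - b) * (a - b) := by
    rw [star_add, star_sub]
    noncomm_ring
  exact sub_nonneg.1 (hpar ▸ star_mul_self_nonneg _)

lemma mul_self_add_mul_self_le {A : Type*} [Ring A] [StarRing A] [PartialOrder A]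
    [StarOrderedRing A] {a b : A} (ha : star a = -a) (hb : star b = -b) (hab : Commute a b) :
    a * a + b * b ≤ 2 • (a * b) := by
  have hsq : 2 • (a * b) - (a * a + b * b) = star (a - b) * (a - b) := by
    rw [star_sub, ha, hb, two_nsmul]
    nth_rewrite 2 [hab.eq]
    noncomm_ring
  exact sub_nonneg.1 (hsq ▸ star_mul_self_nonneg _)

lemma sum_mul_sum_of_anticomm {A : Type*} [Ring A] {a : κ → A} (s : Finset κ)
    (h : Pairwise fun i j => a i * a j = -(a j * a i)) :
    (∑ i ∈ s, a i) * ∑ i ∈ s, a i = ∑ i ∈ s, a i * a i := by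
  induction s using Finset.cons_induction with
  | empty => simp
  | cons k s hk ih =>
    have hcross : a k * (∑ i ∈ s, a i) + (∑ i ∈ s, a i) * a k = 0 := by
      rw [Finset.mul_sum, Finset.sum_mul, ← Finset.sum_add_distrib]
      exact Finset.sum_eq_zero fun i hi => by
        rw [h (ne_of_mem_of_not_mem hi hk).symm, neg_add_cancel]
    rw [Finset.sum_cons, Finset.sum_cons, ← ih, ← add_zero (a k * a k), ← hcross]
    noncomm_ring

end LoewnerOrder

section DiracSchrodinger

open scoped Kronecker MatrixOrder
open Finset

lemma one_kronecker_diagonal {W α : Type*} [DecidableEq W] [DecidableEq α] (η : α → ℝ) :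
    (1 : Matrix W W ℝ) ⊗ₖ diagonal η = diagonal fun a : W × α => η a.2 := by
  simp [← diagonal_one, diagonal_kronecker_diagonal]

variable {n : ℕ} {W α : Type*} [Fintype W] [DecidableEq W] [Fintype α] [DecidableEq α]

/-- The symbol of a Dirac–Schrödinger operator: an elliptic pencil of symmetric matrices `t i` that
are odd for the grading `ε` and commute with the anticommuting complex structures `I` and `J`. The
constants `c` and `τ` bound the pencil from below and its coefficients from above. -/
structure IsDiracSymbol (τ c : ℝ) (ε : Matrix W W ℝ) (t : Fin n → Matrix W W ℝ)
    (I J : Matrix W W ℝ) : Prop where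
  star_grading : star ε = ε
  star_coeff (i : Fin n) : star (t i) = t i
  star_unitI : star I = -I
  star_unitJ : star J = -J
  grading_mul_self : ε * ε = 1
  unitI_mul_self : I * I = -1
  unitJ_mul_self : J * J = -1
  coeff_grading (i : Fin n) : t i * ε = -(ε * t i)
  unitI_unitJ : I * J = -(J * I)
  unitI_grading : I * ε = ε * I
  unitJ_grading : J * ε = ε * J
  unitI_coeff (i : Fin n) : I * t i = t i * I
  unitJ_coeff (i : Fin n) : J * t i = t i * J
  coeff_mul_self_le (i : Fin n) : t i * t i ≤ τ • 1
  le_pencil_mul_self (x : Fin n → ℝ) :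
    (c * ∑ i, x i ^ 2) • 1 ≤ (∑ i, x i • t i) * ∑ i, x i • t i

/-- The Dirac–Schrödinger operator with Clifford momenta `D` and potential `∑ i, t i ⊗ X i`. -/
def diracSchrodinger (ε : Matrix W W ℝ) (t : Fin n → Matrix W W ℝ) (D X : Fin n → Matrix α α ℝ) :
    Matrix (W × α) (W × α) ℝ :=
  ε ⊗ₖ ∑ i, D i + ∑ i, t i ⊗ₖ X i

/-- The operators that represent the symmetries of the Dirac–Schrödinger operator; the Clifford
generators are the heights `R i`, which commute with it only asymptotically. -/
def symmetryOperator (ε I J : Matrix W W ℝ) (R : Fin n → Matrix α α ℝ) (Θ P : Matrix α α ℝ) :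
    Symmetry n → Matrix (W × α) (W × α) ℝ
  | .parity => 1 ⊗ₖ P
  | .grading => ε ⊗ₖ Θ
  | .unitI => I ⊗ₖ 1
  | .unitJ => J ⊗ₖ 1
  | .clifford i => 1 ⊗ₖ R i

variable {τ c s : ℝ} {ε I J : Matrix W W ℝ} {t : Fin n → Matrix W W ℝ}
  {D X R : Fin n → Matrix α α ℝ} {Θ P : Matrix α α ℝ} {η : α → ℝ}

lemma star_diracSchrodinger (hS : IsDiracSymbol τ c ε t I J) (hL : IsSignedLattice D X R Θ P) :
    star (diracSchrodinger ε t D X) = diracSchrodinger ε t D X := by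
  simp only [diracSchrodinger, star_add, star_sum, star_kronecker, hS.star_grading, hS.star_coeff,
    hL.star_momentum, hL.star_position]

lemma momentum_sum_position (hL : IsSignedLattice D X R Θ P) (i : Fin n) :
    (∑ j, D j) * X i - X i * ∑ j, D j = D i * X i - X i * D i := by
  rw [sum_mul, mul_sum, ← sum_sub_distrib, sum_eq_single i _ (by simp)]
  exact fun j _ hj => sub_eq_zero.2 (hL.momentum_position hj)

theorem diracSchrodinger_mul_self (hS : IsDiracSymbol τ c ε t I J)
    (hL : IsSignedLattice D X R Θ P) :
    diracSchrodinger ε t D X * diracSchrodinger ε t D X =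
      1 ⊗ₖ ∑ i, D i * D i + (∑ i, t i ⊗ₖ X i) * ∑ i, t i ⊗ₖ X i +
        ∑ i, (ε * t i) ⊗ₖ (D i * X i - X i * D i) := by
  have hkinetic : (ε ⊗ₖ ∑ i, D i) * (ε ⊗ₖ ∑ i, D i) = 1 ⊗ₖ ∑ i, D i * D i := by
    rw [kronecker_mul_kronecker, hS.grading_mul_self,
      sum_mul_sum_of_anticomm _ hL.momentum_momentum]
  have hcross : (ε ⊗ₖ ∑ i, D i) * (∑ i, t i ⊗ₖ X i) + (∑ i, t i ⊗ₖ X i) * (ε ⊗ₖ ∑ i, D i) =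
      ∑ i, (ε * t i) ⊗ₖ (D i * X i - X i * D i) := by
    rw [mul_sum, sum_mul, ← sum_add_distrib]
    refine sum_congr rfl fun i _ => ?_
    rw [kronecker_mul_kronecker, kronecker_mul_kronecker, hS.coeff_grading, neg_kronecker,
      ← momentum_sum_position hL, kronecker_sub, sub_eq_add_neg]
  rw [diracSchrodinger, ← hkinetic, ← hcross]
  noncomm_ring

lemma IsSpinLattice.star_height_mul_self_le (hs : 0 < s) (hL : IsSpinLattice s D X R Θ P η)
    (i : Fin n) : star (R i) * R i ≤ 1 := by
  have hdefect : 0 ≤ s • (R i * R i + 1) := by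
    rw [hL.height_defect]
    exact sub_nonneg.2 (hL.one_le_oscillator i)
  have hnonneg : 0 ≤ R i * R i + 1 := by
    simpa [smul_smul, inv_mul_cancel₀ hs.ne'] using smul_nonneg (inv_pos.2 hs).le hdefect
  rw [hL.star_height, neg_mul]
  exact neg_le_iff_add_nonneg'.2 hnonneg

lemma neg_smul_one_le_kronecker_commutator (hs : 0 < s) (hS : IsDiracSymbol τ c ε t I J)
    (hL : IsSpinLattice s D X R Θ P η) (i : Fin n) :
    -((1 + τ) / 2) • 1 ≤ (ε * t i) ⊗ₖ (D i * X i - X i * D i) := by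
  set K := D i * X i - X i * D i with hK
  have hKstar : star (1 ⊗ₖ K : Matrix (W × α) (W × α) ℝ) = -(1 ⊗ₖ K) := by
    rw [star_kronecker, star_one, hK, star_sub, star_mul, star_mul, hL.star_momentum,
      hL.star_position, ← kronecker_neg, neg_sub]
  have hstar : star ((ε * t i) ⊗ₖ 1 : Matrix (W × α) (W × α) ℝ) = -((ε * t i) ⊗ₖ 1) := by
    rw [star_kronecker, star_one, star_mul, hS.star_grading, hS.star_coeff, hS.coeff_grading,
      neg_kronecker]
  have hsq : ε * t i * (ε * t i) = -(t i * t i) := by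
    rw [← mul_assoc, mul_assoc ε, hS.coeff_grading, mul_neg, ← mul_assoc, hS.grading_mul_self,
      one_mul, neg_mul]
  have hcomm : Commute ((ε * t i) ⊗ₖ 1 : Matrix (W × α) (W × α) ℝ) (1 ⊗ₖ K) := by
    simp only [commute_iff_eq, kronecker_mul_kronecker, one_mul, mul_one]
  have hR : 1 ⊗ₖ (star (R i) * R i) ≤ (1 : Matrix (W × α) (W × α) ℝ) := by
    rw [← one_kronecker_one]
    exact kronecker_le_kronecker_left (zero_le_one (α := Matrix W W ℝ))
      (hL.star_height_mul_self_le hs i)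
  have ht : (t i * t i) ⊗ₖ 1 ≤ τ • (1 : Matrix (W × α) (W × α) ℝ) := by
    rw [← one_kronecker_one, ← smul_kronecker]
    exact kronecker_le_kronecker_right (hS.coeff_mul_self_le i) (zero_le_one (α := Matrix α α ℝ))
  have hmain := mul_self_add_mul_self_le hstar hKstar hcomm
  simp only [kronecker_mul_kronecker, one_mul, mul_one] at hmain
  rw [hsq, hL.commutator_sq, neg_kronecker] at hmain
  rw [hL.star_height, neg_mul, kronecker_neg] at hR
  calc -((1 + τ) / 2) • 1 = (1 / 2 : ℝ) • (-(τ • 1) + -1 : Matrix (W × α) (W × α) ℝ) := by module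
    _ ≤ (1 / 2 : ℝ) • (2 • (ε * t i) ⊗ₖ K) :=
      smul_le_smul_of_nonneg_left
        ((add_le_add (neg_le_neg ht) (neg_le.1 hR)).trans hmain) (by norm_num)
    _ = (ε * t i) ⊗ₖ K := by module

theorem smul_energy_le (hs : 0 < s) (hc : c ≤ 1) (hS : IsDiracSymbol τ c ε t I J)
    (hL : IsSpinLattice s D X R Θ P η) :
    c • diagonal (fun a : W × α => η a.2) ≤
      diracSchrodinger ε t D X * diracSchrodinger ε t D X + (n * ((1 + τ) / 2)) • 1 := by
  have henergy : diagonal (fun a : W × α => η a.2) =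
      1 ⊗ₖ ∑ i, X i * X i + 1 ⊗ₖ ∑ i, D i * D i := by
    rw [← kronecker_add, ← sum_add_distrib, hL.energy_eq, one_kronecker_diagonal]
  have hD : c • (1 ⊗ₖ ∑ i, D i * D i) ≤ (1 ⊗ₖ ∑ i, D i * D i : Matrix (W × α) (W × α) ℝ) := by
    have hnonneg : 0 ≤ (1 ⊗ₖ ∑ i, D i * D i : Matrix (W × α) (W × α) ℝ) :=
      kronecker_nonneg zero_le_one (sum_nonneg fun i _ =>
        IsSelfAdjoint.mul_self_nonneg (hL.star_momentum i))
    simpa using smul_le_smul_of_nonneg_right hc hnonneg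
  have hX := smul_one_kronecker_le_sq_sum hS.le_pencil_mul_self hL.exists_diagonalization
  have hcross : -((n * ((1 + τ) / 2)) • 1 : Matrix (W × α) (W × α) ℝ) ≤
      ∑ i, (ε * t i) ⊗ₖ (D i * X i - X i * D i) := by
    refine le_trans (le_of_eq ?_) (sum_le_sum fun i _ =>
      neg_smul_one_le_kronecker_commutator hs hS hL i)
    simp only [sum_const, card_univ, Fintype.card_fin, ← Nat.cast_smul_eq_nsmul ℝ]
    module
  rw [henergy, smul_add, diracSchrodinger_mul_self hS hL.toIsSignedLattice, ← sub_le_iff_le_add,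
    sub_eq_add_neg, add_comm (c • _)]
  exact add_le_add (add_le_add hD hX) hcross

lemma height_diracSchrodinger (hL : IsSignedLattice D X R Θ P) (i : Fin n) :
    1 ⊗ₖ R i * diracSchrodinger ε t D X - diracSchrodinger ε t D X * 1 ⊗ₖ R i =
      ε ⊗ₖ (R i * D i - D i * R i) + t i ⊗ₖ (R i * X i - X i * R i) := by
  have hmomentum : R i * (∑ j, D j) - (∑ j, D j) * R i = R i * D i - D i * R i := by
    rw [sum_mul, mul_sum, ← sum_sub_distrib, sum_eq_single i _ (by simp)]
    exact fun j _ hj => sub_eq_zero.2 (hL.height_momentum hj.symm)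
  have hpotential : 1 ⊗ₖ R i * (∑ j, t j ⊗ₖ X j) - (∑ j, t j ⊗ₖ X j) * 1 ⊗ₖ R i =
      t i ⊗ₖ (R i * X i - X i * R i) := by
    simp only [sum_mul, mul_sum, ← sum_sub_distrib, kronecker_mul_kronecker, one_mul, mul_one,
      ← kronecker_sub]
    refine sum_eq_single i (fun j _ hj => ?_) (by simp)
    rw [hL.height_position hj.symm, sub_self, kronecker_zero]
  rw [← hpotential, ← hmomentum, diracSchrodinger, mul_add, add_mul, kronecker_mul_kronecker,
    kronecker_mul_kronecker, one_mul, mul_one, kronecker_sub]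
  abel

lemma IsSpinLattice.oscillator_le_energy (hL : IsSpinLattice s D X R Θ P η) (i : Fin n) :
    X i * X i + D i * D i ≤ diagonal η := by
  rw [← hL.energy_eq]
  exact single_le_sum (f := fun i => X i * X i + D i * D i) (fun j _ => add_nonneg
    (IsSelfAdjoint.mul_self_nonneg (hL.star_position j))
    (IsSelfAdjoint.mul_self_nonneg (hL.star_momentum j))) (mem_univ i)

theorem height_commutator_sq_le (hτ : 0 ≤ τ) (hS : IsDiracSymbol τ c ε t I J)
    (hL : IsSpinLattice s D X R Θ P η) (i : Fin n) :
    s ^ 2 • (star (1 ⊗ₖ R i * diracSchrodinger ε t D X - diracSchrodinger ε t D X * 1 ⊗ₖ R i) *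
      (1 ⊗ₖ R i * diracSchrodinger ε t D X - diracSchrodinger ε t D X * 1 ⊗ₖ R i)) ≤
      (2 * (1 + τ)) • diagonal (fun a : W × α => η a.2) := by
  rw [height_diracSchrodinger hL.toIsSignedLattice]
  set F := s • (R i * D i - D i * R i) with hF
  set E := s • (R i * X i - X i * R i) with hE
  have hFstar : star F = F := by
    rw [hF, star_smul, star_trivial s, star_sub, star_mul, star_mul, hL.star_height,
      hL.star_momentum]
    noncomm_ring
  have hEstar : star E = E := by
    rw [hE, star_smul, star_trivial s, star_sub, star_mul, star_mul, hL.star_height,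
      hL.star_position]
    noncomm_ring
  have hcoeff : 1 ⊗ₖ (X i * X i) + (t i * t i) ⊗ₖ (D i * D i) ≤
      (1 + τ) • (1 ⊗ₖ diagonal η : Matrix (W × α) (W × α) ℝ) := by
    have hX := IsSelfAdjoint.mul_self_nonneg (hL.star_position i)
    have hD := IsSelfAdjoint.mul_self_nonneg (hL.star_momentum i)
    have hosc := hL.oscillator_le_energy i
    have hone : (0 : Matrix W W ℝ) ≤ 1 := zero_le_one
    rw [add_smul, one_smul]
    refine add_le_add
      (kronecker_le_kronecker_left hone ((le_add_of_nonneg_right hD).trans hosc)) ?_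
    refine (kronecker_le_kronecker_right (hS.coeff_mul_self_le i) hD).trans ?_
    rw [smul_kronecker]
    exact smul_le_smul_of_nonneg_left
      (kronecker_le_kronecker_left hone ((le_add_of_nonneg_left hX).trans hosc)) hτ
  have hscale : s • (ε ⊗ₖ (R i * D i - D i * R i) + t i ⊗ₖ (R i * X i - X i * R i)) =
      ε ⊗ₖ F + t i ⊗ₖ E := by
    rw [hF, hE, kronecker_smul, kronecker_smul, smul_add]
  calc _ = star (ε ⊗ₖ F + t i ⊗ₖ E) * (ε ⊗ₖ F + t i ⊗ₖ E) := by
        rw [← hscale, star_smul, star_trivial s, smul_mul_smul_comm, ← pow_two]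
    _ ≤ 2 • (star (ε ⊗ₖ F) * (ε ⊗ₖ F) + star (t i ⊗ₖ E) * (t i ⊗ₖ E)) :=
        star_add_mul_add_le _ _
    _ = (2 : ℝ) • (1 ⊗ₖ (X i * X i) + (t i * t i) ⊗ₖ (D i * D i)) := by
        rw [star_kronecker, star_kronecker, hFstar, hEstar, hS.star_grading, hS.star_coeff,
          kronecker_mul_kronecker, kronecker_mul_kronecker, hS.grading_mul_self,
          hL.height_momentum_sq, hL.height_position_sq, two_smul, two_smul]
    _ ≤ (2 : ℝ) • (1 + τ) • (1 ⊗ₖ diagonal η) := smul_le_smul_of_nonneg_left hcoeff zero_le_two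
    _ = _ := by rw [smul_smul, one_kronecker_diagonal]

/-- The constant that controls the energy, the defects and the commutators of all symmetries by
the square of the Dirac–Schrödinger operator, uniformly in the spin. -/
noncomputable def symmetryBound (n : ℕ) (τ c : ℝ) : ℝ := 2 * (1 + τ) * ((1 + n * ((1 + τ) / 2)) / c)

theorem smul_energy_le_symmetryBound (hτ : 0 ≤ τ) (hc₀ : 0 < c) (hc : c ≤ 1) (hs : 0 < s)
    (hS : IsDiracSymbol τ c ε t I J) (hL : IsSpinLattice s D X R Θ P η) :
    (2 * (1 + τ)) • diagonal (fun a : W × α => η a.2) ≤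
      symmetryBound n τ c • (diracSchrodinger ε t D X * diracSchrodinger ε t D X + 1) := by
  set T := diracSchrodinger ε t D X
  set b : ℝ := n * ((1 + τ) / 2) with hb
  have hT₀ : 0 ≤ T * T :=
    IsSelfAdjoint.mul_self_nonneg (star_diracSchrodinger hS hL.toIsSignedLattice)
  have hb₀ : 0 ≤ b := by positivity
  have hle : T * T + b • 1 ≤ (1 + b) • (T * T + 1) := by
    rw [← sub_nonneg, show (1 + b) • (T * T + 1) - (T * T + b • 1) = b • (T * T) + 1 by module]
    exact add_nonneg (smul_nonneg hb₀ hT₀) zero_le_one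
  calc _ = (2 * (1 + τ)) • c⁻¹ • c • diagonal (fun a : W × α => η a.2) := by
        rw [inv_smul_smul₀ hc₀.ne']
    _ ≤ (2 * (1 + τ)) • c⁻¹ • (1 + b) • (T * T + 1) := by
        refine smul_le_smul_of_nonneg_left (smul_le_smul_of_nonneg_left ?_ (by positivity))
          (by positivity)
        exact (smul_energy_le hs hc hS hL).trans hle
    _ = _ := by rw [symmetryBound, smul_smul, smul_smul, ← hb, div_eq_inv_mul,
          ← mul_assoc]

theorem energy_le_symmetryBound (hτ : 0 ≤ τ) (hc₀ : 0 < c) (hc : c ≤ 1) (hs : 0 < s)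
    (hS : IsDiracSymbol τ c ε t I J) (hL : IsSpinLattice s D X R Θ P η) :
    diagonal (fun a : W × α => η a.2) ≤
      symmetryBound n τ c • (diracSchrodinger ε t D X * diracSchrodinger ε t D X + 1) := by
  refine le_trans ?_ (smul_energy_le_symmetryBound hτ hc₀ hc hs hS hL)
  have hη : 0 ≤ diagonal (fun a : W × α => η a.2) :=
    nonneg_iff_posSemidef.2 (.diagonal fun a => hL.energy_nonneg a.2)
  simpa using smul_le_smul_of_nonneg_right (by linarith : 1 ≤ 2 * (1 + τ)) hη

theorem isAlmostSymmetry_height (hτ : 0 ≤ τ) (hc₀ : 0 < c) (hc : c ≤ 1) (hs : 0 < s)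
    (hS : IsDiracSymbol τ c ε t I J) (hL : IsSpinLattice s D X R Θ P η) (i : Fin n) :
    IsAlmostSymmetry (symmetryBound n τ c) s (-1) (diracSchrodinger ε t D X) (1 ⊗ₖ R i) where
  star_eq := by rw [star_kronecker, star_one, hL.star_height, kronecker_neg, neg_one_smul]
  star_mul_self_le_one := by
    rw [star_kronecker, kronecker_mul_kronecker, star_one, one_mul, ← one_kronecker_one]
    exact kronecker_le_kronecker_left (zero_le_one (α := Matrix W W ℝ))
      (hL.star_height_mul_self_le hs i)
  defect_le := by
    refine le_trans ?_ (energy_le_symmetryBound hτ hc₀ hc hs hS hL)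
    have hdefect : s • (1 - star (1 ⊗ₖ R i) * 1 ⊗ₖ R i) =
        (1 : Matrix W W ℝ) ⊗ₖ (X i * X i + D i * D i - 1) := by
      rw [← hL.height_defect, star_kronecker, kronecker_mul_kronecker, star_one, one_mul,
        hL.star_height, neg_mul, kronecker_neg, sub_neg_eq_add, kronecker_smul, kronecker_add,
        one_kronecker_one, add_comm]
    rw [hdefect, ← one_kronecker_diagonal]
    exact kronecker_le_kronecker_left (zero_le_one (α := Matrix W W ℝ))
      ((sub_le_self _ zero_le_one).trans (hL.oscillator_le_energy i))
  exists_commutator_le := by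
    refine ⟨1, abs_one, ?_⟩
    rw [one_smul]
    exact (height_commutator_sq_le hτ hS hL i).trans
      (smul_energy_le_symmetryBound hτ hc₀ hc hs hS hL)

lemma isAlmostSymmetry_of_mul_eq {A : Type*} [Ring A] [StarRing A] [Algebra ℝ A] [PartialOrder A]
    {C s ν θ : ℝ} {T x : A} (hT : 0 ≤ C • (T * T + 1)) (hstar : star x = ν • x)
    (hx : star x * x = 1) (hθ : |θ| = 1) (hxT : x * T = θ • (T * x)) :
    IsAlmostSymmetry C s ν T x where
  star_eq := hstar
  star_mul_self_le_one := hx.le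
  defect_le := by rwa [hx, sub_self, smul_zero]
  exists_commutator_le := ⟨θ, hθ, by rwa [hxT, sub_self, mul_zero, smul_zero]⟩

lemma parity_diracSchrodinger (hL : IsSignedLattice D X R Θ P) :
    1 ⊗ₖ P * diracSchrodinger ε t D X = -(diracSchrodinger ε t D X * 1 ⊗ₖ P) := by
  simp only [diracSchrodinger, mul_add, add_mul, mul_sum, sum_mul, kronecker_mul_kronecker,
    one_mul, mul_one, hL.parity_momentum, hL.parity_position, sum_neg_distrib, kronecker_neg,
    neg_add]

lemma grading_diracSchrodinger (hS : IsDiracSymbol τ c ε t I J) (hL : IsSignedLattice D X R Θ P) :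
    ε ⊗ₖ Θ * diracSchrodinger ε t D X = -(diracSchrodinger ε t D X * ε ⊗ₖ Θ) := by
  simp only [diracSchrodinger, mul_add, add_mul, mul_sum, sum_mul, kronecker_mul_kronecker,
    hL.swap_momentum, hL.swap_position, hS.coeff_grading, sum_neg_distrib, kronecker_neg,
    neg_kronecker, neg_add, neg_neg]

lemma kronecker_one_diracSchrodinger {W : Type*} [Fintype W] {ε x : Matrix W W ℝ}
    {t : Fin n → Matrix W W ℝ} (hε : x * ε = ε * x) (ht : ∀ i, x * t i = t i * x) :
    x ⊗ₖ 1 * diracSchrodinger ε t D X = diracSchrodinger ε t D X * x ⊗ₖ 1 := by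
  simp only [diracSchrodinger, mul_add, add_mul, mul_sum, sum_mul, kronecker_mul_kronecker,
    one_mul, mul_one, hε, ht]

lemma symmetryOperator_mul_comm (hS : IsDiracSymbol τ c ε t I J)
    (hL : IsSignedLattice D X R Θ P) (k l : Symmetry n) :
    symmetryOperator ε I J R Θ P k * symmetryOperator ε I J R Θ P l =
      Symmetry.commSign k l •
        (symmetryOperator ε I J R Θ P l * symmetryOperator ε I J R Θ P k) := by
  cases k <;> cases l
  case clifford.clifford i j =>
    obtain rfl | hij := eq_or_ne i j
    · simp [Symmetry.commSign]
    · simp [Symmetry.commSign, symmetryOperator, kronecker_mul_kronecker, hL.height_height hij,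
        hij, kronecker_neg]
  all_goals
    simp [symmetryOperator, Symmetry.commSign, kronecker_mul_kronecker, hL.parity_height,
      hL.parity_swap, hL.swap_height, hS.unitI_unitJ, hS.unitI_grading, hS.unitJ_grading,
      neg_kronecker, kronecker_neg]

theorem isAlmostSymmetry_symmetryOperator (hτ : 0 ≤ τ) (hc₀ : 0 < c) (hc : c ≤ 1) (hs : 0 < s)
    (hS : IsDiracSymbol τ c ε t I J) (hL : IsSpinLattice s D X R Θ P η) (k : Symmetry n) :
    IsAlmostSymmetry (symmetryBound n τ c) s (Symmetry.squareSign k) (diracSchrodinger ε t D X)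
      (symmetryOperator ε I J R Θ P k) := by
  have hT : 0 ≤ symmetryBound n τ c •
      (diracSchrodinger ε t D X * diracSchrodinger ε t D X + 1) := by
    refine smul_nonneg (by unfold symmetryBound; positivity) (add_nonneg ?_ zero_le_one)
    exact IsSelfAdjoint.mul_self_nonneg (star_diracSchrodinger hS hL.toIsSignedLattice)
  cases k with
  | parity =>
    refine isAlmostSymmetry_of_mul_eq (θ := -1) hT ?_ ?_ (by simp) ?_ <;>
      simp [symmetryOperator, Symmetry.squareSign, star_kronecker, kronecker_mul_kronecker,
        hL.star_parity, hL.parity_mul_self, parity_diracSchrodinger hL.toIsSignedLattice]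
  | grading =>
    refine isAlmostSymmetry_of_mul_eq (θ := -1) hT ?_ ?_ (by simp) ?_ <;>
      simp [symmetryOperator, Symmetry.squareSign, star_kronecker, kronecker_mul_kronecker,
        hL.star_swap, hL.swap_mul_self, hS.star_grading, hS.grading_mul_self,
        grading_diracSchrodinger hS hL.toIsSignedLattice]
  | unitI =>
    refine isAlmostSymmetry_of_mul_eq (θ := 1) hT ?_ ?_ (by simp) ?_ <;>
      simp [symmetryOperator, Symmetry.squareSign, star_kronecker, kronecker_mul_kronecker,
        hS.star_unitI, hS.unitI_mul_self, neg_kronecker,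
        kronecker_one_diracSchrodinger hS.unitI_grading hS.unitI_coeff]
  | unitJ =>
    refine isAlmostSymmetry_of_mul_eq (θ := 1) hT ?_ ?_ (by simp) ?_ <;>
      simp [symmetryOperator, Symmetry.squareSign, star_kronecker, kronecker_mul_kronecker,
        hS.star_unitJ, hS.unitJ_mul_self, neg_kronecker,
        kronecker_one_diracSchrodinger hS.unitJ_grading hS.unitJ_coeff]
  | clifford i => exact isAlmostSymmetry_height hτ hc₀ hc hs hS hL i

lemma card_energy_snd_lt {V : Type*} [Fintype V] (hL : IsSpinLattice s D X R Θ P η) (K : ℕ) :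
    #{a : V × α | η a.2 < K} ≤ Fintype.card V * (2 * K) ^ n := by
  have hprod : ({a : V × α | η a.2 < K} : Finset _) = univ ×ˢ ({a | η a < K} : Finset α) := by
    ext; simp
  rw [hprod, card_product, card_univ]
  exact Nat.mul_le_mul_left _ (hL.card_energy_lt K)

theorem IsDiracSymbol.exists_isRepresentation {W : Type} [Fintype W] [DecidableEq W]
    {ε I J : Matrix W W ℝ} {t : Fin n → Matrix W W ℝ} (hS : IsDiracSymbol τ c ε t I J)
    (hτ : 0 ≤ τ) (hc₀ : 0 < c) (hc : c ≤ 1) :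
    ∃ d, ∃ x : Symmetry n → Matrix (Fin d) (Fin d) ℝ,
      Symmetry.IsRepresentation x ∧ (x .parity).trace = Fintype.card W := by
  have hC : 0 ≤ symmetryBound n τ c := by unfold symmetryBound; positivity
  obtain ⟨K, hK⟩ := exists_nat_gt (2 * symmetryBound n τ c)
  refine exists_isSignedSystem_of_forall_isLowEnergyModel (fun k l => ?_) (fun k => ?_) hC hK
    (L := Fintype.card W * (2 * K) ^ n) fun s hs => ?_
  · cases k <;> cases l <;> simp [Symmetry.commSign, apply_ite abs]
  · cases k <;> simp [Symmetry.squareSign]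
  obtain ⟨α, _, _, D, X, R, Θ, P, η, hL⟩ := exists_isSpinLattice hs n
  have hs₀ : (0 : ℝ) < s := by exact_mod_cast hs
  refine ⟨W × α, inferInstance, inferInstance, diracSchrodinger ε t D X,
    symmetryOperator ε I J R Θ P, fun a => η a.2, ?_,
    energy_le_symmetryBound hτ hc₀ hc hs₀ hS hL, card_energy_snd_lt hL K, ?_⟩
  · exact
      { isSelfAdjoint := star_diracSchrodinger hS hL.toIsSignedLattice
        mul_comm := symmetryOperator_mul_comm hS hL.toIsSignedLattice
        isAlmostSymmetry := isAlmostSymmetry_symmetryOperator hτ hc₀ hc hs₀ hS hL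
        anticomm := parity_diracSchrodinger hL.toIsSignedLattice }
  · rw [symmetryOperator, trace_kronecker, trace_one, hL.trace_parity, mul_one]

theorem IsDiracSymbol.two_pow_dvd {W : Type} [Fintype W] [DecidableEq W] {a b N : ℕ} (hb : b < 4)
    {ε I J : Matrix W W ℝ} {t : Fin (cliffordLength b + 8 * a + 3) → Matrix W W ℝ}
    (hS : IsDiracSymbol τ c ε t I J) (hτ : 0 ≤ τ) (hc₀ : 0 < c) (hc : c ≤ 1)
    (hW : Fintype.card W = 8 * N) : 2 ^ (4 * a + b + 1) ∣ N := by
  obtain ⟨d, x, hx, htrace⟩ := hS.exists_isRepresentation hτ hc₀ hc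
  exact hx.two_pow_dvd hb (by rw [htrace, hW]; push_cast; rfl)

end DiracSchrodinger

section Ellipticity

open scoped MatrixOrder

variable {E F G : Type*} [NormedAddCommGroup E] [NormedSpace ℝ E] [FiniteDimensional ℝ E]
  [NormedAddCommGroup F] [NormedSpace ℝ F] [FiniteDimensional ℝ F]
  [NormedAddCommGroup G] [NormedSpace ℝ G]

theorem exists_le_norm_of_norm_eq_one (β : E →L[ℝ] F →L[ℝ] G)
    (hβ : ∀ x v, β x v = 0 → x = 0 ∨ v = 0) :
    ∃ c > 0, ∀ x v, ‖x‖ = 1 → ‖v‖ = 1 → c ≤ ‖β x v‖ := by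
  set S : Set (E × F) := Metric.sphere 0 1 ×ˢ Metric.sphere 0 1 with hS
  have hmem {x : E} {v : F} (hx : ‖x‖ = 1) (hv : ‖v‖ = 1) : (x, v) ∈ S := by simp [hS, hx, hv]
  obtain hempty | hne := S.eq_empty_or_nonempty
  · exact ⟨1, one_pos, fun x v hx hv => absurd (hmem hx hv) (hempty ▸ Set.notMem_empty _)⟩
  have hcont : Continuous fun p : E × F => ‖β p.1 p.2‖ := by fun_prop
  obtain ⟨p, hp, hmin⟩ := ((isCompact_sphere 0 1).prod (isCompact_sphere 0 1)).exists_isMinOn hne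
    hcont.continuousOn
  refine ⟨‖β p.1 p.2‖, norm_pos_iff.2 fun h => ?_, fun x v hx hv => hmin (hmem hx hv)⟩
  rw [Set.mem_prod, mem_sphere_zero_iff_norm, mem_sphere_zero_iff_norm] at hp
  obtain h | h := hβ _ _ h <;> simp [h] at hp

theorem exists_mul_norm_mul_norm_le (β : E →L[ℝ] F →L[ℝ] G)
    (hβ : ∀ x v, β x v = 0 → x = 0 ∨ v = 0) :
    ∃ c > 0, ∀ x v, c * ‖x‖ * ‖v‖ ≤ ‖β x v‖ := by
  obtain ⟨c, hc, hle⟩ := exists_le_norm_of_norm_eq_one β hβ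
  refine ⟨c, hc, fun x v => ?_⟩
  obtain rfl | hx := eq_or_ne x 0
  · simp
  obtain rfl | hv := eq_or_ne v 0
  · simp
  have hunit := hle (‖x‖⁻¹ • x) (‖v‖⁻¹ • v) (norm_smul_inv_norm hx) (norm_smul_inv_norm hv)
  simp only [map_smul, _root_.smul_apply, norm_smul, norm_inv, norm_norm] at hunit
  calc c * ‖x‖ * ‖v‖ ≤ ‖v‖⁻¹ * (‖x‖⁻¹ * ‖β x v‖) * ‖x‖ * ‖v‖ := by gcongr
    _ = ‖β x v‖ := by field_simp [norm_ne_zero_iff.2 hx, norm_ne_zero_iff.2 hv]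

variable {W : Type*} [Fintype W] [DecidableEq W]

lemma dotProduct_star_mul_self (A : Matrix W W ℝ) (v : W → ℝ) :
    star v ⬝ᵥ (star A * A) *ᵥ v = ‖toEuclideanLin A (WithLp.toLp 2 v)‖ ^ 2 := by
  rw [EuclideanSpace.real_norm_sq_eq, ← mulVec_mulVec, dotProduct_mulVec, star_eq_conjTranspose,
    vecMul_conjTranspose, star_star]
  simp [dotProduct, sq]

lemma dotProduct_smul_one (c : ℝ) (v : W → ℝ) :
    star v ⬝ᵥ (c • (1 : Matrix W W ℝ)) *ᵥ v = c * ‖WithLp.toLp 2 v‖ ^ 2 := by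
  rw [EuclideanSpace.real_norm_sq_eq]
  simp [dotProduct, sq, smul_mulVec, Finset.mul_sum, mul_left_comm]

lemma smul_one_le_star_mul_self {A : Matrix W W ℝ} {c : ℝ}
    (h : ∀ v, c * ‖v‖ ^ 2 ≤ ‖toEuclideanLin A v‖ ^ 2) : c • 1 ≤ star A * A := by
  refine le_iff.2 (.of_dotProduct_mulVec_nonneg ?_ fun v => ?_)
  · exact (IsSelfAdjoint.star_mul_self A).sub ((IsSelfAdjoint.all c).smul (.one _))
  · rw [sub_mulVec, dotProduct_sub, dotProduct_star_mul_self, dotProduct_smul_one]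
    exact sub_nonneg.2 (h _)

lemma star_mul_self_le_smul_one {A : Matrix W W ℝ} {c : ℝ}
    (h : ∀ v, ‖toEuclideanLin A v‖ ^ 2 ≤ c * ‖v‖ ^ 2) : star A * A ≤ c • 1 := by
  refine le_iff.2 (.of_dotProduct_mulVec_nonneg ?_ fun v => ?_)
  · exact ((IsSelfAdjoint.all c).smul (.one _)).sub (IsSelfAdjoint.star_mul_self A)
  · rw [sub_mulVec, dotProduct_sub, dotProduct_star_mul_self, dotProduct_smul_one]
    exact sub_nonneg.2 (h _)

theorem exists_smul_one_le_star_mul_self (A : E →ₗ[ℝ] Matrix W W ℝ)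
    (hA : ∀ x, x ≠ 0 → IsUnit (A x)) :
    ∃ c, 0 < c ∧ c ≤ 1 ∧ ∀ x, (c * ‖x‖ ^ 2) • 1 ≤ star (A x) * A x := by
  have hβ (x : E) (v : EuclideanSpace ℝ W) (h : toEuclideanLin (A x) v = 0) : x = 0 ∨ v = 0 := by
    refine or_iff_not_imp_left.2 fun hx => ?_
    obtain ⟨u, hu⟩ := hA x hx
    have hinv : ((↑u⁻¹ : Matrix W W ℝ) * A x) *ᵥ v.ofLp = 0 := by
      rw [← mulVec_mulVec, show A x *ᵥ v.ofLp = 0 from congrArg WithLp.ofLp h, mulVec_zero]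
    rw [← hu, Units.inv_mul, one_mulVec] at hinv
    exact (WithLp.ofLp_eq_zero 2).1 hinv
  obtain ⟨c, hc, hle⟩ := exists_mul_norm_mul_norm_le
    (toEuclideanLin.toLinearMap ∘ₗ A).toContinuousBilinearMap hβ
  refine ⟨min c 1 ^ 2, by positivity, pow_le_one₀ (by positivity) (min_le_right _ _),
    fun x => smul_one_le_star_mul_self fun v => ?_⟩
  rw [← mul_pow, ← mul_pow]
  refine pow_le_pow_left₀ (by positivity) (le_trans ?_ (hle x v)) 2
  gcongr
  exact min_le_left _ _

theorem exists_star_mul_self_le_smul_one (A : E →ₗ[ℝ] Matrix W W ℝ) :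
    ∃ τ, 0 ≤ τ ∧ ∀ x, star (A x) * A x ≤ (τ * ‖x‖ ^ 2) • 1 := by
  set β := (toEuclideanLin.toLinearMap ∘ₗ A).toContinuousBilinearMap
  refine ⟨‖β‖ ^ 2, by positivity, fun x => star_mul_self_le_smul_one fun v => ?_⟩
  rw [← mul_pow, ← mul_pow]
  exact pow_le_pow_left₀ (norm_nonneg _) (β.le_opNorm₂ x v) 2

end Ellipticity

section BlockSymbol

open scoped MatrixOrder

variable {m : Type*}

/-- The symmetric matrix `[[0, bᵀ], [b, 0]]`, odd for the grading `[[1, 0], [0, -1]]`. -/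
def oddBlock : Matrix m m ℝ →ₗ[ℝ] Matrix (m ⊕ m) (m ⊕ m) ℝ where
  toFun b := fromBlocks 0 (star b) b 0
  map_add' a b := by simp [fromBlocks_add]
  map_smul' c b := by simp [fromBlocks_smul]

lemma star_oddBlock (b : Matrix m m ℝ) : star (oddBlock b) = oddBlock b := by
  simp [oddBlock, star_eq_conjTranspose, fromBlocks_transpose]

lemma star_fromBlocks_diagonal {x : Matrix m m ℝ} (hx : star x = -x) :
    star (fromBlocks x 0 0 x) = -fromBlocks x 0 0 x := by
  rw [star_eq_conjTranspose] at hx ⊢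
  rw [fromBlocks_conjTranspose, hx, conjTranspose_zero, fromBlocks_neg, neg_zero]

lemma linearMap_eq_sum_smul_single {n : ℕ} {V : Type*} [AddCommGroup V] [Module ℝ V]
    (A : EuclideanSpace ℝ (Fin n) →ₗ[ℝ] V) (x : Fin n → ℝ) :
    ∑ i, x i • A (EuclideanSpace.single i 1) = A (WithLp.toLp 2 x) := by
  rw [← (EuclideanSpace.basisFun (Fin n) ℝ).sum_repr (WithLp.toLp 2 x), map_sum]
  simp

variable [Fintype m]

lemma fromBlocks_mul_oddBlock {x b : Matrix m m ℝ} (hx : star x = -x) (h : x * b = b * x) :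
    fromBlocks x 0 0 x * oddBlock b = oddBlock b * fromBlocks x 0 0 x := by
  have hstar : x * star b = star b * x := by
    simpa [hx] using (congrArg star h).symm
  simp [oddBlock, fromBlocks_multiply, h, hstar]

variable [DecidableEq m]

lemma isUnit_oddBlock {b : Matrix m m ℝ} (hb : IsUnit b) : IsUnit (oddBlock b) := by
  obtain ⟨u, rfl⟩ := hb
  refine IsUnit.of_mul_eq_one (fromBlocks 0 ↑u⁻¹ (star ↑u⁻¹) 0) ?_
  simp [oddBlock, fromBlocks_multiply, ← star_mul]

theorem exists_isDiracSymbol {n : ℕ} {A : EuclideanSpace ℝ (Fin n) →ₗ[ℝ] Matrix m m ℝ}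
    (hA : ∀ v, v ≠ 0 → IsUnit (A v)) {I J : Matrix m m ℝ} (hI : star I = -I) (hJ : star J = -J)
    (hII : I * I = -1) (hJJ : J * J = -1) (hIJ : I * J = -(J * I))
    (hIA : ∀ v, I * A v = A v * I) (hJA : ∀ v, J * A v = A v * J) :
    ∃ τ c, 0 ≤ τ ∧ 0 < c ∧ c ≤ 1 ∧ IsDiracSymbol τ c (fromBlocks 1 0 0 (-1))
      (fun i => oddBlock (A (EuclideanSpace.single i 1))) (fromBlocks I 0 0 I)
      (fromBlocks J 0 0 J) := by
  obtain ⟨c, hc₀, hc, hlower⟩ := exists_smul_one_le_star_mul_self (oddBlock ∘ₗ A)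
    fun v hv => isUnit_oddBlock (hA v hv)
  obtain ⟨τ, hτ, hupper⟩ := exists_star_mul_self_le_smul_one (oddBlock ∘ₗ A)
  have hneg : (-1 : Matrix (m ⊕ m) (m ⊕ m) ℝ) = fromBlocks (-1) 0 0 (-1) := by
    simp [← fromBlocks_one, fromBlocks_neg]
  simp only [LinearMap.comp_apply, star_oddBlock] at hlower hupper
  refine ⟨τ, c, hτ, hc₀, hc, ?_⟩
  exact
    { star_grading := by simp [star_eq_conjTranspose, fromBlocks_transpose]
      star_coeff := fun i => star_oddBlock _
      star_unitI := star_fromBlocks_diagonal hI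
      star_unitJ := star_fromBlocks_diagonal hJ
      grading_mul_self := by simp [fromBlocks_multiply]
      unitI_mul_self := by simp [fromBlocks_multiply, hII, hneg]
      unitJ_mul_self := by simp [fromBlocks_multiply, hJJ, hneg]
      coeff_grading := fun i => by simp [oddBlock, fromBlocks_multiply, fromBlocks_neg]
      unitI_unitJ := by simp [fromBlocks_multiply, fromBlocks_neg, hIJ]
      unitI_grading := by simp [fromBlocks_multiply]
      unitJ_grading := by simp [fromBlocks_multiply]
      unitI_coeff := fun i => fromBlocks_mul_oddBlock hI (hIA _)
      unitJ_coeff := fun i => fromBlocks_mul_oddBlock hJ (hJA _)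
      coeff_mul_self_le := fun i => by simpa using hupper (EuclideanSpace.single i 1)
      le_pencil_mul_self := fun x => by
        have hsum := linearMap_eq_sum_smul_single (oddBlock ∘ₗ A) x
        simp only [LinearMap.comp_apply] at hsum
        rw [hsum]
        simpa only [EuclideanSpace.real_norm_sq_eq] using hlower (WithLp.toLp 2 x) }

end BlockSymbol

section IsometricEmbedding

variable {E F : Type*} [NormedAddCommGroup E] [InnerProductSpace ℝ E] [FiniteDimensional ℝ E]
  [NormedAddCommGroup F] [InnerProductSpace ℝ F] [FiniteDimensional ℝ F]

theorem nonempty_linearIsometry_of_finrank_le (h : Module.finrank ℝ E ≤ Module.finrank ℝ F) :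
    Nonempty (E →ₗᵢ[ℝ] F) := by
  set e := stdOrthonormalBasis ℝ E
  set f := stdOrthonormalBasis ℝ F
  have hf : Orthonormal ℝ (e.toBasis.constr ℝ (f ∘ Fin.castLE h) ∘ e.toBasis) := by
    convert f.orthonormal.comp _ (Fin.castLE_injective h) using 1
    exact funext fun i => e.toBasis.constr_basis ℝ _ i
  exact ⟨LinearMap.isometryOfOrthonormal _ (by simp) hf⟩

end IsometricEmbedding

section QuaternionMatrices

open scoped Quaternion

instance : StarModule ℝ ℍ[ℝ] := ⟨Quaternion.star_smul⟩

/-- The basis `1, i, j, k`. -/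
noncomputable def quaternionBasis : Module.Basis (Fin 4) ℝ ℍ[ℝ] :=
  QuaternionAlgebra.basisOneIJK (-1) 0 (-1)

/-- The matrix of left multiplication by a quaternion in the basis `1, i, j, k`. -/
noncomputable def leftMatrix : ℍ[ℝ] →ₐ[ℝ] Matrix (Fin 4) (Fin 4) ℝ :=
  Algebra.leftMulMatrix quaternionBasis

/-- The matrix of quaternionic conjugation in the basis `1, i, j, k`. -/
def conjMatrix : Matrix (Fin 4) (Fin 4) ℝ :=
  diagonal ![1, -1, -1, -1]

/-- The matrix of right multiplication by a quaternion in the basis `1, i, j, k`, written through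
left multiplication by means of `x * q = star (star q * star x)`. -/
noncomputable def rightMatrix (q : ℍ[ℝ]) : Matrix (Fin 4) (Fin 4) ℝ :=
  conjMatrix * leftMatrix (star q) * conjMatrix

lemma quaternionBasis_repr (q : ℍ[ℝ]) :
    quaternionBasis.repr q = ![q.re, q.imI, q.imJ, q.imK] :=
  rfl

lemma quaternionBasis_apply (i : Fin 4) : quaternionBasis i =
    ![⟨1, 0, 0, 0⟩, ⟨0, 1, 0, 0⟩, ⟨0, 0, 1, 0⟩, ⟨0, 0, 0, 1⟩] i := by
  refine quaternionBasis.repr.injective (DFunLike.coe_injective ?_)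
  rw [quaternionBasis.repr_self, quaternionBasis_repr]
  fin_cases i <;> ext j <;> fin_cases j <;> simp

lemma leftMatrix_apply (q : ℍ[ℝ]) : leftMatrix q =
    !![q.re, -q.imI, -q.imJ, -q.imK; q.imI, q.re, -q.imK, q.imJ;
      q.imJ, q.imK, q.re, -q.imI; q.imK, -q.imJ, q.imI, q.re] := by
  ext i j
  rw [leftMatrix, Algebra.leftMulMatrix_eq_repr_mul]
  rw [quaternionBasis_repr, quaternionBasis_apply, Quaternion.re_mul, Quaternion.imI_mul,
    Quaternion.imJ_mul, Quaternion.imK_mul]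
  fin_cases i <;> fin_cases j <;> simp

lemma star_leftMatrix (q : ℍ[ℝ]) : star (leftMatrix q) = leftMatrix (star q) := by
  ext i j
  fin_cases i <;> fin_cases j <;> simp [leftMatrix_apply, star_apply]

lemma star_conjMatrix : star conjMatrix = conjMatrix := by
  simp [conjMatrix, star_eq_conjTranspose]

lemma conjMatrix_mul_self : conjMatrix * conjMatrix = 1 := by
  rw [conjMatrix, diagonal_mul_diagonal, ← diagonal_one]
  congr 1
  ext i
  fin_cases i <;> simp

lemma conjMatrix_mul_leftMatrix (q : ℍ[ℝ]) :
    conjMatrix * leftMatrix q = rightMatrix (star q) * conjMatrix := by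
  rw [rightMatrix, star_star, mul_assoc _ conjMatrix, conjMatrix_mul_self, mul_one]

lemma conjMatrix_mul_rightMatrix (q : ℍ[ℝ]) :
    conjMatrix * rightMatrix q = leftMatrix (star q) * conjMatrix := by
  rw [rightMatrix, ← mul_assoc, ← mul_assoc, conjMatrix_mul_self, one_mul]

lemma star_rightMatrix (q : ℍ[ℝ]) : star (rightMatrix q) = rightMatrix (star q) := by
  simp only [rightMatrix, star_mul, star_conjMatrix, star_leftMatrix, mul_assoc]

lemma rightMatrix_one : rightMatrix 1 = 1 := by
  rw [rightMatrix, star_one, map_one, mul_one, conjMatrix_mul_self]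

lemma rightMatrix_add (p q : ℍ[ℝ]) : rightMatrix (p + q) = rightMatrix p + rightMatrix q := by
  simp only [rightMatrix, star_add, map_add, mul_add, add_mul]

lemma rightMatrix_smul (r : ℝ) (q : ℍ[ℝ]) : rightMatrix (r • q) = r • rightMatrix q := by
  simp only [rightMatrix, star_smul, star_trivial, map_smul, mul_smul_comm, smul_mul_assoc]

lemma rightMatrix_neg (q : ℍ[ℝ]) : rightMatrix (-q) = -rightMatrix q := by
  simp only [rightMatrix, star_neg, map_neg, mul_neg, neg_mul]

lemma rightMatrix_mul_rightMatrix (p q : ℍ[ℝ]) :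
    rightMatrix p * rightMatrix q = rightMatrix (q * p) := by
  rw [rightMatrix, mul_assoc, conjMatrix_mul_rightMatrix, rightMatrix, star_mul, map_mul]
  simp only [mul_assoc]

lemma rightMatrix_mul_leftMatrix (p q : ℍ[ℝ]) :
    rightMatrix p * leftMatrix q = leftMatrix q * rightMatrix p := by
  ext i j
  simp only [rightMatrix, conjMatrix, leftMatrix_apply, mul_apply, Fin.sum_univ_four]
  fin_cases i <;> fin_cases j <;> simp <;> ring

/-- A quaternionic matrix as a real matrix of four times the size. -/
noncomputable def realify (ι : Type*) [Fintype ι] [DecidableEq ι] :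
    Matrix ι ι ℍ[ℝ] →ₐ[ℝ] Matrix (ι × Fin 4) (ι × Fin 4) ℝ :=
  (compAlgEquiv ι (Fin 4) ℝ ℝ).toAlgHom.comp leftMatrix.mapMatrix

end QuaternionMatrices

section Divisibility

open scoped Quaternion Kronecker

lemma exists_anticommuting_units :
    ∃ i j : ℍ[ℝ], star i = -i ∧ star j = -j ∧ i * i = -1 ∧ j * j = -1 ∧ j * i = -(i * j) := by
  obtain ⟨i, hi⟩ : ∃ i : ℍ[ℝ], i.re = 0 ∧ i.imI = 1 ∧ i.imJ = 0 ∧ i.imK = 0 :=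
    ⟨⟨0, 1, 0, 0⟩, rfl, rfl, rfl, rfl⟩
  obtain ⟨j, hj⟩ : ∃ j : ℍ[ℝ], j.re = 0 ∧ j.imI = 0 ∧ j.imJ = 1 ∧ j.imK = 0 :=
    ⟨⟨0, 0, 1, 0⟩, rfl, rfl, rfl, rfl⟩
  exact ⟨i, j, by simp [Quaternion.ext_iff, hi, hj]⟩

/-- Entrywise right multiplication by a quaternion on the real space underlying `ℍ^ι`. -/
noncomputable def rightAction (ι : Type*) [DecidableEq ι] (q : ℍ[ℝ]) :
    Matrix (ι × Fin 4) (ι × Fin 4) ℝ :=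
  1 ⊗ₖ rightMatrix q

variable {ι : Type*} [DecidableEq ι]

lemma rightAction_neg (q : ℍ[ℝ]) : rightAction ι (-q) = -rightAction ι q := by
  rw [rightAction, rightMatrix_neg, kronecker_neg, rightAction]

lemma rightAction_one : rightAction ι 1 = 1 := by
  rw [rightAction, rightMatrix_one, one_kronecker_one]

lemma star_rightAction (q : ℍ[ℝ]) : star (rightAction ι q) = rightAction ι (star q) := by
  rw [rightAction, star_kronecker, star_eq_conjTranspose 1, conjTranspose_one,
    star_rightMatrix, rightAction]

variable [Fintype ι]

lemma rightAction_mul_rightAction (p q : ℍ[ℝ]) :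
    rightAction ι p * rightAction ι q = rightAction ι (q * p) := by
  rw [rightAction, rightAction, kronecker_mul_kronecker, one_mul, rightMatrix_mul_rightMatrix,
    rightAction]

lemma rightAction_mul_realify (q : ℍ[ℝ]) (M : Matrix ι ι ℍ[ℝ]) :
    rightAction ι q * realify ι M = realify ι M * rightAction ι q := by
  have hq : rightAction ι q = compAlgEquiv ι (Fin 4) ℝ ℝ (diagonal fun _ => rightMatrix q) := by
    ext ⟨i, k⟩ ⟨j, l⟩
    by_cases h : i = j <;> simp [rightAction, h, one_apply]
  have hM : realify ι M = compAlgEquiv ι (Fin 4) ℝ ℝ (M.map leftMatrix) := rfl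
  rw [hq, hM, ← map_mul, ← map_mul]
  congr 1
  ext1 i j
  rw [diagonal_mul, mul_diagonal]
  exact rightMatrix_mul_leftMatrix _ _

theorem two_pow_dvd_of_forall_isUnit {N n a b : ℕ} (hb : b < 4)
    (hn : cliffordLength b + 8 * a + 3 ≤ n)
    {B : EuclideanSpace ℝ (Fin n) →ₗ[ℝ] Matrix (Fin N) (Fin N) ℍ[ℝ]}
    (hB : ∀ v, v ≠ 0 → IsUnit (B v)) : 2 ^ (4 * a + b + 1) ∣ N := by
  obtain ⟨f⟩ := nonempty_linearIsometry_of_finrank_le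
    (E := EuclideanSpace ℝ (Fin (cliffordLength b + 8 * a + 3)))
    (F := EuclideanSpace ℝ (Fin n)) (by simpa using hn)
  have hBf (v) (hv : v ≠ 0) : IsUnit (B (f v)) :=
    hB _ fun h => hv (f.injective (h.trans (map_zero f).symm))
  obtain ⟨i, j, hi, hj, hii, hjj, hji⟩ := exists_anticommuting_units
  obtain ⟨τ, c, hτ, hc₀, hc, hS⟩ := exists_isDiracSymbol
    (A := (realify (Fin N)).toLinearMap ∘ₗ B ∘ₗ f.toLinearMap)
    (I := rightAction (Fin N) i) (J := rightAction (Fin N) j)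
    (fun v hv => (hBf v hv).map (realify _))
    (by rw [star_rightAction, hi, rightAction_neg])
    (by rw [star_rightAction, hj, rightAction_neg])
    (by rw [rightAction_mul_rightAction, hii, rightAction_neg, rightAction_one])
    (by rw [rightAction_mul_rightAction, hjj, rightAction_neg, rightAction_one])
    (by rw [rightAction_mul_rightAction, rightAction_mul_rightAction, hji, rightAction_neg])
    (fun _ => rightAction_mul_realify i _) fun _ => rightAction_mul_realify j _
  refine hS.two_pow_dvd hb hτ hc₀ hc ?_
  rw [Fintype.card_sum, Fintype.card_prod, Fintype.card_fin, Fintype.card_fin]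
  ring

end Divisibility

section IsometricPencils

lemma mul_eq_smul_one_symm {A : Type*} [Ring A] [Algebra ℝ A] [IsDedekindFiniteMonoid A]
    {x y : A} {s : ℝ} (hs : s ≠ 0) (h : x * y = s • 1) : y * x = s • 1 := by
  have hinv : y * (s⁻¹ • x) = 1 :=
    mul_eq_one_symm (by rw [smul_mul_assoc, h, inv_smul_smul₀ hs])
  rw [← hinv, mul_smul_comm, smul_inv_smul₀ hs]

variable {E F A A' : Type*} [NormedAddCommGroup E] [NormedSpace ℝ E]
  [NormedAddCommGroup F] [NormedSpace ℝ F] [Ring A] [StarRing A] [Algebra ℝ A]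
  [Ring A'] [StarRing A'] [Algebra ℝ A']

/-- A linear map `B` from a normed space to a `*`-algebra whose values are scaled isometries,
`B(v)* B(v) = ‖v‖²`. -/
def IsIsometricPencil (B : E →ₗ[ℝ] A) : Prop :=
  ∀ v, star (B v) * B v = (‖v‖ ^ 2 : ℝ) • 1

namespace IsIsometricPencil

variable {B : E →ₗ[ℝ] A}

lemma mul_star [IsDedekindFiniteMonoid A] (hB : IsIsometricPencil B) (v : E) :
    B v * star (B v) = (‖v‖ ^ 2 : ℝ) • 1 := by
  obtain rfl | hv := eq_or_ne v 0
  · simp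
  · exact mul_eq_smul_one_symm (by simpa using hv) (hB v)

lemma isUnit [IsDedekindFiniteMonoid A] (hB : IsIsometricPencil B) {v : E} (hv : v ≠ 0) :
    IsUnit (B v) := by
  have hs : ‖v‖ ^ 2 ≠ 0 := by simpa using hv
  refine IsUnit.of_mul_eq_one ((‖v‖ ^ 2)⁻¹ • star (B v)) ?_
  rw [mul_smul_comm, hB.mul_star, inv_smul_smul₀ hs]

lemma comp_linearIsometry (hB : IsIsometricPencil B) (f : F →ₗᵢ[ℝ] E) :
    IsIsometricPencil (B ∘ₗ f.toLinearMap) := fun v => by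
  simpa using hB (f v)

lemma starAlgHom_comp (hB : IsIsometricPencil B) (f : A →⋆ₐ[ℝ] A') :
    IsIsometricPencil (f.toAlgHom.toLinearMap ∘ₗ B) := fun v => by
  change star (f (B v)) * f (B v) = _
  rw [← map_star, ← map_mul, hB, map_smul, map_one]

end IsIsometricPencil

end IsometricPencils

section MatrixStarHoms

variable {ι κ μ A : Type*} [Fintype ι] [DecidableEq ι] [Fintype κ] [DecidableEq κ]
  [Fintype μ] [DecidableEq μ] [Ring A] [StarRing A] [Algebra ℝ A]

/-- The diagonal embedding `a ↦ a · 1` of a `*`-algebra into its matrices. -/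
def scalarHom (ι : Type*) [Fintype ι] [DecidableEq ι] : A →⋆ₐ[ℝ] Matrix ι ι A where
  __ := scalarAlgHom ι ℝ
  map_star' a := (diagonal_conjTranspose fun _ => a).symm

/-- The entrywise embedding of real matrices into matrices over a `*`-algebra. -/
def ofRealHom (ι A : Type*) [Fintype ι] [DecidableEq ι] [Ring A] [StarRing A] [Algebra ℝ A]
    [StarModule ℝ A] : Matrix ι ι ℝ →⋆ₐ[ℝ] Matrix ι ι A where
  __ := (Algebra.ofId ℝ A).mapMatrix
  map_star' M := by
    ext i j
    exact algebraMap_star_comm (M j i)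

/-- Block matrices as matrices over an index type enumerating the pairs of indices. -/
def flattenHom (e : ι × κ ≃ μ) : Matrix ι ι (Matrix κ κ A) →⋆ₐ[ℝ] Matrix μ μ A where
  __ := ((compAlgEquiv ι κ A ℝ).trans (reindexAlgEquiv ℝ A e)).toAlgHom
  map_star' _ := rfl

lemma scalarHom_mul_ofRealHom [StarModule ℝ A] (a : A) (M : Matrix ι ι ℝ) :
    scalarHom ι a * ofRealHom ι A M = ofRealHom ι A M * scalarHom ι a := by
  ext i j
  have hM (k l : ι) : ofRealHom ι A M k l = algebraMap ℝ A (M k l) := rfl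
  change (diagonal (fun _ => a) * ofRealHom ι A M : Matrix ι ι A) i j =
    (ofRealHom ι A M * diagonal fun _ => a : Matrix ι ι A) i j
  rw [diagonal_mul, mul_diagonal, hM, Algebra.commutes]

end MatrixStarHoms

section Join

variable {E F A K : Type*} [NormedAddCommGroup E] [NormedSpace ℝ E]
  [NormedAddCommGroup F] [NormedSpace ℝ F] [Ring A] [StarRing A] [Algebra ℝ A] [StarModule ℝ A]
  [Fintype K] [DecidableEq K]

/-- The pencil `(x, y) ↦ [[B x, -C(y)*], [C y, B(x)*]]` on the orthogonal sum of two spaces. -/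
def joinPencil (B : E →ₗ[ℝ] A) (C : F →ₗ[ℝ] Matrix K K ℝ) :
    WithLp 2 (E × F) →ₗ[ℝ] Matrix (K ⊕ K) (K ⊕ K) A where
  toFun z := fromBlocks (scalarHom K (B z.fst)) (-star (ofRealHom K A (C z.snd)))
    (ofRealHom K A (C z.snd)) (star (scalarHom K (B z.fst)))
  map_add' y z := by
    simp only [WithLp.add_fst, WithLp.add_snd, map_add, star_add, neg_add, fromBlocks_add]
  map_smul' r z := by
    simp only [WithLp.smul_fst, WithLp.smul_snd, map_smul, star_smul, star_trivial, ← smul_neg,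
      fromBlocks_smul, RingHom.id_apply]

theorem IsIsometricPencil.join [IsDedekindFiniteMonoid A] {B : E →ₗ[ℝ] A}
    {C : F →ₗ[ℝ] Matrix K K ℝ} (hB : IsIsometricPencil B) (hC : IsIsometricPencil C) :
    IsIsometricPencil (joinPencil B C) := fun z => by
  set b := scalarHom K (B z.fst) with hb
  set c := ofRealHom K A (C z.snd) with hc
  have hbb : star b * b = (‖z.fst‖ ^ 2 : ℝ) • 1 := hB.starAlgHom_comp (scalarHom K) z.fst
  have hcc : star c * c = (‖z.snd‖ ^ 2 : ℝ) • 1 := hC.starAlgHom_comp (ofRealHom K A) z.snd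
  have hbb' : b * star b = (‖z.fst‖ ^ 2 : ℝ) • 1 := by
    rw [hb, ← map_star, ← map_mul, hB.mul_star, map_smul, map_one]
  have hcc' : c * star c = (‖z.snd‖ ^ 2 : ℝ) • 1 := by
    rw [hc, ← map_star, ← map_mul, hC.mul_star, map_smul, map_one]
  have hbc' : c * b = b * c := (scalarHom_mul_ofRealHom _ _).symm
  have hbc : star b * star c = star c * star b := by rw [← star_mul, hbc', star_mul]
  change star (fromBlocks b (-star c) c (star b)) * fromBlocks b (-star c) c (star b) = _
  rw [star_eq_conjTranspose, fromBlocks_conjTranspose]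
  simp only [← star_eq_conjTranspose, star_neg, star_star]
  rw [fromBlocks_multiply, hbb, hcc, mul_neg, hbc, neg_add_cancel, neg_mul, hbc', neg_add_cancel,
    neg_mul_neg, hcc', hbb', WithLp.prod_norm_sq_eq_of_L2, add_comm (_ • (1 : Matrix K K A)),
    ← fromBlocks_one, fromBlocks_smul, smul_zero, ← add_smul]
  rw [add_comm (‖z.snd‖ ^ 2)]

end Join

section NormedDivisionAlgebras

open scoped Quaternion

lemma isIsometricPencil_id_rclike (𝕜 : Type*) [RCLike 𝕜] :
    IsIsometricPencil (LinearMap.id : 𝕜 →ₗ[ℝ] 𝕜) := fun z => by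
  rw [LinearMap.id_apply, RCLike.star_def, RCLike.conj_mul, RCLike.real_smul_eq_coe_mul, mul_one,
    RCLike.ofReal_pow]

lemma isIsometricPencil_id_quaternion :
    IsIsometricPencil (LinearMap.id : ℍ[ℝ] →ₗ[ℝ] ℍ[ℝ]) := fun q => by
  rw [LinearMap.id_apply, Quaternion.star_mul_self, Quaternion.normSq_eq_norm_mul_self, ← sq,
    Algebra.smul_def, mul_one, Quaternion.algebraMap_def]

/-- The matrix of multiplication by a complex number in the basis `1, i`. -/
noncomputable def complexHom : ℂ →⋆ₐ[ℝ] Matrix (Fin 2) (Fin 2) ℝ where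
  __ := Algebra.leftMulMatrix Complex.basisOneI
  map_star' z := by
    change Algebra.leftMulMatrix Complex.basisOneI (star z) =
      star (Algebra.leftMulMatrix Complex.basisOneI z)
    ext i j
    rw [Algebra.leftMulMatrix_complex, Algebra.leftMulMatrix_complex]
    fin_cases i <;> fin_cases j <;> simp [star_apply]

/-- `leftMatrix` as a homomorphism of `*`-algebras. -/
noncomputable def quaternionHom : ℍ[ℝ] →⋆ₐ[ℝ] Matrix (Fin 4) (Fin 4) ℝ where
  __ := leftMatrix
  map_star' q := (star_leftMatrix q).symm

/-- Left multiplication by the octonion `(a, b)` under the Cayley–Dickson identification of the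
octonions with `ℍ × ℍ`. -/
noncomputable def octonionPencil :
    WithLp 2 (ℍ[ℝ] × ℍ[ℝ]) →ₗ[ℝ] Matrix (Fin 4 ⊕ Fin 4) (Fin 4 ⊕ Fin 4) ℝ where
  toFun z := fromBlocks (leftMatrix z.fst) (-(rightMatrix z.snd * conjMatrix))
    (leftMatrix z.snd * conjMatrix) (rightMatrix z.fst)
  map_add' y z := by
    simp only [WithLp.add_fst, WithLp.add_snd, map_add, rightMatrix_add, add_mul, neg_add,
      fromBlocks_add]
  map_smul' r z := by
    simp only [WithLp.smul_fst, WithLp.smul_snd, map_smul, rightMatrix_smul, smul_mul_assoc,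
      ← smul_neg, fromBlocks_smul, RingHom.id_apply]

lemma star_leftMatrix_mul_leftMatrix (q : ℍ[ℝ]) :
    star (leftMatrix q) * leftMatrix q = (‖q‖ ^ 2 : ℝ) • 1 :=
  isIsometricPencil_id_quaternion.starAlgHom_comp quaternionHom q

lemma star_rightMatrix_mul_rightMatrix (q : ℍ[ℝ]) :
    star (rightMatrix q) * rightMatrix q = (‖q‖ ^ 2 : ℝ) • 1 := by
  have hq : q * star q = (‖q‖ ^ 2 : ℝ) • 1 := isIsometricPencil_id_quaternion.mul_star q
  rw [star_rightMatrix, rightMatrix_mul_rightMatrix, hq, rightMatrix_smul, rightMatrix_one]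

lemma conjMatrix_mul_star_leftMatrix_mul_rightMatrix (a b : ℍ[ℝ]) :
    conjMatrix * star (leftMatrix b) * rightMatrix a =
      star (leftMatrix a) * (rightMatrix b * conjMatrix) := by
  rw [star_leftMatrix, conjMatrix_mul_leftMatrix, star_star, mul_assoc, conjMatrix_mul_rightMatrix,
    ← mul_assoc, rightMatrix_mul_leftMatrix, star_leftMatrix, mul_assoc]

lemma conjMatrix_smul_one_conjMatrix (r : ℝ) : conjMatrix * (r • 1) * conjMatrix = r • 1 := by
  rw [mul_smul_comm, mul_one, smul_mul_assoc, conjMatrix_mul_self]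

theorem isIsometricPencil_octonionPencil : IsIsometricPencil octonionPencil := fun z => by
  set a := z.fst
  set b := z.snd
  have hoff := conjMatrix_mul_star_leftMatrix_mul_rightMatrix a b
  have hoff' := congrArg star hoff
  simp only [star_mul, star_star, star_conjMatrix] at hoff'
  change star (fromBlocks (leftMatrix a) (-(rightMatrix b * conjMatrix))
    (leftMatrix b * conjMatrix) (rightMatrix a)) * fromBlocks (leftMatrix a)
    (-(rightMatrix b * conjMatrix)) (leftMatrix b * conjMatrix) (rightMatrix a) = _
  rw [star_eq_conjTranspose, fromBlocks_conjTranspose, fromBlocks_multiply]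
  simp only [← star_eq_conjTranspose, star_neg, star_mul, star_conjMatrix]
  rw [WithLp.prod_norm_sq_eq_of_L2, ← fromBlocks_one, fromBlocks_smul, smul_zero, add_smul]
  congr 1
  · rw [← mul_assoc, mul_assoc conjMatrix, star_leftMatrix_mul_leftMatrix,
      star_leftMatrix_mul_leftMatrix, conjMatrix_smul_one_conjMatrix]
  · rw [hoff, mul_neg, neg_add_cancel]
  · rw [neg_mul, hoff', neg_add_cancel]
  · rw [neg_mul_neg, ← mul_assoc, mul_assoc conjMatrix, star_rightMatrix_mul_rightMatrix,
      star_rightMatrix_mul_rightMatrix, conjMatrix_smul_one_conjMatrix, add_comm]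

end NormedDivisionAlgebras

section Construction

open scoped Quaternion

/-- `ℍ^m` carries a `k`-dimensional isometric pencil, that is, a `k`-dimensional real space of
quaternion-linear scaled isometries. -/
def HasIsometricPencil (k m : ℕ) : Prop :=
  ∃ B : EuclideanSpace ℝ (Fin k) →ₗ[ℝ] Matrix (Fin m) (Fin m) ℍ[ℝ], IsIsometricPencil B

variable {k m : ℕ}

lemma IsIsometricPencil.hasIsometricPencil {E ι : Type*} [NormedAddCommGroup E]
    [InnerProductSpace ℝ E] [FiniteDimensional ℝ E] [Fintype ι] [DecidableEq ι]
    {B : E →ₗ[ℝ] Matrix ι ι (Matrix (Fin m) (Fin m) ℍ[ℝ])} (hB : IsIsometricPencil B)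
    (hk : k ≤ Module.finrank ℝ E) : HasIsometricPencil k (Fintype.card ι * m) := by
  obtain ⟨f⟩ := nonempty_linearIsometry_of_finrank_le (E := EuclideanSpace ℝ (Fin k)) (F := E)
    (by simpa using hk)
  exact ⟨_, (hB.comp_linearIsometry f).starAlgHom_comp
    (flattenHom (((Fintype.equivFin ι).prodCongr (.refl _)).trans finProdFinEquiv))⟩

namespace HasIsometricPencil

lemma amplify (h : HasIsometricPencil k m) {n : ℕ} (hn : n ≤ k) (q : ℕ) :
    HasIsometricPencil n (q * m) := by
  obtain ⟨B, hB⟩ := h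
  simpa using (hB.starAlgHom_comp (scalarHom (Fin q))).hasIsometricPencil (by simpa using hn)

lemma join (h : HasIsometricPencil k m) {F K : Type*} [NormedAddCommGroup F]
    [InnerProductSpace ℝ F] [FiniteDimensional ℝ F] [Fintype K] [DecidableEq K]
    {C : F →ₗ[ℝ] Matrix K K ℝ} (hC : IsIsometricPencil C) :
    HasIsometricPencil (k + Module.finrank ℝ F) ((Fintype.card K + Fintype.card K) * m) := by
  obtain ⟨B, hB⟩ := h
  have hdim : Module.finrank ℝ (WithLp 2 (EuclideanSpace ℝ (Fin k) × F)) =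
      k + Module.finrank ℝ F := by
    rw [(WithLp.linearEquiv 2 ℝ _).finrank_eq, Module.finrank_prod, finrank_euclideanSpace_fin]
  simpa using (hB.join hC).hasIsometricPencil hdim.ge

theorem of_quaternion : HasIsometricPencil 4 1 := by
  obtain ⟨f⟩ := nonempty_linearIsometry_of_finrank_le (E := EuclideanSpace ℝ (Fin 4)) (F := ℍ[ℝ])
    (by simp [Quaternion.finrank_eq_four])
  exact ⟨_, (isIsometricPencil_id_quaternion.comp_linearIsometry f).starAlgHom_comp
    (scalarHom (Fin 1))⟩

theorem join_real (h : HasIsometricPencil k m) : HasIsometricPencil (k + 1) (2 * m) := by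
  simpa using h.join ((isIsometricPencil_id_rclike ℝ).starAlgHom_comp (scalarHom (Fin 1)))

theorem join_complex (h : HasIsometricPencil k m) : HasIsometricPencil (k + 2) (4 * m) := by
  simpa using h.join ((isIsometricPencil_id_rclike ℂ).starAlgHom_comp complexHom)

theorem join_quaternion (h : HasIsometricPencil k m) : HasIsometricPencil (k + 4) (8 * m) := by
  simpa [Quaternion.finrank_eq_four] using
    h.join (isIsometricPencil_id_quaternion.starAlgHom_comp quaternionHom)

theorem join_octonion (h : HasIsometricPencil k m) : HasIsometricPencil (k + 8) (16 * m) := by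
  have hdim : Module.finrank ℝ (WithLp 2 (ℍ[ℝ] × ℍ[ℝ])) = 8 := by
    rw [(WithLp.linearEquiv 2 ℝ _).finrank_eq, Module.finrank_prod, Quaternion.finrank_eq_four]
  simpa [hdim] using h.join isIsometricPencil_octonionPencil

theorem eight_mul_add_four (a : ℕ) : HasIsometricPencil (8 * a + 4) (2 ^ (4 * a)) := by
  induction a with
  | zero => exact of_quaternion
  | succ a ih =>
    have hpow : 2 ^ (4 * (a + 1)) = 16 * 2 ^ (4 * a) := by rw [mul_add, pow_add, mul_comm]; rfl
    rw [hpow]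
    exact ih.join_octonion

theorem of_two_pow (a : ℕ) {b : ℕ} (hb : b < 4) :
    HasIsometricPencil (cliffordLength b + 8 * a + 2) (2 ^ (4 * a + b)) := by
  have h := eight_mul_add_four a
  rw [pow_add, mul_comm (2 ^ _), add_right_comm, add_comm _ (8 * a)]
  interval_cases b
  · simpa [cliffordLength] using h
  · exact h.join_real
  · exact h.join_complex
  · exact h.join_quaternion

end HasIsometricPencil

end Construction

section HurwitzRadonNumber

lemma hrRho_eq {t : ℚ} {a : ℤ} {b : ℕ} (hb : b < 4) (h : padicValRat 2 t = 4 * a + b) :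
    hrRho t = 8 * a + 2 ^ b := by
  have hdiv : padicValRat 2 t / 4 = a := by omega
  have hmod : padicValRat 2 t % 4 = b := by omega
  rw [hrRho, hdiv, hmod, Int.toNat_natCast]

lemma hrRho_half_add_four {N a b : ℕ} (hN : N ≠ 0) (hb : b < 4)
    (hab : padicValNat 2 N = 4 * a + b) :
    hrRho ((N : ℚ) / 2) + 4 = (cliffordLength b + 8 * a + 2 : ℕ) := by
  have hval : padicValRat 2 ((N : ℚ) / 2) = 4 * a + b - 1 := by
    rw [padicValRat.div (by exact_mod_cast hN) two_ne_zero, padicValRat.of_nat, hab,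
      ← Nat.cast_two (R := ℚ), padicValRat.self one_lt_two]
    push_cast
    rfl
  interval_cases b
  · rw [hrRho_eq (a := a - 1) (b := 3) (by norm_num) (by rw [hval]; push_cast; ring)]
    simp only [cliffordLength]
    omega
  · rw [hrRho_eq (a := a) (b := 0) (by norm_num) (by rw [hval]; push_cast; ring)]
    simp only [cliffordLength]
    omega
  · rw [hrRho_eq (a := a) (b := 1) (by norm_num) (by rw [hval]; push_cast; ring)]
    simp only [cliffordLength]
    omega
  · rw [hrRho_eq (a := a) (b := 2) (by norm_num) (by rw [hval]; push_cast; ring)]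
    simp only [cliffordLength]
    omega

variable {N n : ℕ}

theorem le_hrRho_of_forall_isUnit (hN : N ≠ 0)
    {B : EuclideanSpace ℝ (Fin n) →ₗ[ℝ] Matrix (Fin N) (Fin N) (Quaternion ℝ)}
    (hB : ∀ v, v ≠ 0 → IsUnit (B v)) : (n : ℤ) ≤ hrRho ((N : ℚ) / 2) + 4 := by
  have hb : padicValNat 2 N % 4 < 4 := Nat.mod_lt _ (by norm_num)
  have hab := (Nat.div_add_mod (padicValNat 2 N) 4).symm
  rw [hrRho_half_add_four hN hb hab, Nat.cast_le]
  by_contra! hn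
  have hdvd := two_pow_dvd_of_forall_isUnit hb hn hB
  rw [← hab] at hdvd
  exact pow_succ_padicValNat_not_dvd hN hdvd

theorem hasIsometricPencil_of_le_hrRho (hN : N ≠ 0) (hn : (n : ℤ) ≤ hrRho ((N : ℚ) / 2) + 4) :
    HasIsometricPencil n N := by
  have hb : padicValNat 2 N % 4 < 4 := Nat.mod_lt _ (by norm_num)
  have hab := (Nat.div_add_mod (padicValNat 2 N) 4).symm
  rw [hrRho_half_add_four hN hb hab, Nat.cast_le] at hn
  obtain ⟨q, hq⟩ : 2 ^ padicValNat 2 N ∣ N := pow_padicValNat_dvd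
  have hamplified := (HasIsometricPencil.of_two_pow _ hb).amplify hn q
  rwa [← hab, mul_comm, ← hq] at hamplified

end HurwitzRadonNumber

end HurwitzRadon

/-- Entry `𝔤 = 𝔰𝔭(N,N)` of the Hurwitz–Radon value theorem
(via the `𝔭`-part of quaternionic block matrices `[[0,B],[Bᴴ,0]]`):
`ρ⁽¹⁾ = ρ⁽²⁾ = ρ(N/2) + 4`, the Adams–Lax–Phillips number `ℍ(N)`. -/
theorem hurwitzRadon_sp_N_N (N : ℕ) (hN : 1 ≤ N) (n : ℕ) :
    ((∃ B : EuclideanSpace ℝ (Fin n) →ₗ[ℝ] Matrix (Fin N) (Fin N) (Quaternion ℝ),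
        ∀ v, (B v)ᴴ * B v = (‖v‖ ^ 2 : ℝ) • (1 : Matrix (Fin N) (Fin N) (Quaternion ℝ))) ↔
      (∃ B : EuclideanSpace ℝ (Fin n) →ₗ[ℝ] Matrix (Fin N) (Fin N) (Quaternion ℝ),
        ∀ v, v ≠ 0 → IsUnit (B v))) ∧
    ((∃ B : EuclideanSpace ℝ (Fin n) →ₗ[ℝ] Matrix (Fin N) (Fin N) (Quaternion ℝ),
        ∀ v, v ≠ 0 → IsUnit (B v)) ↔
      (n : ℤ) ≤ hrRho ((N : ℚ) / 2) + 4) := by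
  have isometric_to_invertible (h : HurwitzRadon.HasIsometricPencil n N) :
      ∃ B : EuclideanSpace ℝ (Fin n) →ₗ[ℝ] Matrix (Fin N) (Fin N) (Quaternion ℝ),
        ∀ v, v ≠ 0 → IsUnit (B v) := by
    obtain ⟨B, hB⟩ := h
    exact ⟨B, fun v hv => hB.isUnit hv⟩
  have invertible_to_le : (∃ B : EuclideanSpace ℝ (Fin n) →ₗ[ℝ]
      Matrix (Fin N) (Fin N) (Quaternion ℝ), ∀ v, v ≠ 0 → IsUnit (B v)) →
      (n : ℤ) ≤ hrRho ((N : ℚ) / 2) + 4 := by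
    rintro ⟨B, hB⟩
    exact HurwitzRadon.le_hrRho_of_forall_isUnit (by omega) hB
  have le_to_isometric (h : (n : ℤ) ≤ hrRho ((N : ℚ) / 2) + 4) :
      HurwitzRadon.HasIsometricPencil n N :=
    HurwitzRadon.hasIsometricPencil_of_le_hrRho (by omega) h
  exact ⟨⟨isometric_to_invertible, fun h => le_to_isometric (invertible_to_le h)⟩,
    ⟨invertible_to_le, fun h => isometric_to_invertible (le_to_isometric h)⟩⟩
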